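/- Let α ∈ ℝ with α ≠ 0, let φ₄ be a homogeneous polynomial of degree 4 in (x,y), and let f : ℝ² → ℝ be a smooth function whose 5-jet at the origin is j⁵f(0) = y² + x²y + (1/4)x⁴ + αx⁵ + y·φ₄(x,y) (the class Π^p_{c,2}, where the Monge form has an A₄-singularity at the origin). Then the asymptotic BDE of f is topologically equivalent at 0 to the well-folded saddle-node BDE dy² + (−y + x³)dx² = 0, i.e. the BDE with coefficients (a,b,c) = (1, 0, −y + x³). -/

import Mathlib

open Asymptotics Filter Set

noncomputable section

/-- Partial derivative in the first variable (∂/∂x). -/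
def pdx (f : ℝ × ℝ → ℝ) (p : ℝ × ℝ) : ℝ := deriv (fun s => f (s, p.2)) p.1

/-- Partial derivative in the second variable (∂/∂y). -/
def pdy (f : ℝ × ℝ → ℝ) (p : ℝ × ℝ) : ℝ := deriv (fun s => f (p.1, s)) p.2

/-- f_xx -/
def fxx (f : ℝ × ℝ → ℝ) : ℝ × ℝ → ℝ := pdx (pdx f)
/-- f_xy -/
def fxy (f : ℝ × ℝ → ℝ) : ℝ × ℝ → ℝ := pdy (pdx f)
/-- f_yy -/
def fyy (f : ℝ × ℝ → ℝ) : ℝ × ℝ → ℝ := pdy (pdy f)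

/-- The discriminant δ = f_xy² − f_xx·f_yy of the asymptotic BDE of `f`. -/
def bdeDiscr (f : ℝ × ℝ → ℝ) : ℝ × ℝ → ℝ := fun p => (fxy f p) ^ 2 - fxx f p * fyy f p

/-- The BDE `a dy² + 2b dxdy + c dx² = 0`, regarded as the family of quadratic
forms `ω_p(v) = a(p)v₂² + 2b(p)v₁v₂ + c(p)v₁²`. -/
def BDE (a b c : ℝ × ℝ → ℝ) : (ℝ × ℝ) → (ℝ × ℝ) → ℝ :=
  fun p v => a p * v.2 ^ 2 + 2 * b p * v.1 * v.2 + c p * v.1 ^ 2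

/-- The asymptotic BDE `f_yy dy² + 2 f_xy dxdy + f_xx dx² = 0` of the surface `z = f(x,y)`. -/
def asymBDE (f : ℝ × ℝ → ℝ) : (ℝ × ℝ) → (ℝ × ℝ) → ℝ := BDE (fyy f) (fxy f) (fxx f)

/-- `j^k f(0) = P` : the degree-k Taylor polynomial of `f` at the origin is `P`,
i.e. `f − P = o(‖(x,y)‖^k)` as `(x,y) → 0`. -/
def HasJetAt0 (f P : ℝ × ℝ → ℝ) (k : ℕ) : Prop :=
  (fun p => f p - P p) =o[nhds (0 : ℝ × ℝ)] fun p => ‖p‖ ^ k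

/-- `γ` is an integral curve of the BDE `ω` on the open interval `I`:
`γ` is C¹ on `I` with nowhere-vanishing derivative annihilating `ω`. -/
def IsIntegralCurveOnBDE (ω : (ℝ × ℝ) → (ℝ × ℝ) → ℝ) (γ : ℝ → ℝ × ℝ) (I : Set ℝ) : Prop :=
  (∃ a b : ℝ, I = Set.Ioo a b) ∧
  ∃ dγ : ℝ → ℝ × ℝ, ContinuousOn dγ I ∧
    ∀ t ∈ I, HasDerivAt γ (dγ t) t ∧ dγ t ≠ 0 ∧ ω (γ t) (dγ t) = 0

/-- Topological equivalence of two BDEs at the origin: a local homeomorphism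
fixing `0` sending integral curves of one to integral curves of the other. -/
def TopEquivAt0 (ω Ω : (ℝ × ℝ) → (ℝ × ℝ) → ℝ) : Prop :=
  ∃ (U V : Set (ℝ × ℝ)) (h hinv : ℝ × ℝ → ℝ × ℝ),
    IsOpen U ∧ IsOpen V ∧ (0 : ℝ × ℝ) ∈ U ∧ (0 : ℝ × ℝ) ∈ V ∧ h 0 = 0 ∧
    ContinuousOn h U ∧ ContinuousOn hinv V ∧
    Set.BijOn h U V ∧ Set.InvOn hinv h U V ∧
    (∀ γ I, IsIntegralCurveOnBDE ω γ I → Set.MapsTo γ I U →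
      ∃ σ J, IsIntegralCurveOnBDE Ω σ J ∧ h '' (γ '' I) = σ '' J) ∧
    (∀ σ J, IsIntegralCurveOnBDE Ω σ J → Set.MapsTo σ J V →
      ∃ γ I, IsIntegralCurveOnBDE ω γ I ∧ hinv '' (σ '' J) = γ '' I)

/-- Smooth equivalence of two BDEs at the origin: a local C^∞ diffeomorphism `h`
fixing `0` pulling one family of quadratic forms back to a nonvanishing multiple
of the other. -/
def SmoothEquivAt0 (ω Ω : (ℝ × ℝ) → (ℝ × ℝ) → ℝ) : Prop :=
  ∃ (U V : Set (ℝ × ℝ)) (h hinv : ℝ × ℝ → ℝ × ℝ) (ρ : ℝ × ℝ → ℝ),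
    IsOpen U ∧ IsOpen V ∧ (0 : ℝ × ℝ) ∈ U ∧ (0 : ℝ × ℝ) ∈ V ∧ h 0 = 0 ∧
    ContDiffOn ℝ (⊤ : ℕ∞) h U ∧ ContDiffOn ℝ (⊤ : ℕ∞) hinv V ∧
    Set.BijOn h U V ∧ Set.InvOn hinv h U V ∧
    ContDiffOn ℝ (⊤ : ℕ∞) ρ U ∧ (∀ p ∈ U, ρ p ≠ 0) ∧
    (∀ p ∈ U, ∀ v : ℝ × ℝ, Ω (h p) (fderiv ℝ h p v) = ρ p * ω p v)

/-- Fiber topological equivalence at `0` of two 2-parameter families of BDEs: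
a homeomorphism `φ` of parameter spaces (onto its image), fixing `0`, such that
corresponding members of the families are topologically equivalent at `0`. -/
def FiberTopEquivAt0 (ω Ω : (ℝ × ℝ) → (ℝ × ℝ) → (ℝ × ℝ) → ℝ) : Prop :=
  ∃ (W : Set (ℝ × ℝ)) (φ ψ : ℝ × ℝ → ℝ × ℝ),
    W ∈ nhds (0 : ℝ × ℝ) ∧ φ 0 = 0 ∧
    ContinuousOn φ W ∧ ContinuousOn ψ (φ '' W) ∧
    Set.InvOn ψ φ W (φ '' W) ∧
    ∀ q ∈ W, TopEquivAt0 (ω q) (Ω (φ q))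

/-!
Use the discriminant `w` of the BDE as a coordinate next to `x`. The BDE then lives over `w ≥ 0`,
where it splits into an upper equation `w' = G₊(x, √w) - K x` and a lower equation
`w' = -G₋(x, √w) - K x` with `G±(x, 0) = 0`. Here `-K` is the slope of the double root along
`w = 0`; for the asymptotic BDE this slope is `-120 α x² + o(x²)` and for the model it is `-3 x²`,
so that after orienting the `x`-axis `K` is positive off the origin and `O(x²)` in both cases.

Every point over `w ≥ 0` lies on an upper curve, labelled by the abscissa `r` at which it meets
`w = 0` for the last time, and on a unique lower curve, labelled by the abscissa `s` at which it
reaches `w = 0`. The upper curves through the origin are those with `0 ≤ r ≤ σ`, where `σ > 0`: they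
fill the node sector, outside of which the label is unique. An increasing change of labels
`φ` carrying `[0, σ]` to the corresponding sector of the model sends the point with labels `(r, s)`
to the point with labels `(φ r, φ s)`. This is a homeomorphism which maps upper curves to upper
curves and lower curves to lower curves, and an integral curve, which may pass from one branch to
the other only where `w = 0`, is a concatenation of pieces of these.
-/

/-! ### Scalar differential equations that are monotone in the state -/

/-- `w` is continuous on `[a, b]` and solves `w' = F t w` on `(a, b)`. -/
def IsSolOn (F : ℝ → ℝ → ℝ) (w : ℝ → ℝ) (a b : ℝ) : Prop :=
  ContinuousOn w (Icc a b) ∧ ∀ t ∈ Ioo a b, HasDerivAt w (F t (w t)) t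

lemma antitoneOn_Icc_of_hasDerivAt_nonpos {f f' : ℝ → ℝ} {a b : ℝ}
    (hf : ContinuousOn f (Icc a b)) (hf' : ∀ t ∈ Ioo a b, HasDerivAt f (f' t) t)
    (hle : ∀ t ∈ Ioo a b, f' t ≤ 0) : AntitoneOn f (Icc a b) := by
  refine antitoneOn_of_hasDerivWithinAt_nonpos (convex_Icc a b) hf (f' := f') ?_ ?_ <;>
    rw [interior_Icc]
  · exact fun t ht => (hf' t ht).hasDerivWithinAt
  · exact hle

lemma nonpos_of_hasDerivAt_nonpos_of_pos {g g' : ℝ → ℝ} {a b : ℝ} (hab : a ≤ b)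
    (hg : ContinuousOn g (Icc a b)) (hg' : ∀ t ∈ Ioo a b, HasDerivAt g (g' t) t)
    (ha : g a ≤ 0) (hneg : ∀ t ∈ Ioo a b, 0 < g t → g' t ≤ 0) : g b ≤ 0 := by
  by_contra! hb
  obtain ⟨c, ⟨hc, hgc⟩, hmax⟩ : ∃ c, IsGreatest (Icc a b ∩ g ⁻¹' Iic 0) c :=
    (isCompact_Icc.of_isClosed_subset (hg.preimage_isClosed_of_isClosed isClosed_Icc isClosed_Iic)
      inter_subset_left).exists_isGreatest ⟨a, left_mem_Icc.2 hab, ha⟩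
  have hpos : ∀ t ∈ Ioo c b, 0 < g t := fun t ht => by
    by_contra! h
    exact ht.1.not_ge (hmax ⟨⟨hc.1.trans ht.1.le, ht.2.le⟩, h⟩)
  have hanti : AntitoneOn g (Icc c b) :=
    antitoneOn_Icc_of_hasDerivAt_nonpos (hg.mono (Icc_subset_Icc_left hc.1))
      (fun t ht => hg' t ⟨hc.1.trans_lt ht.1, ht.2⟩)
      fun t ht => hneg t ⟨hc.1.trans_lt ht.1, ht.2⟩ (hpos t ht)
  have hbc := hanti (left_mem_Icc.2 hc.2) (right_mem_Icc.2 hc.2) hc.2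
  exact (hbc.trans hgc).not_gt hb

namespace IsSolOn

variable {F F₁ F₂ : ℝ → ℝ → ℝ} {w w₁ w₂ : ℝ → ℝ} {a b : ℝ}

lemma mono (h : IsSolOn F w a b) {a' b' : ℝ} (ha : a ≤ a') (hb : b' ≤ b) : IsSolOn F w a' b' :=
  ⟨h.1.mono (Icc_subset_Icc ha hb), fun t ht => h.2 t ⟨ha.trans_lt ht.1, ht.2.trans_le hb⟩⟩

lemma congr (h : IsSolOn F w a b) (heq : EqOn w₁ w (Icc a b)) : IsSolOn F w₁ a b := by
  refine ⟨h.1.congr heq, fun t ht => ?_⟩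
  rw [heq (Ioo_subset_Icc_self ht)]
  refine (h.2 t ht).congr_of_eventuallyEq ?_
  filter_upwards [Ioo_mem_nhds ht.1 ht.2] with s hs using heq (Ioo_subset_Icc_self hs)

lemma reverse (h : IsSolOn F w a b) :
    IsSolOn (fun t x => -F (-t) x) (fun t => w (-t)) (-b) (-a) := by
  refine ⟨h.1.comp continuousOn_neg fun t ht => ⟨le_neg.2 ht.2, neg_le.2 ht.1⟩, fun t ht => ?_⟩
  simpa [Function.comp_def] using
    (h.2 (-t) ⟨lt_neg.2 ht.2, neg_lt.2 ht.1⟩).comp t (hasDerivAt_neg t)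

lemma le_add (h₁ : IsSolOn F₁ w₁ a b) (h₂ : IsSolOn F₂ w₂ a b) (hab : a ≤ b)
    (hF₂ : ∀ t, Antitone (F₂ t)) {δ η : ℝ} (hδ : 0 ≤ δ) (hη : 0 ≤ η) (ha : w₁ a ≤ w₂ a + δ)
    (hF : ∀ t ∈ Ioo a b, F₁ t (w₁ t) ≤ F₂ t (w₁ t) + η) : w₁ b ≤ w₂ b + δ + η * (b - a) := by
  have key := nonpos_of_hasDerivAt_nonpos_of_pos (g := fun t => w₁ t - w₂ t - δ - η * (t - a))
    (g' := fun t => F₁ t (w₁ t) - F₂ t (w₂ t) - η) hab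
    (((h₁.1.sub h₂.1).sub continuousOn_const).sub (by fun_prop)) (fun t ht => ?_) (by linarith)
    (fun t ht hpos => ?_)
  · linarith
  · exact ((((h₁.2 t ht).sub (h₂.2 t ht)).sub_const δ).sub
      (((hasDerivAt_id t).sub_const a).const_mul η)).congr_deriv (by simp)
  · have hle : w₂ t ≤ w₁ t := by nlinarith [mul_nonneg hη (sub_nonneg.2 ht.1.le)]
    linarith [hF t ht, hF₂ t hle]

lemma le_of_le_left (h₁ : IsSolOn F w₁ a b) (h₂ : IsSolOn F w₂ a b) (hF : ∀ t, Antitone (F t))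
    (hab : a ≤ b) (ha : w₁ a ≤ w₂ a) : w₁ b ≤ w₂ b := by
  simpa using h₁.le_add h₂ hab hF le_rfl le_rfl (by simpa using ha) (by simp)

lemma abs_sub_le_left (h₁ : IsSolOn F w₁ a b) (h₂ : IsSolOn F w₂ a b) (hF : ∀ t, Antitone (F t))
    (hab : a ≤ b) : |w₁ b - w₂ b| ≤ |w₁ a - w₂ a| := by
  have h := abs_le.1 (le_refl |w₁ a - w₂ a|)
  have h12 := h₁.le_add h₂ hab hF (abs_nonneg (w₁ a - w₂ a)) le_rfl (by linarith) (by simp)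
  have h21 := h₂.le_add h₁ hab hF (abs_nonneg (w₁ a - w₂ a)) le_rfl (by linarith) (by simp)
  exact abs_le.2 ⟨by linarith, by linarith⟩

lemma eq_of_eq_left (h₁ : IsSolOn F w₁ a b) (h₂ : IsSolOn F w₂ a b) (hF : ∀ t, Antitone (F t))
    (hab : a ≤ b) (ha : w₁ a = w₂ a) : w₁ b = w₂ b :=
  (h₁.le_of_le_left h₂ hF hab ha.le).antisymm (h₂.le_of_le_left h₁ hF hab ha.ge)

lemma le_of_le_right (h₁ : IsSolOn F w₁ a b) (h₂ : IsSolOn F w₂ a b) (hF : ∀ t, Monotone (F t))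
    (hab : a ≤ b) (hb : w₁ b ≤ w₂ b) : w₁ a ≤ w₂ a := by
  simpa using h₁.reverse.le_of_le_left h₂.reverse (fun t => (hF (-t)).neg) (neg_le_neg hab)
    (by simpa using hb)

lemma abs_sub_le_right (h₁ : IsSolOn F w₁ a b) (h₂ : IsSolOn F w₂ a b) (hF : ∀ t, Monotone (F t))
    (hab : a ≤ b) : |w₁ a - w₂ a| ≤ |w₁ b - w₂ b| := by
  simpa using h₁.reverse.abs_sub_le_left h₂.reverse (fun t => (hF (-t)).neg) (neg_le_neg hab)

lemma eq_of_eq_right (h₁ : IsSolOn F w₁ a b) (h₂ : IsSolOn F w₂ a b) (hF : ∀ t, Monotone (F t))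
    (hab : a ≤ b) (hb : w₁ b = w₂ b) : w₁ a = w₂ a :=
  (h₁.le_of_le_right h₂ hF hab hb.le).antisymm (h₂.le_of_le_right h₁ hF hab hb.ge)

end IsSolOn

lemma exists_isSolOn_of_lipschitz {F : ℝ → ℝ → ℝ} {M a b : ℝ} {K : NNReal} (hab : a ≤ b)
    (hcont : ∀ x, Continuous fun t => F t x) (hbound : ∀ t x, |F t x| ≤ M)
    (hlip : ∀ t, LipschitzWith K (F t)) (w₀ : ℝ) : ∃ w, w a = w₀ ∧ IsSolOn F w a b := by
  lift M to NNReal using (abs_nonneg _).trans (hbound a w₀)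
  have hPL : IsPicardLindelof F (⟨a, left_mem_Icc.2 hab⟩ : Icc a b) w₀
      (M * (b - a).toNNReal) 0 M K :=
    { lipschitzOnWith := fun t _ => (hlip t).lipschitzOnWith
      continuousOn := fun x _ => (hcont x).continuousOn
      norm_le := fun t _ x _ => hbound t x
      mul_max_le := by simp [hab] }
  obtain ⟨w, hw₀, hw⟩ := hPL.exists_eq_forall_mem_Icc_hasDerivWithinAt₀
  exact ⟨w, hw₀, fun t ht => (hw t ht).continuousWithinAt, fun t ht =>
    (hw t (Ioo_subset_Icc_self ht)).hasDerivAt (Icc_mem_nhds ht.1 ht.2)⟩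

lemma abs_integral_shift_sub_le {g : ℝ → ℝ} (hg : Continuous g) {M : ℝ} (hM : ∀ x, |g x| ≤ M)
    (δ x y : ℝ) :
    |(∫ s in x..x + δ, g s) - ∫ s in y..y + δ, g s| ≤ 2 * M * |x - y| := by
  rw [intervalIntegral.integral_interval_sub_interval_comm (hg.intervalIntegrable ..)
    (hg.intervalIntegrable ..) (hg.intervalIntegrable ..)]
  have h₁ := intervalIntegral.norm_integral_le_of_norm_le_const (f := g) (a := x) (b := y)
    fun s _ => hM s
  have h₂ := intervalIntegral.norm_integral_le_of_norm_le_const (f := g) (a := x + δ)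
    (b := y + δ) fun s _ => hM s
  rw [Real.norm_eq_abs, abs_sub_comm] at h₁ h₂
  rw [add_sub_add_right_eq_sub] at h₂
  exact (abs_sub _ _).trans (by linarith)

-- The approximants are the averages of `F t` over `[x, x + δ]`.
lemma exists_lipschitz_antitone_approx {F : ℝ → ℝ → ℝ} {M ε : ℝ} (hε : 0 < ε)
    (hF : UniformContinuous (Function.uncurry F)) (hanti : ∀ t, Antitone (F t))
    (hbound : ∀ t x, |F t x| ≤ M) :
    ∃ (G : ℝ → ℝ → ℝ) (K : NNReal), (∀ x, Continuous fun t => G t x) ∧ (∀ t, Antitone (G t)) ∧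
      (∀ t, LipschitzWith K (G t)) ∧ (∀ t x, |G t x| ≤ M) ∧ ∀ t x, |G t x - F t x| ≤ ε := by
  obtain ⟨δ, hδ, hδF⟩ := Metric.uniformContinuous_iff.1 hF ε hε
  have hcont : Continuous (Function.uncurry F) := hF.continuous
  have hFt : ∀ t, Continuous (F t) := fun t => by fun_prop
  have hM : 0 ≤ M := (abs_nonneg _).trans (hbound 0 0)
  have hshift : ∀ t x, IntervalIntegrable (fun s => F t (x + δ / 2 * s)) MeasureTheory.volume 0 1 :=
    fun t x => ((hFt t).comp (by fun_prop)).intervalIntegrable 0 1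
  have hsubst : ∀ t x, ∫ s in (0 : ℝ)..1, F t (x + δ / 2 * s) =
      (δ / 2)⁻¹ * ∫ s in x..x + δ / 2, F t s := fun t x => by
    rw [intervalIntegral.integral_comp_add_mul _ (by positivity) x]; simp
  refine ⟨fun t x => ∫ s in (0 : ℝ)..1, F t (x + δ / 2 * s), ((δ / 2)⁻¹ * (2 * M)).toNNReal,
    fun x => ?_, fun t x y hxy => ?_, fun t => ?_, fun t x => ?_, fun t x => ?_⟩
  · fun_prop
  · exact intervalIntegral.integral_mono_on zero_le_one (hshift t y) (hshift t x)
      fun s _ => hanti t (by linarith)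
  · refine LipschitzWith.of_dist_le_mul fun x y => ?_
    simp only [Real.dist_eq, hsubst]
    rw [← mul_sub, abs_mul, abs_of_pos (by positivity : 0 < (δ / 2)⁻¹),
      Real.coe_toNNReal _ (by positivity), mul_assoc]
    exact mul_le_mul_of_nonneg_left (abs_integral_shift_sub_le (hFt t) (hbound t) ..)
      (by positivity)
  · simpa using intervalIntegral.norm_integral_le_of_norm_le_const (a := 0) (b := 1)
      (f := fun s => F t (x + δ / 2 * s)) fun s _ => hbound t (x + δ / 2 * s)
  · have hconst : F t x = ∫ _ in (0 : ℝ)..1, F t x := by simp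
    rw [hconst, ← intervalIntegral.integral_sub (hshift t x) (by simp)]
    refine (intervalIntegral.norm_integral_le_of_norm_le_const (C := ε)
      (f := fun s => F t (x + δ / 2 * s) - F t x) fun s hs =>
        (hδF (a := (t, x + δ / 2 * s)) (b := (t, x)) ?_).le).trans (by simp)
    rw [uIoc_of_le zero_le_one] at hs
    rw [dist_prod_same_left, Real.dist_eq, add_sub_cancel_left, abs_of_nonneg (by nlinarith [hs.1])]
    nlinarith [hs.2]

lemma IsSolOn.of_tendsto {F : ℝ → ℝ → ℝ} {a b : ℝ} (hF : UniformContinuous (Function.uncurry F))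
    {G : ℕ → ℝ → ℝ → ℝ} {ε : ℕ → ℝ} (hε : Tendsto ε atTop (nhds 0))
    (hG : ∀ n t x, |G n t x - F t x| ≤ ε n) {W : ℕ → ℝ → ℝ} {w : ℝ → ℝ}
    (hW : ∀ n, IsSolOn (G n) (W n) a b) (hlim : TendstoUniformlyOn W w atTop (Icc a b)) :
    IsSolOn F w a b := by
  refine ⟨hlim.continuousOn (Frequently.of_forall fun n => (hW n).1), fun t ht => ?_⟩
  refine hasDerivAt_of_tendstoUniformlyOn isOpen_Ioo (f := W) (f' := fun n t => G n t (W n t))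
    (g' := fun t => F t (w t)) (l := atTop) ?_
    (Eventually.of_forall fun n => (hW n).2)
    (fun t ht => hlim.tendsto_at (Ioo_subset_Icc_self ht)) ht
  rw [Metric.tendstoUniformlyOn_iff]
  intro η hη
  obtain ⟨δ, hδ, hδF⟩ := Metric.uniformContinuous_iff.1 hF (η / 2) (half_pos hη)
  filter_upwards [Metric.tendstoUniformlyOn_iff.1 hlim δ hδ,
    hε.eventually (gt_mem_nhds (half_pos hη))] with n hn hεn s hs
  have h₁ : dist (F s (w s)) (F s (W n s)) < η / 2 :=
    hδF (a := (s, w s)) (b := (s, W n s))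
      (by rw [dist_prod_same_left]; exact hn s (Ioo_subset_Icc_self hs))
  have h₂ : dist (F s (W n s)) (G n s (W n s)) < η / 2 := by
    rw [dist_comm]; exact (hG n s (W n s)).trans_lt hεn
  linarith [dist_triangle (F s (w s)) (F s (W n s)) (G n s (W n s))]

lemma exists_isSolOn_of_bounded {F : ℝ → ℝ → ℝ} {M a b : ℝ} (hab : a ≤ b)
    (hF : UniformContinuous (Function.uncurry F)) (hanti : ∀ t, Antitone (F t))
    (hbound : ∀ t x, |F t x| ≤ M) (w₀ : ℝ) : ∃ w, w a = w₀ ∧ IsSolOn F w a b := by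
  choose G K hGc hGa hGl hGb hGF using fun n : ℕ =>
    exists_lipschitz_antitone_approx (Nat.one_div_pos_of_nat (n := n) (α := ℝ)) hF hanti hbound
  choose W hW₀ hW using fun n => exists_isSolOn_of_lipschitz hab (hGc n) (hGb n) (hGl n) w₀
  have hpos : ∀ n : ℕ, (0 : ℝ) < 1 / (n + 1) := fun n => Nat.one_div_pos_of_nat
  have hle : ∀ n m, ∀ t ∈ Icc a b,
      W n t ≤ W m t + (1 / (n + 1) + 1 / (m + 1)) * (b - a) := fun n m t ht => by
    have h := ((hW n).mono le_rfl ht.2).le_add ((hW m).mono le_rfl ht.2) ht.1 (hGa m) le_rfl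
      (add_pos (hpos n) (hpos m)).le (by rw [hW₀, hW₀, add_zero]) fun s _ => by
        linarith [(abs_le.1 (hGF n s (W n s))).2, (abs_le.1 (hGF m s (W n s))).1]
    nlinarith [ht.2, add_pos (hpos n) (hpos m)]
  have hzero : Tendsto (fun n : ℕ => (1 : ℝ) / (n + 1)) atTop (nhds 0) :=
    tendsto_one_div_add_atTop_nhds_zero_nat
  have hcauchy : UniformCauchySeqOn W atTop (Icc a b) := by
    rw [Metric.uniformCauchySeqOn_iff]
    intro η hη
    have hev : ∀ᶠ n : ℕ in atTop, (1 : ℝ) / (n + 1) * (b - a) < η / 2 :=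
      (by simpa using hzero.mul_const (b - a) :
        Tendsto (fun n : ℕ => (1 : ℝ) / (n + 1) * (b - a)) atTop (nhds 0)).eventually
        (gt_mem_nhds (half_pos hη))
    obtain ⟨N, hN⟩ := eventually_atTop.1 hev
    refine ⟨N, fun n hn m hm t ht => ?_⟩
    rw [Real.dist_eq, abs_lt]
    constructor <;> linarith [hle n m t ht, hle m n t ht, hN n hn, hN m hm]
  choose! w hw using fun t (ht : t ∈ Icc a b) =>
    cauchySeq_tendsto_of_complete (hcauchy.cauchySeq ht)
  refine ⟨w, ?_, .of_tendsto hF hzero hGF hW (hcauchy.tendstoUniformlyOn_of_tendsto hw)⟩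
  exact tendsto_nhds_unique (hw a (left_mem_Icc.2 hab)) (by simp [hW₀])

lemma uniformContinuous_uncurry_projIcc {F : ℝ → ℝ → ℝ} (hF : Continuous (Function.uncurry F))
    {a b c d : ℝ} (hab : a ≤ b) (hcd : c ≤ d) :
    UniformContinuous (Function.uncurry fun t x => F (projIcc a b hab t) (projIcc c d hcd x)) := by
  have h : UniformContinuous fun p : Icc a b × Icc c d => F p.1 p.2 :=
    CompactSpace.uniformContinuous_of_continuous (by fun_prop)
  exact h.comp ((LipschitzWith.projIcc hab).uniformContinuous.prodMap
    (LipschitzWith.projIcc hcd).uniformContinuous)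

-- Monotonicity makes the solution of the truncated equation satisfy an a priori bound in terms of
-- `F t 0` alone, so that it never leaves the region where the truncation is inactive.
lemma exists_isSolOn {F : ℝ → ℝ → ℝ} (hF : Continuous (Function.uncurry F))
    (hanti : ∀ t, Antitone (F t)) {a b : ℝ} (hab : a ≤ b) (w₀ : ℝ) :
    ∃ w, w a = w₀ ∧ IsSolOn F w a b := by
  obtain ⟨N, hN⟩ := (isCompact_Icc (a := a) (b := b)).exists_bound_of_continuousOn
    (f := fun t => F t 0) (by fun_prop)
  have hN₀ : 0 ≤ N := (norm_nonneg _).trans (hN a (left_mem_Icc.2 hab))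
  set B := |w₀| + N * (b - a)
  have hB₀ : 0 ≤ B := add_nonneg (abs_nonneg _) (mul_nonneg hN₀ (sub_nonneg.2 hab))
  set c : ℝ → ℝ := fun x => projIcc (-B) B (by linarith) x with hc
  have hc₀ : c 0 = 0 := congrArg Subtype.val (projIcc_of_mem _ ⟨by linarith, hB₀⟩)
  set T : ℝ → ℝ → ℝ := fun t x => F (projIcc a b hab t) (c x) with hT
  have hTanti : ∀ t, Antitone (T t) := fun t x y hxy => hanti _ (monotone_projIcc _ hxy)
  have hT₀ : ∀ t, |T t 0| ≤ N := fun t => by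
    simpa [hT, hc₀] using hN _ (projIcc a b hab t).2
  obtain ⟨M, hM⟩ := (isCompact_Icc (a := a) (b := b)).prod (isCompact_Icc (a := -B) (b := B))
    |>.exists_bound_of_continuousOn hF.continuousOn
  obtain ⟨w, hw₀, hw⟩ := exists_isSolOn_of_bounded hab
    (uniformContinuous_uncurry_projIcc hF hab _) hTanti
    (fun t x => hM (_, _) ⟨(projIcc a b hab t).2, (projIcc (-B) B _ x).2⟩) w₀
  have hzero : ∀ t, IsSolOn (fun s x => T s x - T s 0) (fun _ => 0) a t := fun t =>
    ⟨continuousOn_const, fun s _ => by simpa using hasDerivAt_const s (0 : ℝ)⟩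
  have hTanti' : ∀ t, Antitone fun x => T t x - T t 0 := fun t x y hxy =>
    sub_le_sub_right (hTanti t hxy) _
  have hmem : ∀ t ∈ Icc a b, w t ∈ Icc (-B) B := fun t ht => by
    have hNt : N * (t - a) ≤ N * (b - a) := by gcongr; exact ht.2
    have hup := (hw.mono le_rfl ht.2).le_add (hzero t) ht.1 hTanti' (abs_nonneg w₀) hN₀
      (by rw [hw₀]; linarith [le_abs_self w₀]) fun s _ => by linarith [(abs_le.1 (hT₀ s)).2]
    have hlo := (hzero t).le_add (hw.mono le_rfl ht.2) ht.1 hTanti (abs_nonneg w₀) hN₀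
      (by rw [hw₀]; linarith [neg_abs_le w₀]) fun s _ => by linarith [(abs_le.1 (hT₀ s)).1]
    constructor <;> linarith
  refine ⟨w, hw₀, hw.1, fun t ht => ?_⟩
  have ht' := Ioo_subset_Icc_self ht
  simpa [hT, hc, projIcc_of_mem hab ht', projIcc_of_mem _ (hmem t ht')] using hw.2 t ht

lemma exists_forall_isSolOn_right {F : ℝ → ℝ → ℝ} (hF : Continuous (Function.uncurry F))
    (hanti : ∀ t, Antitone (F t)) (a w₀ : ℝ) :
    ∃ w : ℝ → ℝ, w a = w₀ ∧ ∀ b, a ≤ b → IsSolOn F w a b := by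
  choose! W hW₀ hW using fun b (hb : a ≤ b) => exists_isSolOn hF hanti hb w₀
  refine ⟨fun t => W t t, hW₀ a le_rfl, fun b hb => (hW b hb).congr fun t ht => ?_⟩
  exact (hW t ht.1).eq_of_eq_left ((hW b hb).mono le_rfl ht.2) hanti ht.1
    ((hW₀ t ht.1).trans (hW₀ b hb).symm)

lemma exists_forall_isSolOn_left {F : ℝ → ℝ → ℝ} (hF : Continuous (Function.uncurry F))
    (hmono : ∀ t, Monotone (F t)) (b w₀ : ℝ) :
    ∃ w : ℝ → ℝ, w b = w₀ ∧ ∀ a, a ≤ b → IsSolOn F w a b := by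
  obtain ⟨w, hw₀, hw⟩ := exists_forall_isSolOn_right (F := fun t x => -F (-t) x)
    (by fun_prop) (fun t => (hmono (-t)).neg) (-b) w₀
  exact ⟨fun t => w (-t), hw₀, fun a ha => by simpa using (hw (-a) (neg_le_neg ha)).reverse⟩

/-! ### Differential inequalities -/

lemma le_mul_exp_of_hasDerivAt_le_mul {f f' : ℝ → ℝ} {a b c : ℝ} (hab : a ≤ b)
    (hf : ContinuousOn f (Icc a b)) (hf' : ∀ t ∈ Ioo a b, HasDerivAt f (f' t) t)
    (hle : ∀ t ∈ Ioo a b, f' t ≤ c * f t) : f b ≤ f a * Real.exp (c * (b - a)) := by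
  have hanti : AntitoneOn (fun t => f t * Real.exp (c * (b - t))) (Icc a b) := by
    refine antitoneOn_Icc_of_hasDerivAt_nonpos
      (f' := fun t => (f' t - c * f t) * Real.exp (c * (b - t))) (hf.mul (by fun_prop))
      (fun t ht => ?_)
      fun t ht => mul_nonpos_of_nonpos_of_nonneg (sub_nonpos.2 (hle t ht)) (Real.exp_pos _).le
    have hexp := (((hasDerivAt_id t).const_sub b).const_mul c).exp
    exact ((hf' t ht).mul hexp).congr_deriv (by simp only [id]; ring)
  simpa using hanti (left_mem_Icc.2 hab) (right_mem_Icc.2 hab) hab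

lemma sqrt_sub_sqrt_le_div {p q ε : ℝ} (hp : 0 ≤ p) (hpq : p ≤ q) (hε : 0 < ε) (hq : ε ≤ √q) :
    √q - √p ≤ (q - p) / ε := by
  rw [le_div_iff₀ hε]
  calc (√q - √p) * ε ≤ (√q - √p) * (√q + √p) :=
        mul_le_mul_of_nonneg_left (by linarith [Real.sqrt_nonneg p])
          (sub_nonneg.2 (Real.sqrt_le_sqrt hpq))
    _ = q - p := by linarith [Real.mul_self_sqrt hp, Real.mul_self_sqrt (hp.trans hpq)]

/-! ### Folded saddle-node systems -/

/-- `G x` vanishes at `0` and is bi-Lipschitz and increasing on `[0, ∞)`, uniformly in `x`. It is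
the slope of an integral curve as a function of the square root of the height. -/
structure IsRate (G : ℝ → ℝ → ℝ) (b0 b1 : ℝ) : Prop where
  continuous_uncurry : Continuous (Function.uncurry G)
  map_zero : ∀ x, G x 0 = 0
  mul_le_sub : ∀ x q q', 0 ≤ q → q ≤ q' → b0 * (q' - q) ≤ G x q' - G x q
  sub_le_mul : ∀ x q q', 0 ≤ q → q ≤ q' → G x q' - G x q ≤ b1 * (q' - q)
  lower_pos : 0 < b0

namespace IsRate

variable {G : ℝ → ℝ → ℝ} {b0 b1 : ℝ} {q q' : ℝ}

lemma mul_le (h : IsRate G b0 b1) (x : ℝ) (hq : 0 ≤ q) : b0 * q ≤ G x q := by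
  simpa [h.map_zero] using h.mul_le_sub x 0 q le_rfl hq

lemma le_mul (h : IsRate G b0 b1) (x : ℝ) (hq : 0 ≤ q) : G x q ≤ b1 * q := by
  simpa [h.map_zero] using h.sub_le_mul x 0 q le_rfl hq

lemma nonneg (h : IsRate G b0 b1) (x : ℝ) (hq : 0 ≤ q) : 0 ≤ G x q :=
  (mul_nonneg h.lower_pos.le hq).trans (h.mul_le x hq)

lemma le_of_le (h : IsRate G b0 b1) (x : ℝ) (hq : 0 ≤ q) (hqq : q ≤ q') :
    G x q ≤ G x q' :=
  sub_nonneg.1 <| (mul_nonneg h.lower_pos.le (sub_nonneg.2 hqq)).trans (h.mul_le_sub x q q' hq hqq)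

lemma upper_pos (h : IsRate G b0 b1) : 0 < b1 := by
  have h₁ := (h.mul_le 0 zero_le_one).trans (h.le_mul 0 zero_le_one)
  linarith [h.lower_pos]

end IsRate

/-- The data of a pair of scalar equations `w' = Gp x √w - K x` (upper) and
`w' = -Gm x √w - K x` (lower) whose integral curves over `w ≥ 0` are the integral curves of a
well-folded saddle-node BDE. The equations are global: `√w = 0` for `w < 0`. -/
structure FoldedSystem where
  K : ℝ → ℝ
  Gp : ℝ → ℝ → ℝ
  Gm : ℝ → ℝ → ℝ
  b0 : ℝ
  b1 : ℝ
  L : ℝ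
  k1 : ℝ
  r0 : ℝ
  continuous_K : Continuous K
  K_zero : K 0 = 0
  K_pos : ∀ x, x ≠ 0 → 0 < K x
  r0_pos : 0 < r0
  K_le : ∀ x ∈ Icc 0 r0, K x ≤ k1 * x ^ 2
  K_superlinear : ∀ C : ℝ, ∃ R > 0, ∀ x ≥ R, C * x ≤ K x
  isRate_Gp : IsRate Gp b0 b1
  isRate_Gm : IsRate Gm b0 b1
  Gm_subhomogeneous : ∀ x q₁ q₂, 0 ≤ q₂ → q₂ ≤ q₁ →
    q₂ * Gm x q₁ - q₁ * Gm x q₂ ≤ L * q₁ * q₂ * (q₁ - q₂)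

namespace FoldedSystem

variable (Y : FoldedSystem)

lemma b0_pos : 0 < Y.b0 := Y.isRate_Gp.lower_pos

lemma b1_pos : 0 < Y.b1 := Y.isRate_Gp.upper_pos

lemma K_nonneg (x : ℝ) : 0 ≤ Y.K x := by
  rcases eq_or_ne x 0 with rfl | hx
  · exact Y.K_zero.ge
  · exact (Y.K_pos x hx).le

/-- The primitive of `K` vanishing at `0`; below `w = 0` all integral curves are the graphs of
`c - κ`. -/
def κ (x : ℝ) : ℝ := ∫ t in (0 : ℝ)..x, Y.K t

lemma hasDerivAt_κ (x : ℝ) : HasDerivAt Y.κ (Y.K x) x :=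
  (Y.continuous_K.integral_hasStrictDerivAt 0 x).hasDerivAt

lemma continuous_κ : Continuous Y.κ :=
  continuous_iff_continuousAt.2 fun x => (Y.hasDerivAt_κ x).continuousAt

lemma strictMono_κ : StrictMono Y.κ := by
  have key : ∀ s : Set ℝ, Convex ℝ s → (∀ x ∈ interior s, x ≠ 0) → StrictMonoOn Y.κ s :=
    fun s hs h0 => strictMonoOn_of_deriv_pos hs Y.continuous_κ.continuousOn fun x hx => by
      rw [(Y.hasDerivAt_κ x).deriv]
      exact Y.K_pos x (h0 x hx)
  exact StrictMonoOn.Iic_union_Ici (a := 0)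
    (key _ (convex_Iic 0) fun x hx => by rw [interior_Iic] at hx; exact hx.ne)
    (key _ (convex_Ici 0) fun x hx => by rw [interior_Ici] at hx; exact hx.ne')

/-- The upper of the two slopes at `(x, w)`. -/
def upper (x w : ℝ) : ℝ := Y.Gp x √w - Y.K x

/-- The lower of the two slopes at `(x, w)`. -/
def lower (x w : ℝ) : ℝ := -Y.Gm x √w - Y.K x

lemma continuous_upper : Continuous (Function.uncurry Y.upper) :=
  (Y.isRate_Gp.continuous_uncurry.comp
    (continuous_fst.prodMk (Real.continuous_sqrt.comp continuous_snd))).sub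
    (Y.continuous_K.comp continuous_fst)

lemma continuous_lower : Continuous (Function.uncurry Y.lower) :=
  (Y.isRate_Gm.continuous_uncurry.comp
    (continuous_fst.prodMk (Real.continuous_sqrt.comp continuous_snd))).neg.sub
    (Y.continuous_K.comp continuous_fst)

lemma upper_mono (x : ℝ) : Monotone (Y.upper x) := fun _ _ h =>
  sub_le_sub_right (Y.isRate_Gp.le_of_le x (Real.sqrt_nonneg _) (Real.sqrt_le_sqrt h)) _

lemma lower_anti (x : ℝ) : Antitone (Y.lower x) := fun _ _ h =>
  sub_le_sub_right
    (neg_le_neg (Y.isRate_Gm.le_of_le x (Real.sqrt_nonneg _) (Real.sqrt_le_sqrt h))) _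

lemma upper_of_nonpos (x : ℝ) {w : ℝ} (hw : w ≤ 0) : Y.upper x w = -Y.K x := by
  rw [upper, Real.sqrt_eq_zero_of_nonpos hw, Y.isRate_Gp.map_zero, zero_sub]

lemma lower_of_nonpos (x : ℝ) {w : ℝ} (hw : w ≤ 0) : Y.lower x w = -Y.K x := by
  rw [lower, Real.sqrt_eq_zero_of_nonpos hw, Y.isRate_Gm.map_zero, neg_zero, zero_sub]

lemma neg_K_le_upper (x w : ℝ) : -Y.K x ≤ Y.upper x w := by
  have hG := Y.isRate_Gp.nonneg x (Real.sqrt_nonneg w)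
  simp only [upper]
  linarith

lemma lower_le_neg_K (x w : ℝ) : Y.lower x w ≤ -Y.K x := by
  have hG := Y.isRate_Gm.nonneg x (Real.sqrt_nonneg w)
  simp only [lower]
  linarith

/-! ### Upper curves -/

lemma exists_upper_solution (r : ℝ) :
    ∃ w : ℝ → ℝ, w r = 0 ∧ ∀ a, a ≤ r → IsSolOn Y.upper w a r :=
  exists_forall_isSolOn_left Y.continuous_upper Y.upper_mono r 0

/-- The upper curve which meets `w = 0` for the last time at `x = r`. -/
def u (r x : ℝ) : ℝ := if x < r then (Y.exists_upper_solution r).choose x else Y.κ r - Y.κ x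

variable {r r' x : ℝ}

lemma u_of_le (h : r ≤ x) : Y.u r x = Y.κ r - Y.κ x := if_neg (not_lt.2 h)

@[simp] lemma u_self (r : ℝ) : Y.u r r = 0 := by rw [Y.u_of_le le_rfl, sub_self]

lemma eqOn_u_Iic (r : ℝ) : EqOn (Y.u r) (Y.exists_upper_solution r).choose (Iic r) := by
  intro y hy
  rcases lt_or_eq_of_le (mem_Iic.1 hy) with h | rfl
  · exact if_pos h
  · rw [u_self, (Y.exists_upper_solution y).choose_spec.1]

lemma hasDerivAt_u_of_ne (h : x ≠ r) : HasDerivAt (Y.u r) (Y.upper x (Y.u r x)) x := by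
  rcases lt_or_gt_of_ne h with h | h
  · have hsol := (Y.exists_upper_solution r).choose_spec.2 (x - 1) (by linarith)
    exact (hsol.congr ((Y.eqOn_u_Iic r).mono Icc_subset_Iic_self)).2 x ⟨by linarith, h⟩
  · have heq : Y.u r =ᶠ[nhds x] fun y => Y.κ r - Y.κ y := by
      filter_upwards [Ioi_mem_nhds h] with y hy using Y.u_of_le (le_of_lt hy)
    rw [Y.upper_of_nonpos x (by rw [Y.u_of_le h.le]; linarith [Y.strictMono_κ h])]
    exact ((Y.hasDerivAt_κ x).const_sub _).congr_of_eventuallyEq heq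

lemma continuousAt_u_self (r : ℝ) : ContinuousAt (Y.u r) r := by
  refine continuousAt_iff_continuous_left_right.2 ⟨?_, ?_⟩
  · have hsol := (Y.exists_upper_solution r).choose_spec.2 (r - 1) (by linarith)
    exact ((hsol.1 r ⟨by linarith, le_rfl⟩).mono_of_mem_nhdsWithin
      (Icc_mem_nhdsLE (by linarith))).congr (Y.eqOn_u_Iic r) (Y.eqOn_u_Iic r self_mem_Iic)
  · exact (continuous_const.sub Y.continuous_κ).continuousWithinAt.congr
      (fun y hy => Y.u_of_le hy) (Y.u_of_le le_rfl)

lemma hasDerivAt_u (r x : ℝ) : HasDerivAt (Y.u r) (Y.upper x (Y.u r x)) x := by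
  rcases eq_or_ne x r with rfl | h
  · have hc := Y.continuousAt_u_self x
    exact hasDerivAt_of_hasDerivAt_of_ne (fun y hy => Y.hasDerivAt_u_of_ne hy) hc
      (Y.continuous_upper.continuousAt.comp (f := fun y => (y, Y.u x y))
        (continuousAt_id.prodMk hc))
  · exact Y.hasDerivAt_u_of_ne h

lemma continuous_u (r : ℝ) : Continuous (Y.u r) :=
  continuous_iff_continuousAt.2 fun x => (Y.hasDerivAt_u r x).continuousAt

lemma isSolOn_u (r a b : ℝ) : IsSolOn Y.upper (Y.u r) a b :=
  ⟨(Y.continuous_u r).continuousOn, fun x _ => Y.hasDerivAt_u r x⟩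

lemma abs_u_sub_u_le (r r' x : ℝ) : |Y.u r x - Y.u r' x| ≤ |Y.κ r - Y.κ r'| := by
  wlog h : r ≤ r' generalizing r r' with H
  · rw [abs_sub_comm, abs_sub_comm (Y.κ r)]
    exact H r' r (le_of_not_ge h)
  rcases le_total x r' with hx | hx
  · simpa [Y.u_of_le h] using
      (Y.isSolOn_u r x r').abs_sub_le_right (Y.isSolOn_u r' x r') Y.upper_mono hx
  · rw [Y.u_of_le hx, Y.u_of_le (h.trans hx), sub_sub_sub_cancel_right]

lemma continuous_uncurry_u : Continuous (Function.uncurry Y.u) := by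
  refine continuous_iff_continuousAt.2 fun ⟨r, x⟩ => ?_
  rw [ContinuousAt, tendsto_iff_dist_tendsto_zero]
  have hlim : Tendsto (fun p : ℝ × ℝ => |Y.κ p.1 - Y.κ r| + |Y.u r p.2 - Y.u r x|)
      (nhds (r, x)) (nhds 0) := by
    have hcont : Continuous fun p : ℝ × ℝ => |Y.κ p.1 - Y.κ r| + |Y.u r p.2 - Y.u r x| := by
      have := Y.continuous_κ
      have := Y.continuous_u r
      fun_prop
    simpa using hcont.tendsto (r, x)
  refine squeeze_zero (fun _ => dist_nonneg) (fun p => ?_) hlim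
  exact (abs_sub_le _ (Y.u r p.2) _).trans (add_le_add_left (Y.abs_u_sub_u_le _ _ _) _)

lemma continuous_u_left (x : ℝ) : Continuous fun r => Y.u r x :=
  Y.continuous_uncurry_u.comp (continuous_id.prodMk continuous_const)

lemma u_mono (x : ℝ) : Monotone fun r => Y.u r x := by
  intro r r' h
  have hκ := Y.strictMono_κ.monotone h
  simp only
  rcases le_total x r' with hx | hx
  · refine (Y.isSolOn_u r x r').le_of_le_right (Y.isSolOn_u r' x r') Y.upper_mono hx ?_
    rw [Y.u_of_le h, u_self]
    linarith
  · rw [Y.u_of_le hx, Y.u_of_le (h.trans hx)]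
    linarith

lemma u_nonneg (h : x ≤ r) : 0 ≤ Y.u r x :=
  (Y.u_self x).ge.trans (Y.u_mono x h)

lemma eq_zero_of_u_eq_zero (h : x < r) (h0 : Y.u r x = 0) : x = 0 := by
  have hmin : IsLocalMin (Y.u r) x := by
    filter_upwards [Iio_mem_nhds h] with y hy
    rw [h0]
    exact Y.u_nonneg (le_of_lt hy)
  have hK := hmin.hasDerivAt_eq_zero (Y.hasDerivAt_u r x)
  rw [Y.upper_of_nonpos x h0.le, neg_eq_zero] at hK
  by_contra hx
  exact (Y.K_pos x hx).ne' hK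

lemma u_lt_u_of_forall_pos (hr : r < r') (hx : x ≤ r) (hpos : ∀ t ∈ Icc x r, 0 < Y.u r' t) :
    Y.u r x < Y.u r' x := by
  obtain ⟨t₀, ht₀, hmin⟩ := (isCompact_Icc (a := x) (b := r)).exists_isMinOn
    ⟨x, left_mem_Icc.2 hx⟩ (Y.continuous_u r').continuousOn
  set ε := √(Y.u r' t₀)
  have hε : 0 < ε := Real.sqrt_pos.2 (hpos t₀ ht₀)
  have hle := le_mul_exp_of_hasDerivAt_le_mul (f := fun t => Y.u r' t - Y.u r t) (c := Y.b1 / ε) hx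
    ((Y.continuous_u r').sub (Y.continuous_u r)).continuousOn
    (fun t _ => (Y.hasDerivAt_u r' t).sub (Y.hasDerivAt_u r t)) fun t ht => by
      have hmono := Y.u_mono t hr.le
      calc Y.upper t (Y.u r' t) - Y.upper t (Y.u r t)
          = Y.Gp t √(Y.u r' t) - Y.Gp t √(Y.u r t) := sub_sub_sub_cancel_right _ _ _
        _ ≤ Y.b1 * (√(Y.u r' t) - √(Y.u r t)) :=
            Y.isRate_Gp.sub_le_mul t _ _ (Real.sqrt_nonneg _) (Real.sqrt_le_sqrt hmono)
        _ ≤ Y.b1 * ((Y.u r' t - Y.u r t) / ε) :=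
            mul_le_mul_of_nonneg_left (sqrt_sub_sqrt_le_div (Y.u_nonneg ht.2.le) hmono hε
              (Real.sqrt_le_sqrt (hmin (Ioo_subset_Icc_self ht)))) Y.b1_pos.le
        _ = Y.b1 / ε * (Y.u r' t - Y.u r t) := by ring
  have hr'pos := hpos r (right_mem_Icc.2 hx)
  simp only [u_self, sub_zero] at hle
  exact sub_pos.1 (pos_of_mul_pos_left (hr'pos.trans_le hle) (Real.exp_pos _).le)

lemma u_lt_u (hr : r < r') (hx : x ≤ r) (hn : ¬(x ≤ 0 ∧ 0 ≤ r ∧ Y.u r' 0 = 0)) :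
    Y.u r x < Y.u r' x := by
  refine Y.u_lt_u_of_forall_pos hr hx fun t ht => (Y.u_nonneg (ht.2.trans hr.le)).lt_of_ne' ?_
  intro h
  obtain rfl := Y.eq_zero_of_u_eq_zero (ht.2.trans_lt hr) h
  exact hn ⟨ht.1, ht.2, h⟩

lemma sqrt_u_le {t : ℝ} (hxt : x ≤ t) (htr : t ≤ r) :
    √(Y.u r t) ≤ √(Y.u r x + 1) + Y.b1 / 2 * (t - x) := by
  have hanti : AntitoneOn (fun y => √(Y.u r y + 1) - Y.b1 / 2 * y) (Icc x t) := by
    refine antitoneOn_Icc_of_hasDerivAt_nonpos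
      (f' := fun y => Y.upper y (Y.u r y) / (2 * √(Y.u r y + 1)) - Y.b1 / 2)
      (((Y.continuous_u r).add continuous_const).sqrt.sub (by fun_prop)).continuousOn ?_ ?_ <;>
      intro y hy <;> have hu := Y.u_nonneg (hy.2.le.trans htr)
    · refine (((Y.hasDerivAt_u r y).add_const 1).sqrt (by positivity)).sub ?_
      simpa using (hasDerivAt_id y).const_mul (Y.b1 / 2)
    · have hsqrt : √(Y.u r y) ≤ √(Y.u r y + 1) := Real.sqrt_le_sqrt (by linarith)
      have hG := Y.isRate_Gp.le_mul y (Real.sqrt_nonneg (Y.u r y))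
      rw [sub_nonpos, div_le_iff₀ (by positivity), upper]
      linarith [Y.K_nonneg y, mul_le_mul_of_nonneg_left hsqrt Y.b1_pos.le]
  have hx := hanti (left_mem_Icc.2 hxt) (right_mem_Icc.2 hxt) hxt
  have hsqrt : √(Y.u r t) ≤ √(Y.u r t + 1) := Real.sqrt_le_sqrt (by linarith)
  simp only at hx
  linarith

lemma exists_forall_affine_le_K (A B : ℝ) : ∃ R, ∀ t ≥ R, A + B * t ≤ Y.K t := by
  obtain ⟨R, -, hR⟩ := Y.K_superlinear (|A| + B)
  refine ⟨max R 1, fun t ht => le_trans ?_ (hR t (le_of_max_le_left ht))⟩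
  nlinarith [le_abs_self A, abs_nonneg A, le_of_max_le_right ht]

-- If all `u r x` were at most `W`, then `√(u r t)` would be bounded by an affine function of `t`
-- independent of `r`; beyond some `R` the superlinear `K` then forces `u r` to decrease at unit
-- speed, so that `u r R ≥ r - R` is unbounded in `r`.
lemma exists_lt_u (x W : ℝ) : ∃ r, x ≤ r ∧ W < Y.u r x := by
  by_contra! hbdd
  have hsqrt : ∀ t r, x ≤ t → t ≤ r → √(Y.u r t) ≤ √(W + 1) + Y.b1 / 2 * (t - x) :=
    fun t r hxt htr => (Y.sqrt_u_le hxt htr).trans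
      (by gcongr; exact hbdd r (hxt.trans htr))
  obtain ⟨R, hR⟩ := Y.exists_forall_affine_le_K (Y.b1 * (√(W + 1) - Y.b1 / 2 * x) + 1)
    (Y.b1 * (Y.b1 / 2))
  set R₁ := max R x
  have hlinear : ∀ r, R₁ ≤ r → r - R₁ ≤ Y.u r R₁ := fun r hr => by
    have hanti : AntitoneOn (fun y => Y.u r y + y) (Icc R₁ r) := by
      refine antitoneOn_Icc_of_hasDerivAt_nonpos
        ((Y.continuous_u r).add continuous_id).continuousOn
        (fun y _ => (Y.hasDerivAt_u r y).add (hasDerivAt_id y)) fun y hy => ?_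
      have hG := Y.isRate_Gp.le_mul y (Real.sqrt_nonneg (Y.u r y))
      have hs := mul_le_mul_of_nonneg_left
        (hsqrt y r ((le_max_right R x).trans hy.1.le) hy.2.le) Y.b1_pos.le
      have hK := hR y ((le_max_left R x).trans hy.1.le)
      simp only [upper]
      linarith
    have hend := hanti (left_mem_Icc.2 hr) (right_mem_Icc.2 hr) hr
    simp only [u_self] at hend
    linarith
  set B := √(W + 1) + Y.b1 / 2 * (R₁ - x)
  have hr : R₁ ≤ R₁ + B ^ 2 + 1 := by nlinarith
  have hle := hlinear _ hr
  have hsq := Real.sq_sqrt (Y.u_nonneg hr)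
  have hpow : √(Y.u (R₁ + B ^ 2 + 1) R₁) ^ 2 ≤ B ^ 2 :=
    pow_le_pow_left₀ (Real.sqrt_nonneg _) (hsqrt R₁ _ (le_max_right R x) hr) 2
  linarith

lemma exists_u_eq (x : ℝ) {w : ℝ} (hw : 0 ≤ w) : ∃ r, x ≤ r ∧ Y.u r x = w := by
  obtain ⟨R, hxR, hR⟩ := Y.exists_lt_u x w
  obtain ⟨r, hr, hrw⟩ := intermediate_value_Icc hxR (Y.continuous_u_left x).continuousOn
    ⟨(Y.u_self x).trans_le hw, hR.le⟩
  exact ⟨r, hr.1, hrw⟩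

/-! ### The node sector -/

-- On the parabola `w = (b0 / 4)² x²` the upper slope exceeds that of the parabola, so an upper
-- curve that ends below the parabola stays below it.
lemma u_le_parabola (hr : 0 < r) (hr0 : r ≤ Y.r0) (hk : |Y.k1| * r < Y.b0 ^ 2 / 8)
    (hx : x ∈ Ioc 0 r) : Y.u r x ≤ (Y.b0 / 4) ^ 2 * x ^ 2 := by
  have hb0 := Y.b0_pos
  by_contra! hcon
  have hend := image_le_of_deriv_right_lt_deriv_boundary' (f := fun y => (Y.b0 / 4) ^ 2 * y ^ 2)
    (f' := fun y => (Y.b0 / 4) ^ 2 * (2 * y)) (by fun_prop)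
    (fun y _ => by simpa using ((hasDerivAt_pow 2 y).const_mul _).hasDerivWithinAt)
    hcon.le (Y.continuous_u r).continuousOn
    (fun y _ => (Y.hasDerivAt_u r y).hasDerivWithinAt) (fun y hy heq => ?_) (right_mem_Icc.2 hx.2)
  · simp only [u_self] at hend
    exact hend.not_gt (by positivity)
  · have hy0 : 0 < y := hx.1.trans_le hy.1
    have hsqrt : √(Y.u r y) = Y.b0 / 4 * y := by
      rw [← heq, ← mul_pow, Real.sqrt_sq (by positivity)]
    have hG := Y.isRate_Gp.mul_le y (by positivity : 0 ≤ Y.b0 / 4 * y)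
    have hK := Y.K_le y ⟨hy0.le, hy.2.le.trans hr0⟩
    have hky : Y.k1 * y ≤ |Y.k1| * r :=
      mul_le_mul (le_abs_self _) hy.2.le hy0.le (abs_nonneg _)
    rw [upper, hsqrt]
    nlinarith

lemma exists_pos_u_zero_eq_zero : ∃ r > 0, Y.u r 0 = 0 := by
  have hb0 := Y.b0_pos
  set r := min Y.r0 (Y.b0 ^ 2 / (16 * (|Y.k1| + 1)))
  have hr : 0 < r := lt_min Y.r0_pos (by positivity)
  have hk : |Y.k1| * r < Y.b0 ^ 2 / 8 := by
    have hle : r ≤ Y.b0 ^ 2 / (16 * (|Y.k1| + 1)) := min_le_right _ _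
    rw [le_div_iff₀ (by positivity)] at hle
    nlinarith [abs_nonneg Y.k1]
  refine ⟨r, hr, le_antisymm ?_ (Y.u_nonneg hr.le)⟩
  have hlim : Tendsto (fun x : ℝ => (Y.b0 / 4) ^ 2 * x ^ 2) (nhdsWithin 0 (Ioi 0)) (nhds 0) := by
    have hcont : Continuous fun x : ℝ => (Y.b0 / 4) ^ 2 * x ^ 2 := by fun_prop
    simpa using (hcont.tendsto 0).mono_left (nhdsWithin_le_nhds (s := Ioi 0))
  refine le_of_tendsto_of_tendsto
    (((Y.continuous_u r).tendsto 0).mono_left (nhdsWithin_le_nhds (s := Ioi 0))) hlim ?_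
  filter_upwards [Ioc_mem_nhdsGT hr] with x hx using Y.u_le_parabola hr (min_le_left _ _) hk hx

lemma exists_node_sector : ∃ σ > 0, ∀ r, 0 ≤ r → (Y.u r 0 = 0 ↔ r ≤ σ) := by
  obtain ⟨r₁, hr₁, hu₁⟩ := Y.exists_pos_u_zero_eq_zero
  obtain ⟨R, -, hR⟩ := Y.exists_lt_u 0 0
  set s := {r : ℝ | 0 ≤ r ∧ Y.u r 0 = 0}
  have hbdd : BddAbove s := ⟨R, fun r hr => le_of_not_gt fun hlt =>
    (hR.trans_le (Y.u_mono 0 hlt.le)).ne' hr.2⟩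
  have hclosed : IsClosed s :=
    isClosed_Ici.inter (isClosed_eq (Y.continuous_u_left 0) continuous_const)
  have hmem := hclosed.csSup_mem ⟨r₁, hr₁.le, hu₁⟩ hbdd
  refine ⟨sSup s, hr₁.trans_le (le_csSup hbdd ⟨hr₁.le, hu₁⟩),
    fun r hr => ⟨fun h => le_csSup hbdd ⟨hr, h⟩, fun h => ?_⟩⟩
  exact le_antisymm ((Y.u_mono 0 h).trans hmem.2.le) (Y.u_nonneg hr)

/-- The largest label of an upper curve through the origin: the curves `u r` with `0 ≤ r ≤ σ` are
those entering the node sector. -/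
def σ : ℝ := Y.exists_node_sector.choose

lemma σ_pos : 0 < Y.σ := Y.exists_node_sector.choose_spec.1

lemma u_zero_eq_zero_iff (h : 0 ≤ r) : Y.u r 0 = 0 ↔ r ≤ Y.σ :=
  Y.exists_node_sector.choose_spec.2 r h

lemma mem_node_sector_of_u_eq_u (hr : r < r') (hx : x ≤ r) (h : Y.u r x = Y.u r' x) :
    x ≤ 0 ∧ 0 ≤ r ∧ r' ≤ Y.σ := by
  by_contra hcon
  refine (Y.u_lt_u hr hx ?_).ne h
  rintro ⟨hx0, hr0, hu⟩
  exact hcon ⟨hx0, hr0, (Y.u_zero_eq_zero_iff (hr0.trans hr.le)).1 hu⟩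

lemma u_eq_u_of_mem_node_sector (h : r ∈ Icc 0 Y.σ) (h' : r' ∈ Icc 0 Y.σ) (hx : x ≤ 0) :
    Y.u r x = Y.u r' x := by
  refine (Y.isSolOn_u r x 0).eq_of_eq_right (Y.isSolOn_u r' x 0) Y.upper_mono hx ?_
  rw [(Y.u_zero_eq_zero_iff h.1).2 h.2, (Y.u_zero_eq_zero_iff h'.1).2 h'.2]

end FoldedSystem

/-! ### Lower curves -/

namespace FoldedSystem

section IsSolOn

variable {Y : FoldedSystem} {w w₁ w₂ : ℝ → ℝ} {a b : ℝ}

lemma strictAntiOn_of_isSolOn_lower (h : IsSolOn Y.lower w a b) : StrictAntiOn w (Icc a b) := by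
  have hanti : AntitoneOn (fun x => w x + Y.κ x) (Icc a b) :=
    antitoneOn_Icc_of_hasDerivAt_nonpos (h.1.add Y.continuous_κ.continuousOn)
      (fun t ht => (h.2 t ht).add (Y.hasDerivAt_κ t))
      fun t _ => by linarith [Y.lower_le_neg_K t (w t)]
  intro x hx y hy hxy
  have hle := hanti hx hy hxy.le
  have hlt := Y.strictMono_κ hxy
  simp only at hle
  linarith

lemma antitoneOn_sqrt_add_of_isSolOn_lower (h : IsSolOn Y.lower w a b)
    (hpos : ∀ t ∈ Ioo a b, 0 < w t) : AntitoneOn (fun x => √(w x) + Y.b0 / 2 * x) (Icc a b) := by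
  refine antitoneOn_Icc_of_hasDerivAt_nonpos
    (f' := fun t => Y.lower t (w t) / (2 * √(w t)) + Y.b0 / 2) (h.1.sqrt.add (by fun_prop))
    (fun t ht => ((h.2 t ht).sqrt (hpos t ht).ne').add ?_) fun t ht => ?_
  · simpa using (hasDerivAt_id t).const_mul (Y.b0 / 2)
  · have hsqrt : 0 < √(w t) := Real.sqrt_pos.2 (hpos t ht)
    have hG := Y.isRate_Gm.mul_le t hsqrt.le
    rw [← le_neg_iff_add_nonpos_right, div_le_iff₀ (by positivity), lower]
    linarith [Y.K_nonneg t]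

variable (Y) in
lemma neg_rate_div_sub_le (t : ℝ) {q₁ q₂ : ℝ} (hq₂ : 0 < q₂) (hq : q₂ ≤ q₁) :
    (-Y.Gm t q₂ - Y.K t) / (2 * q₂) - (-Y.Gm t q₁ - Y.K t) / (2 * q₁) ≤
      -(Y.L / 2) * (q₂ - q₁) := by
  have hq₁ := hq₂.trans_le hq
  have hsub := Y.Gm_subhomogeneous t q₁ q₂ hq₂.le hq
  have hK := mul_nonneg (Y.K_nonneg t) (sub_nonneg.2 hq)
  rw [← sub_nonneg]
  have heq : -(Y.L / 2) * (q₂ - q₁) -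
      ((-Y.Gm t q₂ - Y.K t) / (2 * q₂) - (-Y.Gm t q₁ - Y.K t) / (2 * q₁)) =
      ((Y.L * q₁ * q₂ * (q₁ - q₂) - (q₂ * Y.Gm t q₁ - q₁ * Y.Gm t q₂)) +
        Y.K t * (q₁ - q₂)) / (2 * q₁ * q₂) := by
    field_simp
    ring
  rw [heq]
  exact div_nonneg (by linarith) (by positivity)

lemma sqrt_sub_sqrt_mul_exp_le (h₁ : IsSolOn Y.lower w₁ a b) (h₂ : IsSolOn Y.lower w₂ a b)
    (hab : a ≤ b) (hpos : ∀ t ∈ Ioo a b, 0 < w₂ t) (ha : w₂ a ≤ w₁ a) :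
    (√(w₁ a) - √(w₂ a)) * Real.exp (-(Y.L / 2) * (b - a)) ≤ √(w₁ b) - √(w₂ b) := by
  have hle : ∀ t ∈ Ioo a b, w₂ t ≤ w₁ t := fun t ht =>
    (h₂.mono le_rfl ht.2.le).le_of_le_left (h₁.mono le_rfl ht.2.le) Y.lower_anti ht.1.le ha
  have key := le_mul_exp_of_hasDerivAt_le_mul (f := fun t => √(w₂ t) - √(w₁ t)) hab
    (h₂.1.sqrt.sub h₁.1.sqrt)
    (fun t ht => ((h₂.2 t ht).sqrt (hpos t ht).ne').sub
      ((h₁.2 t ht).sqrt ((hpos t ht).trans_le (hle t ht)).ne'))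
    fun t ht => Y.neg_rate_div_sub_le t (Real.sqrt_pos.2 (hpos t ht)) (Real.sqrt_le_sqrt (hle t ht))
  linarith

end IsSolOn

variable (Y : FoldedSystem)

lemma exists_lower_solution (x₀ w₀ : ℝ) :
    ∃ w : ℝ → ℝ, w x₀ = w₀ ∧ ∀ b, x₀ ≤ b → IsSolOn Y.lower w x₀ b :=
  exists_forall_isSolOn_right Y.continuous_lower Y.lower_anti x₀ w₀

/-- The lower curve issuing from `(x₀, w₀)` to the right. -/
def lo (x₀ w₀ : ℝ) : ℝ → ℝ := (Y.exists_lower_solution x₀ w₀).choose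

@[simp] lemma lo_self (x₀ w₀ : ℝ) : Y.lo x₀ w₀ x₀ = w₀ :=
  (Y.exists_lower_solution x₀ w₀).choose_spec.1

variable {x x' w w' s t r : ℝ}

lemma isSolOn_lo (w : ℝ) (h : x ≤ t) : IsSolOn Y.lower (Y.lo x w) x t :=
  (Y.exists_lower_solution x w).choose_spec.2 t h

lemma strictAntiOn_lo (x w : ℝ) : StrictAntiOn (Y.lo x w) (Ici x) := fun _ hy _ hz hyz =>
  strictAntiOn_of_isSolOn_lower (Y.isSolOn_lo w hz) ⟨hy, hyz.le⟩ ⟨hz, le_rfl⟩ hyz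

lemma lo_le (w : ℝ) (h : x ≤ t) : Y.lo x w t ≤ w :=
  ((Y.strictAntiOn_lo x w).antitoneOn self_mem_Ici h h).trans_eq (Y.lo_self x w)

lemma lo_eq_of_isSolOn {g : ℝ → ℝ} {a b : ℝ} (h : IsSolOn Y.lower g a b) (hab : a ≤ b) :
    Y.lo a (g a) b = g b :=
  (Y.isSolOn_lo (g a) hab).eq_of_eq_left h Y.lower_anti hab (Y.lo_self _ _)

lemma lo_lo (w : ℝ) (hxx' : x ≤ x') (hx't : x' ≤ t) : Y.lo x' (Y.lo x w x') t = Y.lo x w t :=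
  Y.lo_eq_of_isSolOn ((Y.isSolOn_lo w (hxx'.trans hx't)).mono hxx' le_rfl) hx't

lemma exists_lo_eq_zero (x : ℝ) (hw : 0 ≤ w) : ∃ s, x ≤ s ∧ Y.lo x w s = 0 := by
  have hb0 := Y.b0_pos
  set b := x + 2 * √w / Y.b0 + 1 with hb
  have hxb : x ≤ b := by
    have : 0 ≤ 2 * √w / Y.b0 := by positivity
    linarith
  have hsol := Y.isSolOn_lo w hxb
  have hend : Y.lo x w b ≤ 0 := by
    by_contra! hpos
    have hsqrt := antitoneOn_sqrt_add_of_isSolOn_lower hsol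
      (fun t ht => hpos.trans (Y.strictAntiOn_lo x w ht.1.le hxb ht.2))
      (left_mem_Icc.2 hxb) (right_mem_Icc.2 hxb) hxb
    have hbx : Y.b0 / 2 * b = Y.b0 / 2 * x + √w + Y.b0 / 2 := by
      rw [hb]
      field_simp
    simp only [lo_self] at hsqrt
    linarith [Real.sqrt_nonneg (Y.lo x w b)]
  obtain ⟨s, hs, hs0⟩ := intermediate_value_Icc' hxb hsol.1 ⟨hend, hw.trans_eq (Y.lo_self x w).symm⟩
  exact ⟨s, hs.1, hs0⟩

/-- The abscissa at which the lower curve through `(x, w)` meets `w = 0`; for `w < 0` it takes the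
junk value `S x 0 = x`, which makes `S` continuous on the plane. -/
def S (x w : ℝ) : ℝ := (Y.exists_lo_eq_zero x (le_max_right w 0)).choose

lemma S_max_zero (x w : ℝ) : Y.S x (max w 0) = Y.S x w := by
  simp only [S, max_eq_left (le_max_right w 0)]

lemma le_S (x w : ℝ) : x ≤ Y.S x w := (Y.exists_lo_eq_zero x (le_max_right w 0)).choose_spec.1

lemma lo_S (x : ℝ) (hw : 0 ≤ w) : Y.lo x w (Y.S x w) = 0 := by
  conv_lhs => rw [← max_eq_left hw, Y.S_max_zero]
  exact (Y.exists_lo_eq_zero x (le_max_right w 0)).choose_spec.2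

lemma lo_nonneg_iff (hw : 0 ≤ w) (hx : x ≤ t) : 0 ≤ Y.lo x w t ↔ t ≤ Y.S x w := by
  rw [← Y.lo_S x hw]
  exact (Y.strictAntiOn_lo x w).le_iff_ge (Y.le_S x w) hx

lemma lo_pos_iff (hw : 0 ≤ w) (hx : x ≤ t) : 0 < Y.lo x w t ↔ t < Y.S x w := by
  rw [← Y.lo_S x hw]
  exact (Y.strictAntiOn_lo x w).lt_iff_gt (Y.le_S x w) hx

lemma S_eq_of_lo_eq_zero (hw : 0 ≤ w) (hx : x ≤ t) (h : Y.lo x w t = 0) : Y.S x w = t :=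
  (Y.strictAntiOn_lo x w).injOn (Y.le_S x w) hx ((Y.lo_S x hw).trans h.symm)

@[simp] lemma S_zero (x : ℝ) : Y.S x 0 = x := Y.S_eq_of_lo_eq_zero le_rfl le_rfl (Y.lo_self x 0)

lemma S_lo (hw : 0 ≤ w) (hx : x ≤ t) (ht : t ≤ Y.S x w) : Y.S t (Y.lo x w t) = Y.S x w := by
  refine Y.S_eq_of_lo_eq_zero ((Y.lo_nonneg_iff hw hx).2 ht) ht ?_
  rw [Y.lo_lo w hx ht, Y.lo_S x hw]

lemma lo_of_S_le (hw : 0 ≤ w) (ht : Y.S x w ≤ t) : Y.lo x w t = Y.κ (Y.S x w) - Y.κ t := by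
  have hsol : IsSolOn Y.lower (fun y => Y.κ (Y.S x w) - Y.κ y) (Y.S x w) t := by
    refine ⟨(continuous_const.sub Y.continuous_κ).continuousOn, fun y hy => ?_⟩
    rw [Y.lower_of_nonpos y (sub_nonpos.2 (Y.strictMono_κ.monotone hy.1.le))]
    exact (Y.hasDerivAt_κ y).const_sub _
  have heq := Y.lo_eq_of_isSolOn hsol ht
  rwa [sub_self, ← Y.lo_S x hw, Y.lo_lo w (Y.le_S x w) ht] at heq

lemma abs_κ_S_sub_κ_S_le (hw : 0 ≤ w) (hw' : 0 ≤ w') (hx : x ≤ x') :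
    |Y.κ (Y.S x w) - Y.κ (Y.S x' w')| ≤ |Y.lo x w x' - w'| := by
  set b := max (Y.S x w) (Y.S x' w')
  have hb : x' ≤ b := (Y.le_S x' w').trans (le_max_right _ _)
  have key := ((Y.isSolOn_lo w (hx.trans hb)).mono hx le_rfl).abs_sub_le_left
    (Y.isSolOn_lo w' hb) Y.lower_anti hb
  rwa [Y.lo_of_S_le hw (le_max_left _ _), Y.lo_of_S_le hw' (le_max_right _ _), lo_self,
    sub_sub_sub_cancel_right] at key

lemma sub_le_lo (w : ℝ) {M : ℝ} (hx : x ≤ t) (hM : ∀ y ∈ Icc x t, Y.K y ≤ M) :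
    w - (Y.b1 * √w + M) * (t - x) ≤ Y.lo x w t := by
  have hsol := Y.isSolOn_lo w hx
  have hanti : AntitoneOn (fun y => -Y.lo x w y - (Y.b1 * √w + M) * y) (Icc x t) := by
    refine antitoneOn_Icc_of_hasDerivAt_nonpos
      (f' := fun y => -Y.lower y (Y.lo x w y) - (Y.b1 * √w + M)) (hsol.1.neg.sub (by fun_prop))
      (fun y hy => (hsol.2 y hy).neg.sub ?_) fun y hy => ?_
    · simpa using (hasDerivAt_id y).const_mul (Y.b1 * √w + M)
    · have hG := Y.isRate_Gm.le_mul y (Real.sqrt_nonneg (Y.lo x w y))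
      have hsqrt := mul_le_mul_of_nonneg_left (Real.sqrt_le_sqrt (Y.lo_le w hy.1.le)) Y.b1_pos.le
      have hK := hM y (Ioo_subset_Icc_self hy)
      simp only [lower]
      linarith
  have hle := hanti (left_mem_Icc.2 hx) (right_mem_Icc.2 hx) hx
  simp only [lo_self] at hle
  linarith

lemma abs_κ_S_sub_κ_S_le_of_K_le {M : ℝ} (hw : 0 ≤ w) (hw' : 0 ≤ w')
    (hM : ∀ t ∈ uIcc x x', Y.K t ≤ M) :
    |Y.κ (Y.S x w) - Y.κ (Y.S x' w')| ≤
      |w - w'| + (Y.b1 * (√w + √w') + M) * |x - x'| := by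
  wlog hx : x ≤ x' generalizing x x' w w' with H
  · rw [abs_sub_comm, abs_sub_comm w, abs_sub_comm x, add_comm √w]
    exact H hw' hw (by rwa [uIcc_comm]) (le_of_not_ge hx)
  rw [uIcc_of_le hx] at hM
  have hlower := Y.sub_le_lo w hx hM
  have hupper := Y.lo_le w hx
  have hextra : 0 ≤ Y.b1 * √w' * (x' - x) :=
    mul_nonneg (mul_nonneg Y.b1_pos.le (Real.sqrt_nonneg _)) (sub_nonneg.2 hx)
  calc |Y.κ (Y.S x w) - Y.κ (Y.S x' w')| ≤ |Y.lo x w x' - w'| := Y.abs_κ_S_sub_κ_S_le hw hw' hx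
    _ ≤ |Y.lo x w x' - w| + |w - w'| := abs_sub_le _ _ _
    _ ≤ |w - w'| + (Y.b1 * (√w + √w') + M) * |x - x'| := by
        rw [abs_of_nonpos (sub_nonpos.2 hupper), abs_of_nonpos (sub_nonpos.2 hx)]
        linarith

lemma continuous_κ_S : Continuous fun p : ℝ × ℝ => Y.κ (Y.S p.1 p.2) := by
  refine continuous_iff_continuousAt.2 fun ⟨x, w⟩ => ?_
  obtain ⟨M, hM⟩ := (isCompact_Icc (a := x - 1) (b := x + 1)).exists_bound_of_continuousOn
    Y.continuous_K.continuousOn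
  rw [ContinuousAt, tendsto_iff_dist_tendsto_zero]
  have hcont : Continuous fun p : ℝ × ℝ => |max p.2 0 - max w 0| +
      (Y.b1 * (√(max p.2 0) + √(max w 0)) + M) * |p.1 - x| := by fun_prop
  have hlim := hcont.tendsto (x, w)
  simp only [sub_self, abs_zero, mul_zero, add_zero] at hlim
  refine squeeze_zero' (Eventually.of_forall fun _ => dist_nonneg) ?_ hlim
  filter_upwards [continuous_fst.continuousAt.preimage_mem_nhds
    (Icc_mem_nhds (sub_one_lt x) (lt_add_one x))] with p hp
  rw [Real.dist_eq, ← Y.S_max_zero p.1, ← Y.S_max_zero x]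
  refine Y.abs_κ_S_sub_κ_S_le_of_K_le (le_max_right _ _) (le_max_right _ _) fun t ht => ?_
  exact (le_abs_self _).trans (hM t (uIcc_subset_Icc hp ⟨by simp, by simp⟩ ht))

lemma continuous_S : Continuous fun p : ℝ × ℝ => Y.S p.1 p.2 := by
  refine continuous_iff_continuousAt.2 fun p => tendsto_order.2 ⟨fun a ha => ?_, fun a ha => ?_⟩
  · filter_upwards [(tendsto_order.1 (Y.continuous_κ_S.tendsto p)).1 _
      (Y.strictMono_κ ha)] with q hq
      using Y.strictMono_κ.lt_iff_lt.1 hq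
  · filter_upwards [(tendsto_order.1 (Y.continuous_κ_S.tendsto p)).2 _
      (Y.strictMono_κ ha)] with q hq
      using Y.strictMono_κ.lt_iff_lt.1 hq

lemma strictMonoOn_S (x : ℝ) : StrictMonoOn (Y.S x) (Ici 0) := by
  intro w₂ h₂ w₁ h₁ hlt
  have hx := Y.le_S x w₂
  have key := sqrt_sub_sqrt_mul_exp_le (Y.isSolOn_lo w₁ hx) (Y.isSolOn_lo w₂ hx) hx
    (fun t ht => (Y.lo_pos_iff h₂ ht.1.le).2 ht.2) (by simpa using hlt.le)
  rw [lo_self, lo_self, Y.lo_S x h₂, Real.sqrt_zero, sub_zero] at key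
  have hpos := mul_pos (sub_pos.2 (Real.sqrt_lt_sqrt h₂ hlt))
    (Real.exp_pos (-(Y.L / 2) * (Y.S x w₂ - x)))
  exact (Y.lo_pos_iff h₁ hx).1 (Real.sqrt_pos.1 (hpos.trans_le key))

lemma lo_eq_of_S_eq (hw : 0 ≤ w) (hw' : 0 ≤ w') (hx : x ≤ x') (h : Y.S x w = Y.S x' w') :
    Y.lo x w x' = w' := by
  have hx'S : x' ≤ Y.S x w := h ▸ Y.le_S x' w'
  exact (Y.strictMonoOn_S x').injOn ((Y.lo_nonneg_iff hw hx).2 hx'S) hw'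
    ((Y.S_lo hw hx hx'S).trans h)

/-! ### Lower curves crossing an upper curve -/

lemma antitoneOn_lo_sub_u (x w r t : ℝ) :
    AntitoneOn (fun y => Y.lo x w y - Y.u r y) (Icc x t) := by
  rcases lt_or_ge t x with ht | ht
  · rw [Icc_eq_empty ht.not_ge]
    exact fun _ h => h.elim
  have hsol := Y.isSolOn_lo w ht
  exact antitoneOn_Icc_of_hasDerivAt_nonpos (hsol.1.sub (Y.continuous_u r).continuousOn)
    (fun y hy => (hsol.2 y hy).sub (Y.hasDerivAt_u r y))
    fun y _ => by linarith [Y.lower_le_neg_K y (Y.lo x w y), Y.neg_K_le_upper y (Y.u r y)]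

lemma u_eq_zero_of_lower_eq_upper (hx : x ≤ r) (h : Y.lower x w = Y.upper x (Y.u r x)) :
    Y.u r x = 0 := by
  have hG := Y.isRate_Gp.mul_le x (Real.sqrt_nonneg (Y.u r x))
  have hlow := Y.lower_le_neg_K x w
  rw [h, upper] at hlow
  have hmul : Y.b0 * √(Y.u r x) ≤ 0 := by linarith
  exact (Real.sqrt_eq_zero (Y.u_nonneg hx)).1 <| (Real.sqrt_nonneg _).antisymm'
    (nonpos_of_mul_nonpos_right hmul Y.b0_pos)

lemma lo_u_lt_u (hx : x < x') (hr : x' ≤ r) : Y.lo x (Y.u r x) x' < Y.u r x' := by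
  have hanti := Y.antitoneOn_lo_sub_u x (Y.u r x) r x'
  have hle := hanti (left_mem_Icc.2 hx.le) (right_mem_Icc.2 hx.le) hx.le
  simp only [lo_self, sub_self] at hle
  refine (sub_nonpos.1 hle).lt_of_ne fun heq => ?_
  have hconst : ∀ t ∈ Icc x x', Y.lo x (Y.u r x) t - Y.u r t = 0 := fun t ht => by
    have h₁ := hanti (left_mem_Icc.2 hx.le) ht ht.1
    have h₂ := hanti ht (right_mem_Icc.2 hx.le) ht.2
    simp only [lo_self, sub_self, heq] at h₁ h₂
    exact le_antisymm h₁ h₂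
  have hzero : ∀ t ∈ Ioo x x', t = 0 := fun t ht => by
    have hd : HasDerivAt (fun t => Y.lo x (Y.u r x) t - Y.u r t) 0 t := by
      refine (hasDerivAt_const t (0 : ℝ)).congr_of_eventuallyEq ?_
      filter_upwards [Ioo_mem_nhds ht.1 ht.2] with y hy using hconst y (Ioo_subset_Icc_self hy)
    have hslope := hd.unique (((Y.isSolOn_lo _ hx.le).2 t ht).sub (Y.hasDerivAt_u r t))
    exact Y.eq_zero_of_u_eq_zero (ht.2.trans_le hr)
      (Y.u_eq_zero_of_lower_eq_upper (ht.2.le.trans hr) (sub_eq_zero.1 hslope.symm))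
  have h₁ := hzero ((2 * x + x') / 3) ⟨by linarith, by linarith⟩
  have h₂ := hzero ((x + 2 * x') / 3) ⟨by linarith, by linarith⟩
  linarith

lemma strictMonoOn_S_u (r : ℝ) : StrictMonoOn (fun x => Y.S x (Y.u r x)) (Iic r) := by
  intro x hxr x' hx'r hx
  have hu := Y.u_nonneg hxr
  rcases lt_or_ge (Y.S x (Y.u r x)) x' with h | h
  · exact h.trans_le (Y.le_S _ _)
  · simp only
    rw [← Y.S_lo hu hx.le h]
    exact Y.strictMonoOn_S x' ((Y.lo_nonneg_iff hu hx.le).2 h) (Y.u_nonneg hx'r)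
      (Y.lo_u_lt_u hx hx'r)

lemma S_u_le (hx : x ≤ r) : Y.S x (Y.u r x) ≤ r := by
  simpa using (Y.strictMonoOn_S_u r).monotoneOn hx self_mem_Iic hx

lemma sq_le_u_of_le_S_u (hxs : x ≤ s) (hsr : s ≤ r) (hs : s ≤ Y.S x (Y.u r x)) :
    (Y.b0 / 2 * (s - x)) ^ 2 ≤ Y.u r s := by
  have hu := Y.u_nonneg (hxs.trans hsr)
  set g := Y.lo x (Y.u r x)
  have hsol : IsSolOn Y.lower g x s := Y.isSolOn_lo _ hxs
  have hsqrt := antitoneOn_sqrt_add_of_isSolOn_lower hsol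
    fun t ht => (Y.lo_pos_iff hu ht.1.le).2 (ht.2.trans_le hs)
  have hanti : AntitoneOn (fun t => g t - Y.u r t - (Y.b0 / 2 * (s - t)) ^ 2) (Icc x s) := by
    refine antitoneOn_Icc_of_hasDerivAt_nonpos
      (f' := fun t => Y.lower t (g t) - Y.upper t (Y.u r t) + Y.b0 ^ 2 / 2 * (s - t))
      ((hsol.1.sub (Y.continuous_u r).continuousOn).sub (by fun_prop)) (fun t ht => ?_)
      fun t ht => ?_
    · have hsq := (((hasDerivAt_id t).const_sub s).const_mul (Y.b0 / 2)).pow 2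
      refine (((hsol.2 t ht).sub (Y.hasDerivAt_u r t)).sub hsq).congr_deriv ?_
      simp only [id]
      ring
    · have hG := Y.isRate_Gm.mul_le t (Real.sqrt_nonneg (g t))
      have hup := Y.neg_K_le_upper t (Y.u r t)
      have hdist := hsqrt (Ioo_subset_Icc_self ht) (right_mem_Icc.2 hxs) ht.2.le
      have hmul : Y.b0 * (Y.b0 / 2 * (s - t)) ≤ Y.b0 * √(g t) := by
        refine mul_le_mul_of_nonneg_left ?_ Y.b0_pos.le
        simp only at hdist
        linarith [Real.sqrt_nonneg (g s)]
      simp only [lower]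
      linarith
  have hend := hanti (left_mem_Icc.2 hxs) (right_mem_Icc.2 hxs) hxs
  have hgx : g x = Y.u r x := Y.lo_self _ _
  have hgs : 0 ≤ g s := (Y.lo_nonneg_iff hu hxs).2 hs
  simp only [hgx, sub_self, mul_zero] at hend
  linarith

lemma exists_S_u_eq (h : s ≤ r) : ∃ x ≤ s, Y.S x (Y.u r x) = s := by
  have hb0 := Y.b0_pos
  set x₀ := s - 2 / Y.b0 * (√(Y.u r s) + 1) with hx₀
  have hx₀s : x₀ ≤ s := sub_le_self _ (by positivity)
  have hlow : Y.S x₀ (Y.u r x₀) ≤ s := by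
    by_contra! hcon
    have hle := Y.sq_le_u_of_le_S_u hx₀s h hcon.le
    have heq : Y.b0 / 2 * (s - x₀) = √(Y.u r s) + 1 := by
      rw [hx₀]
      field_simp
      ring
    rw [heq] at hle
    linarith [Real.sq_sqrt (Y.u_nonneg h), Real.sqrt_nonneg (Y.u r s)]
  have hcont : Continuous fun x => Y.S x (Y.u r x) :=
    Y.continuous_S.comp (continuous_id.prodMk (Y.continuous_u r))
  obtain ⟨x, hx, hxs⟩ := intermediate_value_Icc hx₀s hcont.continuousOn ⟨hlow, Y.le_S _ _⟩
  exact ⟨x, hx.2, hxs⟩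

end FoldedSystem

/-! ### The homeomorphism matching the leaves of two systems -/

lemma continuousWithinAt_of_isClosed_of_unique {α β γ : Type*} [TopologicalSpace α]
    [TopologicalSpace β] [TopologicalSpace γ] {C : Set (α × β × γ)} (hC : IsClosed C)
    {k : Set (β × γ)} (hk : IsCompact k) {s : Set α} {x : α} {f : α → β} {g : α → γ}
    (hfg : ∀ y ∈ s, (y, f y, g y) ∈ C) (hmem : ∀ᶠ y in nhdsWithin x s, (f y, g y) ∈ k)
    (hunique : ∀ b c, (x, b, c) ∈ C → b = f x) : ContinuousWithinAt f s x := by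
  refine (tendsto_iff_ultrafilter _ _ _).2 fun U hU => ?_
  obtain ⟨⟨b, c⟩, -, hlim⟩ := hk.ultrafilter_le_nhds (U.map fun y => (f y, g y))
    (le_principal_iff.2 (hU hmem))
  have hbc : Tendsto (fun y => (f y, g y)) U (nhds (b, c)) := hlim
  have hx : Tendsto (fun y => y) (U : Filter α) (nhds x) := hU.trans nhdsWithin_le_nhds
  have hmemC : (x, b, c) ∈ C :=
    hC.mem_of_tendsto (hx.prodMk_nhds hbc) (mem_of_superset (hU self_mem_nhdsWithin) hfg)
  rw [← hunique b c hmemC]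
  exact (continuous_fst.tendsto (b, c)).comp hbc

namespace FoldedSystem

section Leaves

variable (Y : FoldedSystem) {r R s₀ : ℝ} {P Q : ℝ × ℝ}

/-- The part over `w ≥ 0` of the solution `u r` of the upper equation. -/
def upperLeaf (r : ℝ) : Set (ℝ × ℝ) := {P | P.1 ≤ r ∧ P.2 = Y.u r P.1}

/-- The part over `w ≥ 0` of the solution of the lower equation that reaches `w = 0` at `s`. -/
def lowerLeaf (s : ℝ) : Set (ℝ × ℝ) := {P | 0 ≤ P.2 ∧ Y.S P.1 P.2 = s}

variable {Y}

lemma snd_nonneg_of_mem_upperLeaf (h : P ∈ Y.upperLeaf r) : 0 ≤ P.2 := by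
  rw [h.2]; exact Y.u_nonneg h.1

lemma S_le_of_mem_upperLeaf (h : P ∈ Y.upperLeaf r) : Y.S P.1 P.2 ≤ r := by
  rw [h.2]; exact Y.S_u_le h.1

lemma eq_of_mem_upperLeaf_of_S_eq (hP : P ∈ Y.upperLeaf r) (hQ : Q ∈ Y.upperLeaf r)
    (hS : Y.S P.1 P.2 = Y.S Q.1 Q.2) : P = Q := by
  rw [hP.2, hQ.2] at hS
  have hfst : P.1 = Q.1 := (Y.strictMonoOn_S_u r).injOn hP.1 hQ.1 hS
  exact Prod.ext hfst (by rw [hP.2, hQ.2, hfst])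

variable (Y) in
lemma exists_mem_upperLeaf (h : 0 ≤ P.2) : ∃ r, P ∈ Y.upperLeaf r := by
  obtain ⟨r, hr, hu⟩ := Y.exists_u_eq P.1 h
  exact ⟨r, hr, hu.symm⟩

variable (Y) in
lemma mk_zero_mem_upperLeaf (x : ℝ) : (x, 0) ∈ Y.upperLeaf x := ⟨le_rfl, (Y.u_self x).symm⟩

variable (Y) in
lemma isClosed_setOf_mem_upperLeaf : IsClosed {p : (ℝ × ℝ) × ℝ | p.1 ∈ Y.upperLeaf p.2} :=
  (isClosed_le (continuous_fst.comp continuous_fst) continuous_snd).inter <|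
    isClosed_eq (continuous_snd.comp continuous_fst) <|
      Y.continuous_uncurry_u.comp (continuous_snd.prodMk (continuous_fst.comp continuous_fst))

lemma sub_le_fst_of_mem_upperLeaf (hQ : Q ∈ Y.upperLeaf r) (hr : r ≤ R)
    (hs : s₀ ≤ Y.S Q.1 Q.2) : s₀ - 2 / Y.b0 * (Y.u R s₀ + 1) ≤ Q.1 := by
  have hb := Y.b0_pos
  have hsR : s₀ ≤ r := hs.trans (S_le_of_mem_upperLeaf hQ)
  have hu : Y.u r s₀ ≤ Y.u R s₀ := Y.u_mono s₀ hr
  have hu0 : 0 ≤ Y.u r s₀ := Y.u_nonneg hsR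
  have hgap : Y.b0 / 2 * (s₀ - Q.1) ≤ Y.u R s₀ + 1 := by
    rcases le_total s₀ Q.1 with h | h
    · nlinarith
    · have hsq := Y.sq_le_u_of_le_S_u h hsR (by rwa [← hQ.2])
      nlinarith [sq_nonneg (Y.b0 / 2 * (s₀ - Q.1) - 1)]
  have hscale : 2 / Y.b0 * (Y.b0 / 2 * (s₀ - Q.1)) = s₀ - Q.1 := by field_simp
  have := mul_le_mul_of_nonneg_left hgap (by positivity : 0 ≤ 2 / Y.b0)
  linarith

variable (Y) in
lemma exists_isCompact_forall_mem_upperLeaf (R s₀ : ℝ) :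
    ∃ k, IsCompact k ∧ ∀ r ≤ R, ∀ Q ∈ Y.upperLeaf r, s₀ ≤ Y.S Q.1 Q.2 → Q ∈ k := by
  set x₀ := s₀ - 2 / Y.b0 * (Y.u R s₀ + 1)
  obtain ⟨B, hB⟩ := (isCompact_Icc (a := x₀) (b := R)).exists_bound_of_continuousOn
    (Y.continuous_u R).continuousOn
  refine ⟨Icc x₀ R ×ˢ Icc 0 B, isCompact_Icc.prod isCompact_Icc, fun r hr Q hQ hs => ?_⟩
  have hfst : Q.1 ∈ Icc x₀ R := ⟨sub_le_fst_of_mem_upperLeaf hQ hr hs, hQ.1.trans hr⟩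
  refine ⟨hfst, snd_nonneg_of_mem_upperLeaf hQ, ?_⟩
  rw [hQ.2]
  exact (Y.u_mono _ hr).trans ((le_abs_self _).trans (hB _ hfst))

variable (Y) in
lemma exists_eventually_forall_mem_upperLeaf_le (P : ℝ × ℝ) :
    ∃ R, ∀ᶠ P' in nhds P, ∀ r, P' ∈ Y.upperLeaf r → r ≤ R := by
  obtain ⟨R, -, hR⟩ := Y.exists_lt_u P.1 P.2
  have hlt : ∀ᶠ P' : ℝ × ℝ in nhds P, P'.2 < Y.u R P'.1 :=
    continuous_snd.continuousAt.eventually_lt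
      ((Y.continuous_u R).comp continuous_fst).continuousAt hR
  refine ⟨R, hlt.mono fun P' hP' r hr => le_of_not_gt fun hRr => hP'.not_ge ?_⟩
  rw [hr.2]
  exact Y.u_mono _ hRr.le

end Leaves

section Matching

variable {Y Z : FoldedSystem} {φ : ℝ ≃o ℝ} {P Q Q' : ℝ × ℝ}

/-- The points `P` and `Q` correspond when their upper and lower leaves do, the labels of the leaves
being translated by `φ`. -/
def Matches (Y Z : FoldedSystem) (φ : ℝ ≃o ℝ) (P Q : ℝ × ℝ) : Prop :=
  ∃ r, P ∈ Y.upperLeaf r ∧ Q ∈ Z.upperLeaf (φ r) ∧ Z.S Q.1 Q.2 = φ (Y.S P.1 P.2)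

/-- An increasing change of leaf labels that carries the node sector `[0, σ]` of `Y` to that of
`Z`. -/
structure IsRelabelling (Y Z : FoldedSystem) (φ : ℝ ≃o ℝ) : Prop where
  map_zero : φ 0 = 0
  map_σ : φ Y.σ = Z.σ

lemma IsRelabelling.symm (h : IsRelabelling Y Z φ) : IsRelabelling Z Y φ.symm :=
  ⟨by rw [OrderIso.symm_apply_eq, h.map_zero], by rw [OrderIso.symm_apply_eq, h.map_σ]⟩

lemma IsRelabelling.apply_mem_Icc (h : IsRelabelling Y Z φ) {r : ℝ} (hr : r ∈ Icc 0 Y.σ) :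
    φ r ∈ Icc 0 Z.σ :=
  ⟨h.map_zero ▸ φ.monotone hr.1, h.map_σ ▸ φ.monotone hr.2⟩

variable (Y Z) in
lemma exists_isRelabelling : ∃ φ, IsRelabelling Y Z φ := by
  have hc : 0 < Z.σ / Y.σ := div_pos Z.σ_pos Y.σ_pos
  let f : ℝ → ℝ := fun s => if s ≤ 0 then s else Z.σ / Y.σ * s
  have hmono : StrictMono f :=
    strictMono_id.ite' (strictMono_mul_left_of_pos hc) (fun _ _ h hy => h.le.trans hy)
      fun _ _ hx hy _ => lt_of_le_of_lt hx (mul_pos hc (not_le.1 hy))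
  have hsurj : Function.Surjective f := by
    intro y
    rcases le_or_gt y 0 with hy | hy
    · exact ⟨y, if_pos hy⟩
    · refine ⟨y / (Z.σ / Y.σ), ?_⟩
      rw [show f _ = _ from if_neg (not_le.2 (div_pos hy hc)), mul_div_cancel₀ _ hc.ne']
  refine ⟨hmono.orderIsoOfSurjective f hsurj, if_pos le_rfl, ?_⟩
  exact (if_neg (not_le.2 Y.σ_pos)).trans (div_mul_cancel₀ _ Y.σ_pos.ne')

lemma Matches.symm (h : Matches Y Z φ P Q) : Matches Z Y φ.symm Q P := by
  obtain ⟨r, hP, hQ, hS⟩ := h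
  exact ⟨φ r, hQ, by rwa [φ.symm_apply_apply], by rw [hS, φ.symm_apply_apply]⟩

variable (Y Z φ) in
lemma exists_matches (h : 0 ≤ P.2) : ∃ Q, Matches Y Z φ P Q := by
  obtain ⟨r, hr⟩ := Y.exists_mem_upperLeaf h
  have hle := φ.monotone (S_le_of_mem_upperLeaf hr)
  obtain ⟨x, hx, hS⟩ := Z.exists_S_u_eq hle
  exact ⟨(x, Z.u (φ r) x), r, hr, ⟨hx.trans hle, rfl⟩, hS⟩

variable (Y Z φ) in
lemma matches_mk_zero (x : ℝ) : Matches Y Z φ (x, 0) (φ x, 0) :=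
  ⟨x, Y.mk_zero_mem_upperLeaf x, Z.mk_zero_mem_upperLeaf (φ x), by simp⟩

/- Two upper leaves through `P` coincide left of the node and have labels in the node sector; the
same then holds for the leaves with the translated labels. -/
lemma Matches.unique (hφ : IsRelabelling Y Z φ) (h : Matches Y Z φ P Q)
    (h' : Matches Y Z φ P Q') : Q = Q' := by
  obtain ⟨r, hP, hQ, hS⟩ := h
  obtain ⟨r', hP', hQ', hS'⟩ := h'
  wlog hr : r ≤ r' generalizing r r' Q Q' with H
  · exact (H r' hP' hQ' hS' r hP hQ hS (le_of_not_ge hr)).symm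
  suffices hmem : Q' ∈ Z.upperLeaf (φ r) from
    eq_of_mem_upperLeaf_of_S_eq hQ hmem (hS.trans hS'.symm)
  rcases hr.eq_or_lt with rfl | hlt
  · exact hQ'
  obtain ⟨hx, hr0, hr'σ⟩ := Y.mem_node_sector_of_u_eq_u hlt hP.1 (hP.2.symm.trans hP'.2)
  have hSP : Y.S P.1 P.2 ≤ 0 := by
    have := (Y.strictMonoOn_S_u r).monotoneOn hP.1 hr0 hx
    simpa only [← hP.2, (Y.u_zero_eq_zero_iff hr0).2 (hr.trans hr'σ), S_zero] using this
  have hQ'x : Q'.1 ≤ 0 :=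
    (Z.le_S _ _).trans (hS'.trans_le (hφ.map_zero ▸ φ.monotone hSP))
  have hφr := hφ.apply_mem_Icc ⟨hr0, hr.trans hr'σ⟩
  refine ⟨hQ'x.trans hφr.1, ?_⟩
  rw [hQ'.2]
  exact Z.u_eq_u_of_mem_node_sector (hφ.apply_mem_Icc ⟨hr0.trans hr, hr'σ⟩) hφr hQ'x

open Classical in
/-- The map sending a point over `w ≥ 0` to the point it matches; below `w = 0`, where no leaves
pass, only the first coordinate is relabelled. -/
def leafMap (Y Z : FoldedSystem) (φ : ℝ ≃o ℝ) (P : ℝ × ℝ) : ℝ × ℝ :=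
  if h : 0 ≤ P.2 then (exists_matches Y Z φ h).choose else (φ P.1, P.2)

lemma matches_leafMap (h : 0 ≤ P.2) : Matches Y Z φ P (leafMap Y Z φ P) := by
  rw [leafMap, dif_pos h]
  exact (exists_matches Y Z φ h).choose_spec

lemma leafMap_of_neg (h : P.2 < 0) : leafMap Y Z φ P = (φ P.1, P.2) := dif_neg (not_le.2 h)

lemma Matches.leafMap_eq (hφ : IsRelabelling Y Z φ) (h : Matches Y Z φ P Q) :
    leafMap Y Z φ P = Q := by
  have hP : 0 ≤ P.2 := by obtain ⟨r, hr, -⟩ := h; exact snd_nonneg_of_mem_upperLeaf hr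
  exact (matches_leafMap hP).unique hφ h

lemma leafMap_mk_zero (hφ : IsRelabelling Y Z φ) (x : ℝ) : leafMap Y Z φ (x, 0) = (φ x, 0) :=
  (matches_mk_zero Y Z φ x).leafMap_eq hφ

lemma isClosed_setOf_matching_label :
    IsClosed {p : (ℝ × ℝ) × (ℝ × ℝ) × ℝ | p.1 ∈ Y.upperLeaf p.2.2 ∧
      p.2.1 ∈ Z.upperLeaf (φ p.2.2) ∧ Z.S p.2.1.1 p.2.1.2 = φ (Y.S p.1.1 p.1.2)} := by
  have hφ := φ.continuous
  refine .inter ?_ (.inter ?_ (isClosed_eq ?_ ?_))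
  · exact Y.isClosed_setOf_mem_upperLeaf.preimage
      (by fun_prop : Continuous fun p : (ℝ × ℝ) × (ℝ × ℝ) × ℝ => (p.1, p.2.2))
  · exact Z.isClosed_setOf_mem_upperLeaf.preimage
      (by fun_prop : Continuous fun p : (ℝ × ℝ) × (ℝ × ℝ) × ℝ => (p.2.1, φ p.2.2))
  · exact Z.continuous_S.comp (continuous_fst.comp continuous_snd)
  · exact hφ.comp (Y.continuous_S.comp continuous_fst)

lemma continuousOn_leafMap (hφ : IsRelabelling Y Z φ) :
    ContinuousOn (leafMap Y Z φ) {P | 0 ≤ P.2} := by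
  intro P _
  choose! r hrP hrQ hrS using
    fun (P : ℝ × ℝ) (h : 0 ≤ P.2) => matches_leafMap (Y := Y) (Z := Z) (φ := φ) h
  obtain ⟨R, hR⟩ := Y.exists_eventually_forall_mem_upperLeaf_le P
  obtain ⟨k, hk, hmem⟩ := Z.exists_isCompact_forall_mem_upperLeaf (φ R) (φ (P.1 - 1))
  refine continuousWithinAt_of_isClosed_of_unique (g := r)
    (isClosed_setOf_matching_label (Y := Y) (Z := Z) (φ := φ))
    (hk.prod (isCompact_Icc (a := P.1 - 1) (b := R)))
    (fun P' hP' => ⟨hrP P' hP', hrQ P' hP', hrS P' hP'⟩) ?_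
    fun Q r' h => (Matches.leafMap_eq hφ ⟨r', h⟩).symm
  have hfst : ∀ᶠ P' : ℝ × ℝ in nhds P, P.1 - 1 < P'.1 :=
    continuous_fst.continuousAt.eventually_const_lt (by simp)
  filter_upwards [self_mem_nhdsWithin, nhdsWithin_le_nhds hR, nhdsWithin_le_nhds hfst]
    with P' hP' hR' hx'
  have hr := hR' _ (hrP P' hP')
  have hS : P.1 - 1 ≤ Y.S P'.1 P'.2 := hx'.le.trans (Y.le_S _ _)
  refine ⟨hmem _ (φ.monotone hr) _ (hrQ P' hP') ?_, hx'.le.trans (hrP P' hP').1, hr⟩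
  rw [hrS P' hP']
  exact φ.monotone hS

lemma continuous_leafMap (hφ : IsRelabelling Y Z φ) : Continuous (leafMap Y Z φ) := by
  have hbelow : ContinuousOn (leafMap Y Z φ) {P | P.2 ≤ 0} := by
    have hlin : Continuous fun P : ℝ × ℝ => (φ P.1, P.2) :=
      (φ.continuous.comp continuous_fst).prodMk continuous_snd
    refine hlin.continuousOn.congr fun P hP => ?_
    rcases (show P.2 ≤ 0 from hP).lt_or_eq with h | h
    · exact leafMap_of_neg h
    · obtain ⟨x, w⟩ := P
      obtain rfl : w = 0 := h
      exact leafMap_mk_zero hφ x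
  have hunion : {P : ℝ × ℝ | 0 ≤ P.2} ∪ {P | P.2 ≤ 0} = univ :=
    eq_univ_of_forall fun P => le_total 0 P.2
  rw [← continuousOn_univ, ← hunion]
  exact (continuousOn_leafMap hφ).union_of_isClosed hbelow
    (isClosed_le continuous_const continuous_snd) (isClosed_le continuous_snd continuous_const)

lemma leafMap_symm_leafMap (hφ : IsRelabelling Y Z φ) (P : ℝ × ℝ) :
    leafMap Z Y φ.symm (leafMap Y Z φ P) = P := by
  rcases le_or_gt 0 P.2 with h | h
  · exact (matches_leafMap h).symm.leafMap_eq hφ.symm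
  · rw [leafMap_of_neg h, leafMap_of_neg (P := (φ P.1, P.2)) h, φ.symm_apply_apply]

/-- The map matching the leaves of two systems, as a homeomorphism of the plane. -/
def leafHomeo (hφ : IsRelabelling Y Z φ) : (ℝ × ℝ) ≃ₜ (ℝ × ℝ) where
  toFun := leafMap Y Z φ
  invFun := leafMap Z Y φ.symm
  left_inv := leafMap_symm_leafMap hφ
  right_inv := leafMap_symm_leafMap hφ.symm
  continuous_toFun := continuous_leafMap hφ
  continuous_invFun := continuous_leafMap hφ.symm

end Matching

end FoldedSystem

/-! ### Plane curves as graphs -/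

section Graphs

variable {ξ η : ℝ → ℝ} {c d : ℝ}

lemma nhds_le_map_of_continuousOn_of_injOn (hξ : ContinuousOn ξ (Ioo c d))
    (hinj : InjOn ξ (Ioo c d)) {x : ℝ} (hx : x ∈ Ioo c d) : nhds (ξ x) ≤ map ξ (nhds x) := by
  intro V hV
  obtain ⟨a, b, hxab, hab⟩ := mem_nhds_iff_exists_Ioo_subset.1
    (inter_mem hV (Ioo_mem_nhds hx.1 hx.2))
  obtain ⟨a', ha'⟩ := exists_between hxab.1
  obtain ⟨b', hb'⟩ := exists_between hxab.2
  have hIcc : Icc a' b' ⊆ Ioo a b := fun t ht => ⟨ha'.1.trans_le ht.1, ht.2.trans_lt hb'.2⟩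
  have hIcd : Icc a' b' ⊆ Ioo c d := fun t ht => (hab (hIcc ht)).2
  have hab' : a' ≤ b' := (ha'.2.trans hb'.1).le
  have hx' : x ∈ Icc a' b' := ⟨ha'.2.le, hb'.1.le⟩
  have hsub : ξ '' Ioo a' b' ⊆ V := by
    rintro _ ⟨t, ht, rfl⟩
    exact (hab (hIcc (Ioo_subset_Icc_self ht))).1
  rcases (hξ.mono hIcd).strictMonoOn_of_injOn_Icc' hab' (hinj.mono hIcd) with h | h
  · exact mem_of_superset (Ioo_mem_nhds (h (left_mem_Icc.2 hab') hx' ha'.2)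
      (h hx' (right_mem_Icc.2 hab') hb'.1))
      ((intermediate_value_Ioo hab' (hξ.mono hIcd)).trans hsub)
  · exact mem_of_superset (Ioo_mem_nhds (h hx' (right_mem_Icc.2 hab') hb'.1)
      (h (left_mem_Icc.2 hab') hx' ha'.2))
      ((intermediate_value_Ioo' hab' (hξ.mono hIcd)).trans hsub)

lemma exists_image_Ioo_eq_Ioo (hcd : c < d) (hξ : ContinuousOn ξ (Ioo c d))
    (hinj : InjOn ξ (Ioo c d)) (hb : Bornology.IsBounded (ξ '' Ioo c d)) :
    ∃ a b, a < b ∧ ξ '' Ioo c d = Ioo a b := by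
  have hopen : ∀ y ∈ ξ '' Ioo c d, ξ '' Ioo c d ∈ nhds y := by
    rintro _ ⟨x, hx, rfl⟩
    exact nhds_le_map_of_continuousOn_of_injOn hξ hinj hx (image_mem_map (Ioo_mem_nhds hx.1 hx.2))
  have hconn : IsConnected (ξ '' Ioo c d) := (isConnected_Ioo hcd).image ξ hξ
  have heq : ξ '' Ioo c d = Ioo (sInf (ξ '' Ioo c d)) (sSup (ξ '' Ioo c d)) := by
    refine Subset.antisymm (fun y hy => ?_)
      (hconn.Ioo_csInf_csSup_subset hb.bddBelow hb.bddAbove)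
    obtain ⟨a, b, hyab, hab⟩ := mem_nhds_iff_exists_Ioo_subset.1 (hopen y hy)
    obtain ⟨a', ha'⟩ := exists_between hyab.1
    obtain ⟨b', hb'⟩ := exists_between hyab.2
    exact ⟨(csInf_le hb.bddBelow (hab ⟨ha'.1, ha'.2.trans hyab.2⟩)).trans_lt ha'.2,
      hb'.1.trans_le (le_csSup hb.bddAbove (hab ⟨hyab.1.trans hb'.1, hb'.2⟩))⟩
  obtain ⟨y, hy⟩ := hconn.nonempty
  rw [heq] at hy
  exact ⟨_, _, hy.1.trans hy.2, heq⟩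

lemma exists_graphOn_eq_image (hcd : c < d) (hξ : ContinuousOn ξ (Ioo c d))
    (hη : ContinuousOn η (Ioo c d)) (hinj : InjOn ξ (Ioo c d))
    (hb : Bornology.IsBounded (ξ '' Ioo c d)) :
    ∃ g a b, a < b ∧ ξ '' Ioo c d = Ioo a b ∧ (∀ x ∈ Ioo c d, g (ξ x) = η x) ∧
      ContinuousOn g (Ioo a b) ∧ (fun x => (ξ x, η x)) '' Ioo c d = (Ioo a b).graphOn g := by
  obtain ⟨a, b, hab, himage⟩ := exists_image_Ioo_eq_Ioo hcd hξ hinj hb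
  have hinv := hinj.leftInvOn_invFunOn
  have hg : ∀ x ∈ Ioo c d, (η ∘ Function.invFunOn ξ (Ioo c d)) (ξ x) = η x := fun x hx =>
    congrArg η (hinv hx)
  refine ⟨η ∘ Function.invFunOn ξ (Ioo c d), a, b, hab, himage, hg, ?_, ?_⟩
  · rw [← himage]
    rintro _ ⟨x, hx, rfl⟩
    refine ContinuousAt.continuousWithinAt ?_
    rw [ContinuousAt, hg x hx]
    refine Tendsto.mono_left ?_ (nhds_le_map_of_continuousOn_of_injOn hξ hinj hx)
    refine tendsto_map'_iff.2 ((hη.continuousAt (Ioo_mem_nhds hx.1 hx.2)).tendsto.congr' ?_)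
    filter_upwards [Ioo_mem_nhds hx.1 hx.2] with t ht using (hg t ht).symm
  · rw [graphOn, ← himage, image_image]
    exact image_congr fun x hx => by rw [hg x hx]

end Graphs

namespace FoldedSystem

/-! ### Leaves as solution curves -/

section Leaf

variable (Y : FoldedSystem) {τ : Bool} {ℓ : ℝ} {P Q : ℝ × ℝ} {g : ℝ → ℝ} {c d x : ℝ}

/-- The right-hand side of the upper (`true`) or lower (`false`) equation. -/
def branch (τ : Bool) : ℝ → ℝ → ℝ := if τ then Y.upper else Y.lower

/-- The upper (`true`) or lower (`false`) leaf with label `ℓ`. -/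
def leaf (τ : Bool) (ℓ : ℝ) : Set (ℝ × ℝ) := if τ then Y.upperLeaf ℓ else Y.lowerLeaf ℓ

lemma continuous_branch (τ : Bool) : Continuous (Function.uncurry (Y.branch τ)) := by
  cases τ
  exacts [Y.continuous_lower, Y.continuous_upper]

lemma branch_zero (τ : Bool) (x : ℝ) : Y.branch τ x 0 = -Y.K x := by
  cases τ
  exacts [Y.lower_of_nonpos x le_rfl, Y.upper_of_nonpos x le_rfl]

lemma upper_add_K_pos (x : ℝ) {w : ℝ} (hw : 0 < w) : 0 < Y.upper x w + Y.K x := by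
  have := Y.isRate_Gp.mul_le x (Real.sqrt_nonneg w)
  have := mul_pos Y.b0_pos (Real.sqrt_pos.2 hw)
  rw [upper]; linarith

lemma lower_add_K_neg (x : ℝ) {w : ℝ} (hw : 0 < w) : Y.lower x w + Y.K x < 0 := by
  have := Y.isRate_Gm.mul_le x (Real.sqrt_nonneg w)
  have := mul_pos Y.b0_pos (Real.sqrt_pos.2 hw)
  rw [lower]; linarith

lemma isClosed_leaf (τ : Bool) (ℓ : ℝ) : IsClosed (Y.leaf τ ℓ) := by
  cases τ
  · exact (isClosed_le continuous_const continuous_snd).inter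
      (isClosed_eq Y.continuous_S continuous_const)
  · exact Y.isClosed_setOf_mem_upperLeaf.preimage (continuous_id.prodMk continuous_const)

variable {Y}

lemma eq_of_mem_leaf_of_fst_eq (hP : P ∈ Y.leaf τ ℓ) (hQ : Q ∈ Y.leaf τ ℓ) (h : P.1 = Q.1) :
    P = Q := by
  refine Prod.ext h ?_
  cases τ
  · exact (Y.strictMonoOn_S Q.1).injOn hP.1 hQ.1 (by rw [← h, hP.2, h, hQ.2])
  · rw [hP.2, hQ.2, h]

lemma isSolOn_Icc_of_forall_hasDerivAt {F : ℝ → ℝ → ℝ}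
    (h : ∀ x ∈ Ioo c d, HasDerivAt g (F x (g x)) x) {a b : ℝ} (ha : c < a) (hb : b < d) :
    IsSolOn F g a b :=
  ⟨fun x hx => (h x ⟨ha.trans_le hx.1, hx.2.trans_lt hb⟩).continuousAt.continuousWithinAt,
    fun x hx => h x ⟨ha.trans hx.1, hx.2.trans hb⟩⟩

/- By backward uniqueness the labels available at a point stay available further left. They form
nonempty compact sets, which therefore have a common element. -/
lemma exists_forall_mem_upperLeaf (hcd : c < d) (hg : ∀ x ∈ Ioo c d, 0 ≤ g x)
    (h : ∀ x ∈ Ioo c d, HasDerivAt g (Y.upper x (g x)) x) :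
    ∃ r, ∀ x ∈ Ioo c d, (x, g x) ∈ Y.upperLeaf r := by
  let labels : Ioo c d → Set ℝ := fun x => {r | ((x : ℝ), g x) ∈ Y.upperLeaf r}
  have hanti : Antitone labels := fun x x' hxx' r hr =>
    ⟨le_trans hxx' hr.1, (isSolOn_Icc_of_forall_hasDerivAt h x.2.1 x'.2.2).eq_of_eq_right
      (Y.isSolOn_u r x x') Y.upper_mono hxx' hr.2⟩
  have hclosed : ∀ x, IsClosed (labels x) := fun x =>
    Y.isClosed_setOf_mem_upperLeaf.preimage (continuous_const.prodMk continuous_id)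
  have hcompact : ∀ x, IsCompact (labels x) := fun x => by
    obtain ⟨R, hR⟩ := Y.exists_eventually_forall_mem_upperLeaf_le (x, g x)
    exact isCompact_Icc.of_isClosed_subset (hclosed x) fun r hr =>
      ⟨hr.1, hR.self_of_nhds r hr⟩
  have : Nonempty (Ioo c d) := (nonempty_Ioo.2 hcd).to_subtype
  obtain ⟨r, hr⟩ := IsCompact.nonempty_iInter_of_directed_nonempty_isCompact_isClosed labels
    hanti.directed_ge (fun x => Y.exists_mem_upperLeaf (hg x x.2)) hcompact hclosed
  exact ⟨r, fun x hx => mem_iInter.1 hr ⟨x, hx⟩⟩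

lemma exists_forall_mem_lowerLeaf (hcd : c < d) (hg : ∀ x ∈ Ioo c d, 0 ≤ g x)
    (h : ∀ x ∈ Ioo c d, HasDerivAt g (Y.lower x (g x)) x) :
    ∃ s, ∀ x ∈ Ioo c d, (x, g x) ∈ Y.lowerLeaf s := by
  have hS : ∀ x ∈ Ioo c d, ∀ x' ∈ Ioo c d, x ≤ x' → Y.S x (g x) = Y.S x' (g x') := by
    intro x hx x' hx' hxx'
    have hlo : Y.lo x (g x) x' = g x' :=
      Y.lo_eq_of_isSolOn (isSolOn_Icc_of_forall_hasDerivAt h hx.1 hx'.2) hxx'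
    have hle : x' ≤ Y.S x (g x) := (Y.lo_nonneg_iff (hg x hx) hxx').1 (hlo ▸ hg x' hx')
    rw [← Y.S_lo (hg x hx) hxx' hle, hlo]
  obtain ⟨x₀, hx₀⟩ := nonempty_Ioo.2 hcd
  refine ⟨Y.S x₀ (g x₀), fun x hx => ⟨hg x hx, ?_⟩⟩
  rcases le_total x x₀ with hle | hle
  exacts [hS x hx x₀ hx₀ hle, (hS x₀ hx₀ x hx hle).symm]

/- Off `w = 0` the quantity `(g + κ)'` never vanishes, so by Darboux it keeps its sign and the
branch cannot change. -/
lemma exists_forall_mem_leaf (hcd : c < d) (hg : ∀ x ∈ Ioo c d, 0 < g x)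
    (h : ∀ x ∈ Ioo c d, ∃ τ, HasDerivAt g (Y.branch τ x (g x)) x) :
    ∃ τ ℓ, ∀ x ∈ Ioo c d, (x, g x) ∈ Y.leaf τ ℓ := by
  choose! τ hτ using h
  have hne : ∀ x ∈ Ioo c d, Y.branch (τ x) x (g x) + Y.K x ≠ 0 := fun x hx => by
    cases τ x
    exacts [(Y.lower_add_K_neg x (hg x hx)).ne, (Y.upper_add_K_pos x (hg x hx)).ne']
  rcases hasDerivWithinAt_forall_lt_or_forall_gt_of_forall_ne (convex_Ioo c d)
    (fun x hx => ((hτ x hx).add (Y.hasDerivAt_κ x)).hasDerivWithinAt) hne with hlt | hgt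
  · refine ⟨false, exists_forall_mem_lowerLeaf hcd (fun x hx => (hg x hx).le) fun x hx => ?_⟩
    have hd := hτ x hx
    have hlt' := hlt x hx
    cases hτx : τ x <;> rw [hτx] at hd hlt'
    exacts [hd, absurd hlt' (Y.upper_add_K_pos x (hg x hx)).not_gt]
  · refine ⟨true, exists_forall_mem_upperLeaf hcd (fun x hx => (hg x hx).le) fun x hx => ?_⟩
    have hd := hτ x hx
    have hgt' := hgt x hx
    cases hτx : τ x <;> rw [hτx] at hd hgt'
    exacts [absurd hgt' (Y.lower_add_K_neg x (hg x hx)).not_gt, hd]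

lemma hasDerivAt_of_eventually_mem_leaf (h : ∀ᶠ t in nhds x, (t, g t) ∈ Y.leaf τ ℓ) :
    HasDerivAt g (Y.branch τ x (g x)) x := by
  cases τ
  · obtain ⟨a, b, hxab, hab⟩ := mem_nhds_iff_exists_Ioo_subset.1 h
    obtain ⟨a', ha'⟩ := exists_between hxab.1
    have hmem' : (a', g a') ∈ Y.lowerLeaf ℓ := hab ⟨ha'.1, ha'.2.trans hxab.2⟩
    have hlo : ∀ t ∈ Ioo a' b, Y.lo a' (g a') t = g t := fun t ht =>
      have hmem : (t, g t) ∈ Y.lowerLeaf ℓ := hab ⟨ha'.1.trans ht.1, ht.2⟩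
      Y.lo_eq_of_S_eq hmem'.1 hmem.1 ht.1.le (hmem'.2.trans hmem.2.symm)
    obtain ⟨b', hb'⟩ := exists_between hxab.2
    have hd := (Y.isSolOn_lo (g a') (ha'.2.trans hb'.1).le).2 x ⟨ha'.2, hb'.1⟩
    rw [hlo x ⟨ha'.2, hxab.2⟩] at hd
    refine hd.congr_of_eventuallyEq ?_
    filter_upwards [Ioo_mem_nhds ha'.2 hxab.2] with t ht using (hlo t ht).symm
  · have hu : g =ᶠ[nhds x] Y.u ℓ := h.mono fun t ht => ht.2
    have hd := (Y.hasDerivAt_u ℓ x).congr_of_eventuallyEq hu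
    rwa [← hu.self_of_nhds] at hd

end Leaf

/-! ### Solution curves and their images -/

/-- The graph of `g` over `(c, d)` is a solution curve over `w ≥ 0`, which may cross from one branch
to the other only at the node `0`. -/
structure IsCurve (Y : FoldedSystem) (g : ℝ → ℝ) (c d : ℝ) : Prop where
  lt : c < d
  continuousOn : ContinuousOn g (Ioo c d)
  nonneg : ∀ x ∈ Ioo c d, 0 ≤ g x
  eq_zero : ∀ x ∈ Ioo c d, g x = 0 → x = 0
  hasDerivAt : ∀ x ∈ Ioo c d, 0 < g x → ∃ τ, HasDerivAt g (Y.branch τ x (g x)) x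

namespace IsCurve

variable {Y Z : FoldedSystem} {φ : ℝ ≃o ℝ} {g : ℝ → ℝ} {c d a b x : ℝ}

lemma pos_of_ne (h : Y.IsCurve g c d) (hx : x ∈ Ioo c d) (hne : x ≠ 0) : 0 < g x :=
  (h.nonneg x hx).lt_of_ne' fun h0 => hne (h.eq_zero x hx h0)

lemma continuousAt (h : Y.IsCurve g c d) (hx : x ∈ Ioo c d) : ContinuousAt g x :=
  h.continuousOn.continuousAt (Ioo_mem_nhds hx.1 hx.2)

lemma exists_forall_mem_leaf (h : Y.IsCurve g c d) (hab : a < b) (hsub : Ioo a b ⊆ Ioo c d)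
    (hpos : ∀ x ∈ Ioo a b, 0 < g x) : ∃ τ ℓ, ∀ x ∈ Ioo a b, (x, g x) ∈ Y.leaf τ ℓ :=
  FoldedSystem.exists_forall_mem_leaf hab hpos fun x hx => h.hasDerivAt x (hsub hx) (hpos x hx)

lemma exists_eventually_mem_leaf (h : Y.IsCurve g c d) (hx : x ∈ Ioo c d) (hpos : 0 < g x) :
    ∃ τ ℓ, ∀ᶠ t in nhds x, (t, g t) ∈ Y.leaf τ ℓ := by
  have hev : ∀ᶠ t in nhds x, t ∈ Ioo c d ∧ 0 < g t :=
    Filter.Eventually.and (Ioo_mem_nhds hx.1 hx.2) ((h.continuousAt hx).eventually_const_lt hpos)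
  obtain ⟨a, b, hxab, hab⟩ := mem_nhds_iff_exists_Ioo_subset.1 hev
  obtain ⟨τ, ℓ, hℓ⟩ := h.exists_forall_mem_leaf (hxab.1.trans hxab.2) (fun t ht => (hab ht).1)
    fun t ht => (hab ht).2
  exact ⟨τ, ℓ, mem_of_superset (Ioo_mem_nhds hxab.1 hxab.2) hℓ⟩

/- Where a nonnegative `g` vanishes it has a minimum, and there both branches equal `-K`. -/
lemma of_forall_hasDerivAt (hlt : c < d) (hg : ∀ x ∈ Ioo c d, 0 ≤ g x)
    (h : ∀ x ∈ Ioo c d, ∃ τ, HasDerivAt g (Y.branch τ x (g x)) x) : Y.IsCurve g c d := by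
  refine ⟨hlt, fun x hx => (h x hx).choose_spec.continuousAt.continuousWithinAt, hg,
    fun x hx hgx => ?_, fun x hx _ => h x hx⟩
  obtain ⟨τ, hτ⟩ := h x hx
  have hmin : IsLocalMin g x := by
    filter_upwards [Ioo_mem_nhds hx.1 hx.2] with y hy using hgx.trans_le (hg y hy)
  have hK := hmin.hasDerivAt_eq_zero hτ
  rw [hgx, branch_zero, neg_eq_zero] at hK
  by_contra hne
  exact (Y.K_pos x hne).ne' hK

lemma continuousAt_branch (h : Y.IsCurve g c d) (hx : x ∈ Ioo c d) (τ : Bool) :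
    ContinuousAt (fun t => Y.branch τ t (g t)) x :=
  ContinuousAt.comp (f := fun t => (t, g t)) (Y.continuous_branch τ).continuousAt
    (continuousAt_id.prodMk (h.continuousAt hx))

lemma continuousAt_deriv_of_pos (h : Y.IsCurve g c d) (hx : x ∈ Ioo c d) (hpos : 0 < g x) :
    ContinuousAt (deriv g) x := by
  obtain ⟨τ, ℓ, hℓ⟩ := h.exists_eventually_mem_leaf hx hpos
  refine (h.continuousAt_branch hx τ).congr ?_
  filter_upwards [hℓ.eventually_nhds] with t ht using
    (hasDerivAt_of_eventually_mem_leaf ht).deriv.symm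

lemma tendsto_deriv_nhdsNE (h : Y.IsCurve g c d) (h0 : (0 : ℝ) ∈ Ioo c d) (hg0 : g 0 = 0) :
    Tendsto (deriv g) (nhdsWithin 0 {0}ᶜ) (nhds 0) := by
  have hb : ∀ τ, Tendsto (fun t => |Y.branch τ t (g t)|) (nhds 0) (nhds 0) := fun τ => by
    have := (h.continuousAt_branch h0 τ).abs.tendsto
    rwa [hg0, branch_zero, Y.K_zero, neg_zero, abs_zero] at this
  have hsum : Tendsto (fun t => |Y.branch true t (g t)| + |Y.branch false t (g t)|)
      (nhdsWithin 0 {0}ᶜ) (nhds 0) := by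
    simpa using ((hb true).add (hb false)).mono_left nhdsWithin_le_nhds
  refine squeeze_zero_norm' ?_ hsum
  filter_upwards [self_mem_nhdsWithin, mem_nhdsWithin_of_mem_nhds (Ioo_mem_nhds h0.1 h0.2)]
    with t ht htcd
  obtain ⟨τ, hτ⟩ := h.hasDerivAt t htcd (h.pos_of_ne htcd ht)
  rw [Real.norm_eq_abs, hτ.deriv]
  cases τ
  exacts [le_add_of_nonneg_left (abs_nonneg _), le_add_of_nonneg_right (abs_nonneg _)]

lemma hasDerivAt_zero (h : Y.IsCurve g c d) (h0 : (0 : ℝ) ∈ Ioo c d) (hg0 : g 0 = 0) :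
    HasDerivAt g 0 0 := by
  have hdiff : ∀ t ∈ Ioo c d, t ≠ 0 → DifferentiableAt ℝ g t := fun t ht hne =>
    (h.hasDerivAt t ht (h.pos_of_ne ht hne)).choose_spec.differentiableAt
  have hcont := h.continuousAt h0
  have htendsto := h.tendsto_deriv_nhdsNE h0 hg0
  have hleft : HasDerivWithinAt g 0 (Iic 0) 0 := hasDerivWithinAt_Iic_of_tendsto_deriv
    (s := Ioo c 0)
    (fun t ht => (hdiff t ⟨ht.1, ht.2.trans h0.2⟩ ht.2.ne).differentiableWithinAt)
    hcont.continuousWithinAt (Ioo_mem_nhdsLT h0.1)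
    (htendsto.mono_left (nhdsWithin_mono _ fun _ ht => (mem_Iio.1 ht).ne))
  have hright : HasDerivWithinAt g 0 (Ici 0) 0 := hasDerivWithinAt_Ici_of_tendsto_deriv
    (s := Ioo 0 d)
    (fun t ht => (hdiff t ⟨h0.1.trans ht.1, ht.2⟩ ht.1.ne').differentiableWithinAt)
    hcont.continuousWithinAt (Ioo_mem_nhdsGT h0.2)
    (htendsto.mono_left (nhdsWithin_mono _ fun _ ht => (mem_Ioi.1 ht).ne'))
  have hunion := hleft.union hright
  rwa [Iic_union_Ici, hasDerivWithinAt_univ] at hunion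

lemma exists_hasDerivAt (h : Y.IsCurve g c d) (hx : x ∈ Ioo c d) :
    ∃ τ, HasDerivAt g (Y.branch τ x (g x)) x := by
  rcases (h.nonneg x hx).eq_or_lt with hgx | hpos
  · obtain rfl := h.eq_zero x hx hgx.symm
    refine ⟨true, ?_⟩
    rw [← hgx, branch_zero, Y.K_zero, neg_zero]
    exact h.hasDerivAt_zero hx hgx.symm
  · exact h.hasDerivAt x hx hpos

lemma continuousOn_deriv (h : Y.IsCurve g c d) : ContinuousOn (deriv g) (Ioo c d) := by
  refine fun x hx => ContinuousAt.continuousWithinAt ?_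
  rcases (h.nonneg x hx).eq_or_lt with hgx | hpos
  · obtain rfl := h.eq_zero x hx hgx.symm
    rw [continuousAt_iff_punctured_nhds, (h.hasDerivAt_zero hx hgx.symm).deriv]
    exact h.tendsto_deriv_nhdsNE hx hgx.symm
  · exact h.continuousAt_deriv_of_pos hx hpos

end IsCurve

section Image

variable {Y Z : FoldedSystem} {φ : ℝ ≃o ℝ} {τ : Bool} {r ℓ : ℝ} {P Q : ℝ × ℝ}

lemma leafMap_mem_upperLeaf (hφ : IsRelabelling Y Z φ) (h : P ∈ Y.upperLeaf r) :
    leafMap Y Z φ P ∈ Z.upperLeaf (φ r) := by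
  have hle := φ.monotone (S_le_of_mem_upperLeaf h)
  obtain ⟨x, hx, hS⟩ := Z.exists_S_u_eq hle
  have hQ : (x, Z.u (φ r) x) ∈ Z.upperLeaf (φ r) := ⟨hx.trans hle, rfl⟩
  rwa [Matches.leafMap_eq hφ ⟨r, h, hQ, hS⟩]

lemma S_leafMap (h : 0 ≤ P.2) :
    Z.S (leafMap Y Z φ P).1 (leafMap Y Z φ P).2 = φ (Y.S P.1 P.2) := by
  obtain ⟨r, -, -, hS⟩ := matches_leafMap (Y := Y) (Z := Z) (φ := φ) h
  exact hS

lemma leafMap_snd_nonneg (h : 0 ≤ P.2) : 0 ≤ (leafMap Y Z φ P).2 := by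
  obtain ⟨r, -, hQ, -⟩ := matches_leafMap (Y := Y) (Z := Z) (φ := φ) h
  exact snd_nonneg_of_mem_upperLeaf hQ

lemma leafMap_snd_eq_zero (hφ : IsRelabelling Y Z φ) (h : (leafMap Y Z φ P).2 = 0) : P.2 = 0 := by
  have hP := leafMap_symm_leafMap hφ P
  rw [show leafMap Y Z φ P = ((leafMap Y Z φ P).1, 0) from Prod.ext rfl h,
    leafMap_mk_zero hφ.symm] at hP
  rw [← hP]

lemma leafMap_mem_leaf (hφ : IsRelabelling Y Z φ) (h : P ∈ Y.leaf τ ℓ) :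
    leafMap Y Z φ P ∈ Z.leaf τ (φ ℓ) := by
  cases τ
  · exact ⟨leafMap_snd_nonneg h.1, (S_leafMap h.1).trans (congrArg φ h.2)⟩
  · exact leafMap_mem_upperLeaf hφ h

lemma fst_lt_fst_iff_of_mem_upperLeaf (hP : P ∈ Y.upperLeaf r) (hQ : Q ∈ Y.upperLeaf r) :
    P.1 < Q.1 ↔ Y.S P.1 P.2 < Y.S Q.1 Q.2 := by
  rw [hP.2, hQ.2]
  exact ((Y.strictMonoOn_S_u r).lt_iff_lt hP.1 hQ.1).symm

lemma leafMap_fst_lt_fst_iff_of_mem_upperLeaf (hφ : IsRelabelling Y Z φ) (hP : P ∈ Y.upperLeaf r)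
    (hQ : Q ∈ Y.upperLeaf r) :
    (leafMap Y Z φ P).1 < (leafMap Y Z φ Q).1 ↔ P.1 < Q.1 := by
  rw [fst_lt_fst_iff_of_mem_upperLeaf (leafMap_mem_upperLeaf hφ hP) (leafMap_mem_upperLeaf hφ hQ),
    S_leafMap (snd_nonneg_of_mem_upperLeaf hP), S_leafMap (snd_nonneg_of_mem_upperLeaf hQ),
    φ.lt_iff_lt, fst_lt_fst_iff_of_mem_upperLeaf hP hQ]

lemma fst_neg_of_mem_leaf_false_zero (h0 : (0, 0) ∈ Y.leaf false ℓ) (hP : P ∈ Y.leaf false ℓ)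
    (hne : P ≠ (0, 0)) : P.1 < 0 := by
  obtain rfl : ℓ = 0 := h0.2.symm.trans (Y.S_zero 0)
  have hle : P.1 ≤ 0 := (Y.le_S _ _).trans_eq hP.2
  exact hle.lt_of_ne fun h => hne (eq_of_mem_leaf_of_fst_eq hP h0 h)

lemma leafMap_zero (hφ : IsRelabelling Y Z φ) : leafMap Y Z φ (0, 0) = (0, 0) := by
  rw [leafMap_mk_zero hφ, hφ.map_zero]

lemma leafMap_fst_neg (hφ : IsRelabelling Y Z φ) (h0 : (0, 0) ∈ Y.leaf τ ℓ)
    (hP : P ∈ Y.leaf τ ℓ) (hneg : P.1 < 0) : (leafMap Y Z φ P).1 < 0 := by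
  have h00 := leafMap_zero hφ
  cases τ
  · refine fst_neg_of_mem_leaf_false_zero (h00 ▸ leafMap_mem_leaf hφ h0) (leafMap_mem_leaf hφ hP) ?_
    rw [← h00]
    exact (leafHomeo hφ).injective.ne (ne_of_apply_ne Prod.fst hneg.ne)
  · have := (leafMap_fst_lt_fst_iff_of_mem_upperLeaf hφ hP h0).2 hneg
    rwa [h00] at this

lemma leafMap_fst_pos (hφ : IsRelabelling Y Z φ) (h0 : (0, 0) ∈ Y.leaf τ ℓ)
    (hP : P ∈ Y.leaf τ ℓ) (hpos : 0 < P.1) : 0 < (leafMap Y Z φ P).1 := by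
  cases τ
  · exact absurd (fst_neg_of_mem_leaf_false_zero h0 hP (ne_of_apply_ne Prod.fst hpos.ne'))
      hpos.not_gt
  · have := (leafMap_fst_lt_fst_iff_of_mem_upperLeaf hφ h0 hP).2 hpos
    rwa [leafMap_zero hφ] at this

end Image

namespace IsCurve

variable {Y Z : FoldedSystem} {φ : ℝ ≃o ℝ} {g : ℝ → ℝ} {c d : ℝ}

lemma injOn_leafMap_fst_of_forall_mem_leaf (hφ : IsRelabelling Y Z φ) {τ : Bool} {ℓ : ℝ} {s : Set ℝ}
    (h : ∀ x ∈ s, (x, g x) ∈ Y.leaf τ ℓ) : InjOn (fun x => (leafMap Y Z φ (x, g x)).1) s := by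
  intro x hx x' hx' heq
  have := eq_of_mem_leaf_of_fst_eq (leafMap_mem_leaf hφ (h x hx)) (leafMap_mem_leaf hφ (h x' hx'))
    heq
  exact congrArg Prod.fst ((leafHomeo hφ).injective this)

lemma exists_forall_mem_leaf_left (h : Y.IsCurve g c d) (h0 : (0 : ℝ) ∈ Ioo c d) :
    ∃ τ ℓ, ∀ x ∈ Ioc c 0, (x, g x) ∈ Y.leaf τ ℓ := by
  have hsub : Ioo c 0 ⊆ Ioo c d := Ioo_subset_Ioo_right h0.2.le
  obtain ⟨τ, ℓ, hℓ⟩ := h.exists_forall_mem_leaf h0.1 hsub fun x hx => h.pos_of_ne (hsub hx) hx.2.ne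
  refine ⟨τ, ℓ, fun x hx => ?_⟩
  rcases hx.2.eq_or_lt with rfl | hlt
  · exact (Y.isClosed_leaf τ ℓ).mem_of_tendsto (b := nhdsWithin 0 (Iio 0))
      ((continuousAt_id.prodMk (h.continuousAt h0)).tendsto.mono_left nhdsWithin_le_nhds)
      (mem_of_superset (Ioo_mem_nhdsLT h0.1) hℓ)
  · exact hℓ x ⟨hx.1, hlt⟩

lemma exists_forall_mem_leaf_right (h : Y.IsCurve g c d) (h0 : (0 : ℝ) ∈ Ioo c d) :
    ∃ τ ℓ, ∀ x ∈ Ico 0 d, (x, g x) ∈ Y.leaf τ ℓ := by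
  have hsub : Ioo 0 d ⊆ Ioo c d := Ioo_subset_Ioo_left h0.1.le
  obtain ⟨τ, ℓ, hℓ⟩ := h.exists_forall_mem_leaf h0.2 hsub fun x hx => h.pos_of_ne (hsub hx) hx.1.ne'
  refine ⟨τ, ℓ, fun x hx => ?_⟩
  rcases hx.1.eq_or_lt with rfl | hlt
  · exact (Y.isClosed_leaf τ ℓ).mem_of_tendsto (b := nhdsWithin 0 (Ioi 0))
      ((continuousAt_id.prodMk (h.continuousAt h0)).tendsto.mono_left nhdsWithin_le_nhds)
      (mem_of_superset (Ioo_mem_nhdsGT h0.2) hℓ)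
  · exact hℓ x ⟨hlt, hx.2⟩

lemma injOn_leafMap_fst (hφ : IsRelabelling Y Z φ) (h : Y.IsCurve g c d) :
    InjOn (fun x => (leafMap Y Z φ (x, g x)).1) (Ioo c d) := by
  by_cases h0 : (0 : ℝ) ∈ Ioo c d ∧ g 0 = 0
  · obtain ⟨h0, hg0⟩ := h0
    obtain ⟨τ, ℓ, hleft⟩ := h.exists_forall_mem_leaf_left h0
    obtain ⟨τ', ℓ', hright⟩ := h.exists_forall_mem_leaf_right h0
    have hleft0 := hleft 0 ⟨h0.1, le_rfl⟩
    have hright0 := hright 0 ⟨le_rfl, h0.2⟩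
    rw [hg0] at hleft0 hright0
    have hneg : ∀ x ∈ Ioo c 0, (leafMap Y Z φ (x, g x)).1 < 0 := fun x hx =>
      leafMap_fst_neg hφ hleft0 (hleft x ⟨hx.1, hx.2.le⟩) hx.2
    have hnonneg : ∀ x ∈ Ico 0 d, 0 ≤ (leafMap Y Z φ (x, g x)).1 := fun x hx => by
      rcases hx.1.eq_or_lt with rfl | hlt
      · rw [hg0, leafMap_zero hφ]
      · exact (leafMap_fst_pos hφ hright0 (hright x hx) hlt).le
    rw [← Ioo_union_Ico_eq_Ioo h0.1 h0.2.le, injOn_union]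
    · exact ⟨injOn_leafMap_fst_of_forall_mem_leaf hφ fun x hx => hleft x ⟨hx.1, hx.2.le⟩,
        injOn_leafMap_fst_of_forall_mem_leaf hφ hright,
        fun x hx x' hx' => ((hneg x hx).trans_le (hnonneg x' hx')).ne⟩
    · exact disjoint_left.2 fun x hx hx' => hx.2.not_ge hx'.1
  · obtain ⟨τ, ℓ, hℓ⟩ := h.exists_forall_mem_leaf h.lt subset_rfl fun x hx =>
      (h.nonneg x hx).lt_of_ne' fun hgx => h0 <| by
        obtain rfl := h.eq_zero x hx hgx
        exact ⟨hx, hgx⟩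
    exact injOn_leafMap_fst_of_forall_mem_leaf hφ hℓ

lemma exists_leafMap_image_eq (hφ : IsRelabelling Y Z φ) (h : Y.IsCurve g c d)
    (hb : Bornology.IsBounded ((Ioo c d).graphOn g)) :
    ∃ g' c' d', Z.IsCurve g' c' d' ∧
      leafMap Y Z φ '' (Ioo c d).graphOn g = (Ioo c' d').graphOn g' := by
  have hcont : ContinuousOn (fun x => leafMap Y Z φ (x, g x)) (Ioo c d) :=
    (continuous_leafMap hφ).comp_continuousOn (continuousOn_id.prodMk h.continuousOn)
  have hbdd : Bornology.IsBounded ((fun x => (leafMap Y Z φ (x, g x)).1) '' Ioo c d) := by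
    have := ((hb.isCompact_closure.image (continuous_leafMap hφ)).isBounded.subset
      (image_mono subset_closure)).image_fst
    rwa [graphOn, image_image, image_image] at this
  have hinj := h.injOn_leafMap_fst hφ
  have hfst : ContinuousOn (fun x => (leafMap Y Z φ (x, g x)).1) (Ioo c d) :=
    continuous_fst.comp_continuousOn hcont
  have hsnd : ContinuousOn (fun x => (leafMap Y Z φ (x, g x)).2) (Ioo c d) :=
    continuous_snd.comp_continuousOn hcont
  obtain ⟨g', c', d', hlt, himage, hg', hcont', hgraph⟩ := exists_graphOn_eq_image h.lt
    hfst hsnd hinj hbdd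
  have hpt : ∀ x ∈ Ioo c d, ((leafMap Y Z φ (x, g x)).1, g' (leafMap Y Z φ (x, g x)).1) =
      leafMap Y Z φ (x, g x) := fun x hx => Prod.ext rfl (hg' x hx)
  refine ⟨g', c', d', ⟨hlt, hcont', ?_, ?_, ?_⟩, by rw [← hgraph, graphOn, image_image]⟩ <;>
    rw [← himage] <;> rintro _ ⟨x, hx, rfl⟩
  · rw [hg' x hx]
    exact leafMap_snd_nonneg (h.nonneg x hx)
  · intro h0
    have hgx : g x = 0 := leafMap_snd_eq_zero hφ ((hg' x hx).symm.trans h0)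
    obtain rfl := h.eq_zero x hx hgx
    simp only [hgx, leafMap_zero hφ]
  · intro hpos
    have hgx : 0 < g x := (h.nonneg x hx).lt_of_ne' fun hgx => hpos.ne' <| by
      rw [hg' x hx, hgx, leafMap_mk_zero hφ]
    obtain ⟨τ, ℓ, hℓ⟩ := h.exists_eventually_mem_leaf hx hgx
    refine ⟨τ, hasDerivAt_of_eventually_mem_leaf (ℓ := φ ℓ)
      (nhds_le_map_of_continuousOn_of_injOn hfst hinj hx (eventually_map.2 ?_))⟩
    filter_upwards [hℓ, Ioo_mem_nhds hx.1 hx.2] with t ht htcd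
    rw [hpt t htcd]
    exact leafMap_mem_leaf hφ ht

end IsCurve

end FoldedSystem

/-! ### Globalizing a local pair of equations -/

/-- The truncation to `[0, ρ]` of `q`, squared: it replaces `w` in terms of `q = √w`. -/
def clampSq (ρ q : ℝ) : ℝ := max 0 (min ρ q) ^ 2

/-- The retraction `(x, √w) ↦ (x, w)` onto `[-ρ, ρ] × [0, ρ²]`. -/
def clampPoint (ρ x q : ℝ) : ℝ × ℝ := (max (-ρ) (min ρ x), clampSq ρ q)

section Clamp

variable {ρ x q q' w : ℝ}

lemma clampSq_zero (hρ : 0 ≤ ρ) : clampSq ρ 0 = 0 := by simp [clampSq, hρ]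

lemma clampSq_sqrt (hρ : 0 ≤ ρ) (hw : 0 ≤ w) (hwρ : w ≤ ρ ^ 2) : clampSq ρ √w = w := by
  rw [clampSq, min_eq_right (Real.sqrt_le_iff.2 ⟨hρ, hwρ⟩), max_eq_right (Real.sqrt_nonneg w),
    Real.sq_sqrt hw]

lemma clampSq_eq_min_sq (hρ : 0 ≤ ρ) (hq : 0 ≤ q) : clampSq ρ q = min ρ q ^ 2 := by
  rw [clampSq, max_eq_right (le_min hρ hq)]

lemma clampSq_le (hρ : 0 ≤ ρ) (q : ℝ) : clampSq ρ q ≤ ρ ^ 2 :=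
  pow_le_pow_left₀ (le_max_left _ _) (max_le hρ (min_le_left _ _)) 2

lemma min_sub_min_le (hqq' : q ≤ q') : min ρ q' - min ρ q ≤ q' - q := by
  rcases le_total q ρ with h | h
  · rw [min_eq_right h]
    exact sub_le_sub_right (min_le_right _ _) _
  · rw [min_eq_left h, min_eq_left (h.trans hqq'), sub_self]
    exact sub_nonneg.2 hqq'

lemma clampSq_mono (hρ : 0 ≤ ρ) (hq : 0 ≤ q) (hqq' : q ≤ q') : clampSq ρ q ≤ clampSq ρ q' := by
  rw [clampSq_eq_min_sq hρ hq, clampSq_eq_min_sq hρ (hq.trans hqq')]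
  exact pow_le_pow_left₀ (le_min hρ hq) (min_le_min_left ρ hqq') 2

lemma clampSq_sub_le_mul (hρ : 0 ≤ ρ) (hq : 0 ≤ q) (hqq' : q ≤ q') :
    clampSq ρ q' - clampSq ρ q ≤ 2 * ρ * (q' - q) := by
  rw [clampSq_eq_min_sq hρ hq, clampSq_eq_min_sq hρ (hq.trans hqq'), sq_sub_sq]
  refine mul_le_mul ?_ (min_sub_min_le hqq') (sub_nonneg.2 (min_le_min_left ρ hqq')) (by positivity)
  linarith [min_le_left ρ q, min_le_left ρ q']

lemma clampSq_sub_le_sq_sub_sq (hρ : 0 ≤ ρ) (hq : 0 ≤ q) (hqq' : q ≤ q') :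
    clampSq ρ q' - clampSq ρ q ≤ q' ^ 2 - q ^ 2 := by
  rw [clampSq_eq_min_sq hρ hq, clampSq_eq_min_sq hρ (hq.trans hqq'), sq_sub_sq, sq_sub_sq]
  exact mul_le_mul (add_le_add (min_le_right _ _) (min_le_right _ _)) (min_sub_min_le hqq')
    (sub_nonneg.2 (min_le_min_left ρ hqq')) (by linarith)

lemma mul_clampSq_sub_le (hρ : 0 ≤ ρ) (hq : 0 ≤ q) (hqq' : q ≤ q') :
    q * (clampSq ρ q' - clampSq ρ q) ≤ ρ * (2 * ρ * (q' - q)) := by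
  rcases le_total q ρ with h | h
  · exact mul_le_mul h (clampSq_sub_le_mul hρ hq hqq') (sub_nonneg.2 (clampSq_mono hρ hq hqq')) hρ
  · rw [clampSq_eq_min_sq hρ hq, clampSq_eq_min_sq hρ (hq.trans hqq'), min_eq_left h,
      min_eq_left (h.trans hqq'), sub_self, mul_zero]
    have := sub_nonneg.2 hqq'
    positivity

lemma continuous_clampPoint (ρ : ℝ) : Continuous (Function.uncurry (clampPoint ρ)) := by
  unfold Function.uncurry clampPoint clampSq
  fun_prop

lemma clampPoint_fst_of_abs_le (hx : |x| ≤ ρ) : (clampPoint ρ x q).1 = x := by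
  rw [abs_le] at hx
  rw [clampPoint, min_eq_right hx.2, max_eq_right hx.1]

lemma clampPoint_fst_ne_zero (hρ : 0 < ρ) (hx : x ≠ 0) : (clampPoint ρ x q).1 ≠ 0 := by
  rcases hx.lt_or_gt with h | h
  · exact (max_lt (neg_lt_zero.2 hρ) ((min_le_right _ _).trans_lt h)).ne
  · exact ((lt_min hρ h).trans_le (le_max_right _ _)).ne'

lemma abs_clampPoint_fst_le (hρ : 0 ≤ ρ) : |(clampPoint ρ x q).1| ≤ ρ :=
  abs_le.2 ⟨le_max_left _ _, max_le (by linarith) (min_le_left _ _)⟩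

lemma clampPoint_zero_right (hρ : 0 ≤ ρ) : clampPoint ρ x 0 = ((clampPoint ρ x 0).1, 0) :=
  Prod.ext rfl (clampSq_zero hρ)

lemma clampPoint_sqrt (hx : |x| ≤ ρ) (hw : 0 ≤ w) (hwρ : w ≤ ρ ^ 2) :
    clampPoint ρ x √w = (x, w) :=
  Prod.ext (clampPoint_fst_of_abs_le hx) (clampSq_sqrt ((abs_nonneg x).trans hx) hw hwρ)

lemma clampPoint_mem_closedBall (hρ : 0 ≤ ρ) (hρ1 : ρ ≤ 1) :
    clampPoint ρ x q ∈ Metric.closedBall 0 ρ := by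
  rw [mem_closedBall_zero_iff, Prod.norm_def]
  refine max_le (abs_clampPoint_fst_le hρ) ?_
  exact (Real.norm_of_nonneg (sq_nonneg _)).trans_le
    ((clampSq_le hρ q).trans (pow_le_of_le_one hρ hρ1 two_ne_zero))

end Clamp

/-- The coefficients of a pair of equations `w' = A ± √w B` near the origin, on a box small enough
for the variation of `A` to be dominated by `√w B`. -/
structure IsFoldedPair (A B : ℝ × ℝ → ℝ) (ρ : ℝ) (ℓ : NNReal) (k1 b0 b1 : ℝ) : Prop where
  radius_pos : 0 < ρ
  radius_le_one : ρ ≤ 1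
  radius_mul_le : ρ * (4 * ℓ) ≤ b0
  lower_pos : 0 < b0
  lipschitz_A : LipschitzOnWith ℓ A (Metric.closedBall 0 ρ)
  lipschitz_B : LipschitzOnWith ℓ B (Metric.closedBall 0 ρ)
  B_mem_Icc : ∀ p ∈ Metric.closedBall (0 : ℝ × ℝ) ρ, B p ∈ Icc (2 * b0) b1
  A_zero : A 0 = 0
  A_neg : ∀ x, |x| ≤ ρ → x ≠ 0 → A (x, 0) < 0
  neg_A_le : ∀ x, |x| ≤ ρ → -A (x, 0) ≤ k1 * x ^ 2

/-- The part of `B q ± A` that vanishes with `q`, extended from the box by clamping; `s` is the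
sign. -/
def clampedRate (A B : ℝ × ℝ → ℝ) (ρ s x q : ℝ) : ℝ :=
  q * B (clampPoint ρ x q) + s * (A (clampPoint ρ x q) - A (clampPoint ρ x 0))

/-- The extension of `x ↦ -A (x, 0)` by clamping, made superlinear outside `[-ρ, ρ]`. -/
def clampedDrift (A : ℝ × ℝ → ℝ) (ρ x : ℝ) : ℝ := -A (clampPoint ρ x 0) + max (|x| - ρ) 0 ^ 2

namespace IsFoldedPair

variable {A B F : ℝ × ℝ → ℝ} {ρ k1 b0 b1 s x q q' : ℝ} {ℓ : NNReal}

lemma clampPoint_mem (h : IsFoldedPair A B ρ ℓ k1 b0 b1) (x q : ℝ) :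
    clampPoint ρ x q ∈ Metric.closedBall 0 ρ :=
  clampPoint_mem_closedBall h.radius_pos.le h.radius_le_one

lemma abs_sub_clampPoint_le (h : IsFoldedPair A B ρ ℓ k1 b0 b1)
    (hF : LipschitzOnWith ℓ F (Metric.closedBall 0 ρ)) (x : ℝ) (hq : 0 ≤ q) (hqq' : q ≤ q') :
    |F (clampPoint ρ x q') - F (clampPoint ρ x q)| ≤ ℓ * (clampSq ρ q' - clampSq ρ q) := by
  have hdist := hF.dist_le_mul _ (h.clampPoint_mem x q') _ (h.clampPoint_mem x q)
  have hnonneg := sub_nonneg.2 (clampSq_mono h.radius_pos.le hq hqq')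
  rwa [clampPoint, clampPoint, dist_prod_same_left, Real.dist_eq, Real.dist_eq,
    abs_of_nonneg hnonneg] at hdist

lemma continuous_comp_clampPoint (h : IsFoldedPair A B ρ ℓ k1 b0 b1)
    (hF : LipschitzOnWith ℓ F (Metric.closedBall 0 ρ)) :
    Continuous fun p : ℝ × ℝ => F (clampPoint ρ p.1 p.2) :=
  hF.continuousOn.comp_continuous (continuous_clampPoint ρ) fun p => h.clampPoint_mem p.1 p.2

lemma abs_clampedRate_sub_sub_le (h : IsFoldedPair A B ρ ℓ k1 b0 b1) (hs : |s| = 1) (x : ℝ)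
    (hq : 0 ≤ q) (hqq' : q ≤ q') :
    |clampedRate A B ρ s x q' - clampedRate A B ρ s x q - (q' - q) * B (clampPoint ρ x q')| ≤
      b0 * (q' - q) := by
  have hρ := h.radius_pos.le
  have : 0 ≤ ℓ * (q' - q) := mul_nonneg ℓ.2 (sub_nonneg.2 hqq')
  have hA : |s * (A (clampPoint ρ x q') - A (clampPoint ρ x q))| ≤ ρ * (2 * (ℓ * (q' - q))) := by
    rw [abs_mul, hs, one_mul]
    calc |A (clampPoint ρ x q') - A (clampPoint ρ x q)|
        ≤ ℓ * (clampSq ρ q' - clampSq ρ q) := h.abs_sub_clampPoint_le h.lipschitz_A x hq hqq'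
      _ ≤ ℓ * (2 * ρ * (q' - q)) := mul_le_mul_of_nonneg_left (clampSq_sub_le_mul hρ hq hqq') ℓ.2
      _ = ρ * (2 * (ℓ * (q' - q))) := by ring
  have hB : |q * (B (clampPoint ρ x q') - B (clampPoint ρ x q))| ≤ ρ * (2 * (ℓ * (q' - q))) := by
    rw [abs_mul, abs_of_nonneg hq]
    calc q * |B (clampPoint ρ x q') - B (clampPoint ρ x q)|
        ≤ q * (ℓ * (clampSq ρ q' - clampSq ρ q)) :=
          mul_le_mul_of_nonneg_left (h.abs_sub_clampPoint_le h.lipschitz_B x hq hqq') hq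
      _ = ℓ * (q * (clampSq ρ q' - clampSq ρ q)) := by ring
      _ ≤ ℓ * (ρ * (2 * ρ * (q' - q))) :=
          mul_le_mul_of_nonneg_left (mul_clampSq_sub_le hρ hq hqq') ℓ.2
      _ = ρ * (ρ * (2 * (ℓ * (q' - q)))) := by ring
      _ ≤ ρ * (2 * (ℓ * (q' - q))) := mul_le_mul_of_nonneg_left
          (mul_le_of_le_one_left (by positivity) h.radius_le_one) hρ
  calc |clampedRate A B ρ s x q' - clampedRate A B ρ s x q - (q' - q) * B (clampPoint ρ x q')|
      = |q * (B (clampPoint ρ x q') - B (clampPoint ρ x q)) +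
          s * (A (clampPoint ρ x q') - A (clampPoint ρ x q))| := by
        congr 1
        rw [clampedRate, clampedRate]
        ring
    _ ≤ ρ * (4 * ℓ) * (q' - q) := (abs_add_le _ _).trans (by linarith)
    _ ≤ b0 * (q' - q) := mul_le_mul_of_nonneg_right h.radius_mul_le (sub_nonneg.2 hqq')

lemma isRate_clampedRate (h : IsFoldedPair A B ρ ℓ k1 b0 b1) (hs : |s| = 1) :
    IsRate (clampedRate A B ρ s) b0 (b1 + b0) where
  continuous_uncurry := by
    have hA := h.continuous_comp_clampPoint h.lipschitz_A
    have hA0 : Continuous fun p : ℝ × ℝ => A (clampPoint ρ p.1 0) :=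
      hA.comp (continuous_fst.prodMk continuous_const)
    exact (continuous_snd.mul (h.continuous_comp_clampPoint h.lipschitz_B)).add
      (continuous_const.mul (hA.sub hA0))
  map_zero x := by rw [clampedRate, sub_self, zero_mul, mul_zero, add_zero]
  mul_le_sub x q q' hq hqq' := by
    have hkey := (abs_le.1 (h.abs_clampedRate_sub_sub_le hs x hq hqq')).1
    have hB := mul_le_mul_of_nonneg_left (h.B_mem_Icc _ (h.clampPoint_mem x q')).1
      (sub_nonneg.2 hqq')
    linarith
  sub_le_mul x q q' hq hqq' := by
    have hkey := (abs_le.1 (h.abs_clampedRate_sub_sub_le hs x hq hqq')).2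
    have hB := mul_le_mul_of_nonneg_left (h.B_mem_Icc _ (h.clampPoint_mem x q')).2
      (sub_nonneg.2 hqq')
    linarith
  lower_pos := h.lower_pos

lemma clampedRate_subhomogeneous (h : IsFoldedPair A B ρ ℓ k1 b0 b1) (x : ℝ) (hq : 0 ≤ q)
    (hqq' : q ≤ q') :
    q * clampedRate A B ρ (-1) x q' - q' * clampedRate A B ρ (-1) x q ≤
      5 * ℓ * q' * q * (q' - q) := by
  have hρ := h.radius_pos.le
  have hℓ : (0 : ℝ) ≤ ℓ := ℓ.2
  have hd : 0 ≤ q' - q := sub_nonneg.2 hqq'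
  have hq' : 0 ≤ q' := hq.trans hqq'
  have hB : B (clampPoint ρ x q') - B (clampPoint ρ x q) ≤ ℓ * (2 * (q' - q)) :=
    (le_abs_self _).trans <| (h.abs_sub_clampPoint_le h.lipschitz_B x hq hqq').trans <|
      mul_le_mul_of_nonneg_left ((clampSq_sub_le_mul hρ hq hqq').trans <|
        mul_le_mul_of_nonneg_right (by linarith [h.radius_le_one]) hd) hℓ
  have hA : -(A (clampPoint ρ x q') - A (clampPoint ρ x q)) ≤ ℓ * (q' ^ 2 - q ^ 2) :=
    (neg_le_abs _).trans <| (h.abs_sub_clampPoint_le h.lipschitz_A x hq hqq').trans <|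
      mul_le_mul_of_nonneg_left (clampSq_sub_le_sq_sub_sq hρ hq hqq') hℓ
  have hA0 : A (clampPoint ρ x q) - A (clampPoint ρ x 0) ≤ ℓ * (q ^ 2 - 0 ^ 2) :=
    (le_abs_self _).trans <| (h.abs_sub_clampPoint_le h.lipschitz_A x le_rfl hq).trans <|
      mul_le_mul_of_nonneg_left (clampSq_sub_le_sq_sub_sq hρ le_rfl hq) hℓ
  have hgap : 0 ≤ ℓ * q * ((q' - q) * (q' - q)) := by positivity
  calc q * clampedRate A B ρ (-1) x q' - q' * clampedRate A B ρ (-1) x q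
      = q' * q * (B (clampPoint ρ x q') - B (clampPoint ρ x q)) +
          q * -(A (clampPoint ρ x q') - A (clampPoint ρ x q)) +
          (q' - q) * (A (clampPoint ρ x q) - A (clampPoint ρ x 0)) := by
        rw [clampedRate, clampedRate]
        ring
    _ ≤ q' * q * (ℓ * (2 * (q' - q))) + q * (ℓ * (q' ^ 2 - q ^ 2)) +
          (q' - q) * (ℓ * (q ^ 2 - 0 ^ 2)) := by gcongr
    _ ≤ 5 * ℓ * q' * q * (q' - q) := by linarith

lemma A_clampPoint_nonpos (h : IsFoldedPair A B ρ ℓ k1 b0 b1) (x : ℝ) :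
    A (clampPoint ρ x 0) ≤ 0 := by
  rw [clampPoint_zero_right h.radius_pos.le]
  by_cases hx : (clampPoint ρ x 0).1 = 0
  · rw [hx]
    exact h.A_zero.le
  · exact (h.A_neg _ (abs_clampPoint_fst_le h.radius_pos.le) hx).le

lemma clampedDrift_of_abs_le (hx : |x| ≤ ρ) : clampedDrift A ρ x = -A (x, 0) := by
  rw [clampedDrift, clampPoint_zero_right ((abs_nonneg x).trans hx), clampPoint_fst_of_abs_le hx,
    max_eq_right (sub_nonpos.2 hx)]
  ring

lemma continuous_clampedDrift (h : IsFoldedPair A B ρ ℓ k1 b0 b1) :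
    Continuous (clampedDrift A ρ) := by
  have hA : Continuous fun x : ℝ => A (clampPoint ρ x 0) :=
    (h.continuous_comp_clampPoint h.lipschitz_A).comp (continuous_id.prodMk continuous_const)
  exact hA.neg.add (by fun_prop)

lemma clampedDrift_superlinear (h : IsFoldedPair A B ρ ℓ k1 b0 b1) (C : ℝ) :
    ∃ R > 0, ∀ x ≥ R, C * x ≤ clampedDrift A ρ x := by
  have hρ := h.radius_pos
  refine ⟨2 * ρ + 4 * |C|, by positivity, fun x hx => ?_⟩
  have hC := abs_nonneg C
  have hx0 : 0 ≤ x := by linarith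
  rw [clampedDrift, abs_of_nonneg hx0, max_eq_left (by linarith)]
  calc C * x ≤ x / 4 * x := mul_le_mul_of_nonneg_right (by linarith [le_abs_self C]) hx0
    _ = (x / 2) ^ 2 := by ring
    _ ≤ (x - ρ) ^ 2 := pow_le_pow_left₀ (by linarith) (by linarith) 2
    _ ≤ -A (clampPoint ρ x 0) + (x - ρ) ^ 2 := by linarith [h.A_clampPoint_nonpos x]

/-- The global folded system extending the pair of equations `w' = A ± √w B`. -/
def foldedSystem (h : IsFoldedPair A B ρ ℓ k1 b0 b1) : FoldedSystem where
  K := clampedDrift A ρ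
  Gp := clampedRate A B ρ 1
  Gm := clampedRate A B ρ (-1)
  b0 := b0
  b1 := b1 + b0
  L := 5 * ℓ
  k1 := k1
  r0 := ρ
  continuous_K := h.continuous_clampedDrift
  K_zero := by
    rw [clampedDrift_of_abs_le (by simpa using h.radius_pos.le)]
    exact neg_eq_zero.2 h.A_zero
  K_pos x hx := by
    have hneg := h.A_neg _ (abs_clampPoint_fst_le h.radius_pos.le)
      (clampPoint_fst_ne_zero (q := 0) h.radius_pos hx)
    rw [← clampPoint_zero_right h.radius_pos.le] at hneg
    exact add_pos_of_pos_of_nonneg (neg_pos.2 hneg) (sq_nonneg _)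
  r0_pos := h.radius_pos
  K_le x hx := by
    have habs : |x| ≤ ρ := (abs_of_nonneg hx.1).trans_le hx.2
    exact (clampedDrift_of_abs_le habs).trans_le (h.neg_A_le x habs)
  K_superlinear := h.clampedDrift_superlinear
  isRate_Gp := h.isRate_clampedRate abs_one
  isRate_Gm := h.isRate_clampedRate (by rw [abs_neg, abs_one])
  Gm_subhomogeneous x _ _ hq hqq' := h.clampedRate_subhomogeneous x hq hqq'

lemma exists_branch_foldedSystem_eq_iff (h : IsFoldedPair A B ρ ℓ k1 b0 b1) {w : ℝ} (hx : |x| ≤ ρ)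
    (hw : 0 ≤ w) (hwρ : w ≤ ρ ^ 2) (y : ℝ) :
    (∃ τ, y = h.foldedSystem.branch τ x w) ↔ ∃ m, m ^ 2 = w ∧ y = A (x, w) + m * B (x, w) := by
  have hrate : ∀ s, clampedRate A B ρ s x √w = √w * B (x, w) + s * (A (x, w) - A (x, 0)) := by
    intro s
    rw [clampedRate, clampPoint_sqrt hx hw hwρ, clampPoint_zero_right h.radius_pos.le,
      clampPoint_fst_of_abs_le hx]
  have hupper : h.foldedSystem.branch true x w = A (x, w) + √w * B (x, w) := by
    change clampedRate A B ρ 1 x √w - clampedDrift A ρ x = _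
    rw [hrate, clampedDrift_of_abs_le hx]
    ring
  have hlower : h.foldedSystem.branch false x w = A (x, w) + -√w * B (x, w) := by
    change -clampedRate A B ρ (-1) x √w - clampedDrift A ρ x = _
    rw [hrate, clampedDrift_of_abs_le hx]
    ring
  rw [Bool.exists_bool, hupper, hlower]
  constructor
  · rintro (rfl | rfl)
    exacts [⟨-√w, by rw [neg_sq, Real.sq_sqrt hw], rfl⟩, ⟨√w, Real.sq_sqrt hw, rfl⟩]
  · rintro ⟨m, hm, rfl⟩
    rw [← Real.sq_sqrt hw, sq_eq_sq_iff_eq_or_eq_neg] at hm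
    rcases hm with rfl | rfl
    exacts [Or.inr rfl, Or.inl rfl]

end IsFoldedPair

lemma exists_isFoldedPair {A B : ℝ × ℝ → ℝ} {k1 : ℝ} (hA : ContDiffAt ℝ 1 A 0)
    (hB : ContDiffAt ℝ 1 B 0) (hA0 : A 0 = 0) (hB0 : 0 < B 0)
    (hneg : ∀ᶠ x : ℝ in nhds 0, x ≠ 0 → A (x, 0) < 0)
    (hle : ∀ᶠ x : ℝ in nhds 0, -A (x, 0) ≤ k1 * x ^ 2) :
    ∃ ρ ℓ, IsFoldedPair A B ρ ℓ k1 (B 0 / 4) (2 * B 0) := by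
  obtain ⟨ℓA, TA, hTA, hLA⟩ := hA.exists_lipschitzOnWith
  obtain ⟨ℓB, TB, hTB, hLB⟩ := hB.exists_lipschitzOnWith
  set ℓ := max ℓA ℓB
  have hBmem : ∀ᶠ p in nhds (0 : ℝ × ℝ), B p ∈ Icc (2 * (B 0 / 4)) (2 * B 0) :=
    hB.continuousAt.eventually (Icc_mem_nhds (by linarith) (by linarith))
  obtain ⟨r₁, hr₁, hball⟩ := Metric.nhds_basis_closedBall.eventually_iff.1
    ((Filter.Eventually.and hTA hTB).and hBmem)
  obtain ⟨r₂, hr₂, hinterval⟩ := Metric.nhds_basis_closedBall.eventually_iff.1 (hneg.and hle)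
  have hsmall : ∀ᶠ ρ : ℝ in nhdsWithin 0 (Ioi 0), ρ * (4 * ℓ) ≤ B 0 / 4 :=
    nhdsWithin_le_nhds ((continuous_mul_const (4 * (ℓ : ℝ))).continuousAt.eventually
      (ge_mem_nhds (by simpa using hB0)))
  obtain ⟨ρ, ⟨hρℓ, hρpos⟩, hρ1, hρr⟩ := ((hsmall.and self_mem_nhdsWithin).and (Filter.Eventually.and
    (Ioc_mem_nhdsGT one_pos) (Ioc_mem_nhdsGT (lt_min hr₁ hr₂)))).exists
  have hsub : Metric.closedBall (0 : ℝ × ℝ) ρ ⊆ Metric.closedBall 0 r₁ :=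
    Metric.closedBall_subset_closedBall (hρr.2.trans (min_le_left _ _))
  have habs : ∀ x : ℝ, |x| ≤ ρ → x ∈ Metric.closedBall 0 r₂ := fun x hx =>
    mem_closedBall_zero_iff.2 (hx.trans (hρr.2.trans (min_le_right _ _)))
  exact ⟨ρ, ℓ, hρpos, hρ1.2, hρℓ, by linarith,
      (hLA.mono fun p hp => (hball (hsub hp)).1.1).weaken (le_max_left _ _),
      (hLB.mono fun p hp => (hball (hsub hp)).1.2).weaken (le_max_right _ _),
      fun p hp => (hball (hsub hp)).2, hA0, fun x hx => (hinterval (habs x hx)).1,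
      fun x hx => (hinterval (habs x hx)).2⟩

lemma exists_foldedSystem_branch_eq_iff {A B : ℝ × ℝ → ℝ} {k1 : ℝ} (hA : ContDiffAt ℝ 1 A 0)
    (hB : ContDiffAt ℝ 1 B 0) (hA0 : A 0 = 0) (hB0 : B 0 ≠ 0)
    (hneg : ∀ᶠ x : ℝ in nhds 0, x ≠ 0 → A (x, 0) < 0)
    (hle : ∀ᶠ x : ℝ in nhds 0, -A (x, 0) ≤ k1 * x ^ 2) :
    ∃ Y : FoldedSystem, ∀ᶠ p : ℝ × ℝ in nhds 0, 0 ≤ p.2 → ∀ y,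
      (∃ τ, y = Y.branch τ p.1 p.2) ↔ ∃ m, m ^ 2 = p.2 ∧ y = A p + m * B p := by
  -- The sign of `B` is irrelevant, since `m` runs through both square roots.
  wlog hpos : 0 < B 0 generalizing B
  · obtain ⟨Y, hY⟩ := this hB.neg (neg_ne_zero.2 hB0)
      (neg_pos.2 ((not_lt.1 hpos).lt_of_ne hB0))
    refine ⟨Y, hY.mono fun p hp hp2 y => (hp hp2 y).trans ?_⟩
    exact (Equiv.neg ℝ).exists_congr fun m => by simp
  obtain ⟨ρ, ℓ, hpair⟩ := exists_isFoldedPair hA hB hA0 hpos hneg hle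
  have hρpos := hpair.radius_pos
  refine ⟨hpair.foldedSystem, ?_⟩
  have hx : ∀ᶠ p : ℝ × ℝ in nhds 0, |p.1| ≤ ρ :=
    continuous_fst.abs.continuousAt.eventually (ge_mem_nhds (by simpa using hρpos))
  have hw : ∀ᶠ p : ℝ × ℝ in nhds 0, p.2 ≤ ρ ^ 2 :=
    continuous_snd.continuousAt.eventually (ge_mem_nhds (pow_pos hρpos 2))
  filter_upwards [hx, hw] with p hpx hpw hp2 y
  exact hpair.exists_branch_foldedSystem_eq_iff hpx hp2 hpw y

/-! ### Binary differential equations in a folded chart -/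

lemma hasDerivAt_of_comp_eq {g ξ η : ℝ → ℝ} {c d t ξ' η' : ℝ} (hξ : ContinuousOn ξ (Ioo c d))
    (hinj : InjOn ξ (Ioo c d)) (hg : ∀ s ∈ Ioo c d, g (ξ s) = η s) (ht : t ∈ Ioo c d)
    (hξ' : HasDerivAt ξ ξ' t) (hne : ξ' ≠ 0) (hη' : HasDerivAt η η' t) :
    HasDerivAt g (η' / ξ') (ξ t) := by
  rw [hasDerivAt_iff_isLittleO]
  refine IsLittleO.mono ?_ (nhds_le_map_of_continuousOn_of_injOn hξ hinj ht)
  rw [isLittleO_map]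
  have hsub : (fun s => s - t) =O[nhds t] fun s => ξ s - ξ t := by
    have hprod := (HasDerivAtFilter.isTheta_sub hξ' hne).isBigO_symm
    rwa [prod_pure, isBigO_map] at hprod
  have hdiff := (hasDerivAt_iff_isLittleO.1 (hη'.sub (hξ'.mul_const (η' / ξ')))).trans_isBigO hsub
  refine hdiff.congr' ?_ EventuallyEq.rfl
  filter_upwards [Ioo_mem_nhds ht.1 ht.2] with s hs
  simp only [Function.comp_apply, Pi.sub_apply, smul_eq_mul]
  rw [hg s hs, hg t ht]
  field_simp
  ring

lemma injOn_Ioo_of_hasDerivAt_ne_zero {ξ ξ' : ℝ → ℝ} {c d : ℝ}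
    (h : ∀ t ∈ Ioo c d, HasDerivAt ξ (ξ' t) t) (hne : ∀ t ∈ Ioo c d, ξ' t ≠ 0) :
    InjOn ξ (Ioo c d) := by
  have hlt : ∀ s ∈ Ioo c d, ∀ t ∈ Ioo c d, s < t → ξ s ≠ ξ t := fun s hs t ht hst heq => by
    have hsub : Icc s t ⊆ Ioo c d := ordConnected_Ioo.out hs ht
    obtain ⟨r, hr, hr0⟩ := exists_hasDerivAt_eq_zero hst
      (fun r hr => (h r (hsub hr)).continuousAt.continuousWithinAt) heq
      fun r hr => h r (hsub (Ioo_subset_Icc_self hr))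
    exact hne r (hsub (Ioo_subset_Icc_self hr)) hr0
  intro s hs t ht heq
  rcases lt_trichotomy s t with hst | hst | hst
  · exact absurd heq (hlt s hs t ht hst)
  · exact hst
  · exact absurd heq.symm (hlt t ht s hs hst)

/-- In the chart `e` on the neighbourhood `Ω` of the origin, the directions annihilated by `ω` are
those of the curves of the folded system `Y`: there are none over `w < 0`, none is vertical, and
their slopes are the values of the branches of `Y`. -/
structure IsReduction (ω : ℝ × ℝ → ℝ × ℝ → ℝ) (Y : FoldedSystem)
    (e : OpenPartialHomeomorph (ℝ × ℝ) (ℝ × ℝ)) (Ω : Set (ℝ × ℝ)) : Prop where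
  isOpen : IsOpen Ω
  zero_mem : 0 ∈ Ω
  subset_source : Ω ⊆ e.source
  map_zero : e 0 = 0
  isBounded_image : Bornology.IsBounded (e '' Ω)
  contDiffAt : ∀ p ∈ Ω, ContDiffAt ℝ 1 e p
  contDiffAt_symm : ∀ p ∈ Ω, ContDiffAt ℝ 1 e.symm (e p)
  eq_zero_iff : ∀ p ∈ Ω, ∀ v ≠ 0, ω p v = 0 ↔
    (fderiv ℝ e p v).1 ≠ 0 ∧ 0 ≤ (e p).2 ∧
      ∃ τ, (fderiv ℝ e p v).2 = Y.branch τ (e p).1 (e p).2 * (fderiv ℝ e p v).1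

namespace IsReduction

variable {ω ω₂ : ℝ × ℝ → ℝ × ℝ → ℝ} {Y Z : FoldedSystem} {φ : ℝ ≃o ℝ}
  {e e₂ : OpenPartialHomeomorph (ℝ × ℝ) (ℝ × ℝ)} {Ω Ω₂ : Set (ℝ × ℝ)}

lemma symm_zero (R : IsReduction ω Y e Ω) : e.symm 0 = 0 := by
  simpa only [R.map_zero] using e.left_inv (R.subset_source R.zero_mem)

lemma hasDerivAt_comp (R : IsReduction ω Y e Ω) {γ : ℝ → ℝ × ℝ} {v : ℝ × ℝ} {t : ℝ}
    (hγ : HasDerivAt γ v t) (hmem : γ t ∈ Ω) :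
    HasDerivAt (e ∘ γ) (fderiv ℝ e (γ t) v) t :=
  ((R.contDiffAt _ hmem).differentiableAt one_ne_zero).hasFDerivAt.comp_hasDerivAt t hγ

lemma exists_isCurve_of_isIntegralCurve (R : IsReduction ω Y e Ω) {γ : ℝ → ℝ × ℝ} {I : Set ℝ}
    (hγ : IsIntegralCurveOnBDE ω γ I) (hI : I.Nonempty) (hmaps : MapsTo γ I Ω) :
    ∃ g c d, Y.IsCurve g c d ∧ e '' (γ '' I) = (Ioo c d).graphOn g := by
  obtain ⟨⟨a, b, rfl⟩, dγ, -, hγ⟩ := hγ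
  have hder : ∀ t ∈ Ioo a b, HasDerivAt (e ∘ γ) (fderiv ℝ e (γ t) (dγ t)) t := fun t ht =>
    R.hasDerivAt_comp (hγ t ht).1 (hmaps ht)
  have hfst : ∀ t ∈ Ioo a b,
      HasDerivAt (fun s => (e (γ s)).1) (fderiv ℝ e (γ t) (dγ t)).1 t := fun t ht =>
    (hasFDerivAt_fst (𝕜 := ℝ) (E := ℝ) (F := ℝ)).comp_hasDerivAt t (hder t ht)
  have hsnd : ∀ t ∈ Ioo a b,
      HasDerivAt (fun s => (e (γ s)).2) (fderiv ℝ e (γ t) (dγ t)).2 t := fun t ht =>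
    (hasFDerivAt_snd (𝕜 := ℝ) (E := ℝ) (F := ℝ)).comp_hasDerivAt t (hder t ht)
  have hslope := fun t ht => (R.eq_zero_iff _ (hmaps ht) _ (hγ t ht).2.1).1 (hγ t ht).2.2
  have hcont : ContinuousOn (fun s => (e (γ s)).1) (Ioo a b) := fun t ht =>
    (hfst t ht).continuousAt.continuousWithinAt
  have hinj := injOn_Ioo_of_hasDerivAt_ne_zero hfst fun t ht => (hslope t ht).1
  have hbounded : Bornology.IsBounded ((fun s => (e (γ s)).1) '' Ioo a b) := by
    refine R.isBounded_image.image_fst.subset ?_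
    rintro _ ⟨t, ht, rfl⟩
    exact ⟨_, mem_image_of_mem e (hmaps ht), rfl⟩
  obtain ⟨g, c, d, hcd, himage, hg, -, hgraph⟩ := exists_graphOn_eq_image
    (nonempty_Ioo.1 hI) hcont (fun t ht => (hsnd t ht).continuousAt.continuousWithinAt) hinj
    hbounded
  refine ⟨g, c, d, .of_forall_hasDerivAt hcd ?_ ?_, (image_image _ _ _).trans hgraph⟩
  · rw [← himage]
    rintro _ ⟨t, ht, rfl⟩
    exact (hslope t ht).2.1.trans_eq (hg t ht).symm
  · rw [← himage]
    rintro _ ⟨t, ht, rfl⟩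
    obtain ⟨hne, -, τ, hτ⟩ := hslope t ht
    refine ⟨τ, ?_⟩
    have hquot := hasDerivAt_of_comp_eq hcont hinj hg ht (hfst t ht) hne (hsnd t ht)
    rwa [hτ, mul_div_cancel_right₀ _ hne, ← hg t ht] at hquot

lemma symm_mem (R : IsReduction ω Y e Ω) {q : ℝ × ℝ} (hq : q ∈ e '' Ω) :
    e.symm q ∈ Ω ∧ e (e.symm q) = q := by
  obtain ⟨p, hp, rfl⟩ := hq
  rw [e.left_inv (R.subset_source hp)]
  exact ⟨hp, rfl⟩

lemma exists_isIntegralCurve_of_isCurve (R : IsReduction ω Y e Ω) {g : ℝ → ℝ} {c d : ℝ}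
    (hg : Y.IsCurve g c d) (hsub : (Ioo c d).graphOn g ⊆ e '' Ω) :
    ∃ γ I, IsIntegralCurveOnBDE ω γ I ∧ e.symm '' (Ioo c d).graphOn g = γ '' I := by
  set γ : ℝ → ℝ × ℝ := fun t => e.symm (t, g t)
  set dγ : ℝ → ℝ × ℝ := fun t => fderiv ℝ e.symm (t, g t) (1, deriv g t)
  have hmem : ∀ t ∈ Ioo c d, γ t ∈ Ω ∧ e (γ t) = (t, g t) := fun t ht =>
    R.symm_mem (hsub ⟨t, ht, rfl⟩)
  have hsmooth : ∀ t ∈ Ioo c d, ContDiffAt ℝ 1 e.symm (t, g t) := fun t ht =>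
    (hmem t ht).2 ▸ R.contDiffAt_symm _ (hmem t ht).1
  have hgraph : ∀ t ∈ Ioo c d, HasDerivAt (fun t => (t, g t)) (1, deriv g t) t := fun t ht => by
    obtain ⟨τ, hτ⟩ := hg.exists_hasDerivAt ht
    exact (hasDerivAt_id t).prodMk hτ.differentiableAt.hasDerivAt
  have hγ : ∀ t ∈ Ioo c d, HasDerivAt γ (dγ t) t := fun t ht =>
    ((hsmooth t ht).differentiableAt one_ne_zero).hasFDerivAt.comp_hasDerivAt t (hgraph t ht)
  have hpush : ∀ t ∈ Ioo c d, fderiv ℝ e (γ t) (dγ t) = (1, deriv g t) := fun t ht =>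
    (R.hasDerivAt_comp (hγ t ht) (hmem t ht).1).unique <| (hgraph t ht).congr_of_eventuallyEq <| by
      filter_upwards [Ioo_mem_nhds ht.1 ht.2] with s hs using (hmem s hs).2
  have hne : ∀ t ∈ Ioo c d, dγ t ≠ 0 := fun t ht h0 => by
    have hpush0 := congrArg Prod.fst (hpush t ht)
    rw [h0, _root_.map_zero] at hpush0
    exact zero_ne_one hpush0
  have hdγ : ContinuousOn dγ (Ioo c d) := fun t ht =>
    (((hsmooth t ht).fderiv_right (m := 0) le_rfl).continuousAt.comp_continuousWithinAt
      (f := fun t => (t, g t)) (hgraph t ht).continuousAt.continuousWithinAt).clm_apply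
      (continuousWithinAt_const.prodMk (hg.continuousOn_deriv t ht))
  refine ⟨γ, Ioo c d, ⟨⟨c, d, rfl⟩, dγ, hdγ, fun t ht => ⟨hγ t ht, hne t ht, ?_⟩⟩,
    image_image _ _ _⟩
  obtain ⟨τ, hτ⟩ := hg.exists_hasDerivAt ht
  rw [R.eq_zero_iff _ (hmem t ht).1 _ (hne t ht), hpush t ht, (hmem t ht).2]
  exact ⟨one_ne_zero, hg.nonneg t ht, τ, hτ.deriv.trans (mul_one _).symm⟩

/-- The points of `Ω` which the leaf map sends into the domain `Ω₂` of the other reduction. -/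
def transferDomain (Y Z : FoldedSystem) (φ : ℝ ≃o ℝ) (e e₂ : OpenPartialHomeomorph (ℝ × ℝ) (ℝ × ℝ))
    (Ω Ω₂ : Set (ℝ × ℝ)) : Set (ℝ × ℝ) :=
  Ω ∩ (fun p => FoldedSystem.leafMap Y Z φ (e p)) ⁻¹' (e₂ '' Ω₂)

/-- The leaf map read in the charts of two reductions. -/
def transfer (Y Z : FoldedSystem) (φ : ℝ ≃o ℝ) (e e₂ : OpenPartialHomeomorph (ℝ × ℝ) (ℝ × ℝ))
    (p : ℝ × ℝ) : ℝ × ℝ :=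
  e₂.symm (FoldedSystem.leafMap Y Z φ (e p))

lemma exists_isIntegralCurve_transfer (R : IsReduction ω Y e Ω) (R₂ : IsReduction ω₂ Z e₂ Ω₂)
    (hφ : FoldedSystem.IsRelabelling Y Z φ) {γ : ℝ → ℝ × ℝ} {I : Set ℝ}
    (hγ : IsIntegralCurveOnBDE ω γ I) (hmaps : MapsTo γ I (transferDomain Y Z φ e e₂ Ω Ω₂)) :
    ∃ σ J, IsIntegralCurveOnBDE ω₂ σ J ∧ transfer Y Z φ e e₂ '' (γ '' I) = σ '' J := by
  rcases I.eq_empty_or_nonempty with rfl | hI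
  · exact ⟨0, ∅, ⟨⟨0, 0, by simp⟩, 0, by simp, by simp⟩, by simp⟩
  obtain ⟨g, c, d, hg, hgraph⟩ :=
    R.exists_isCurve_of_isIntegralCurve hγ hI fun t ht => (hmaps ht).1
  have hbounded : Bornology.IsBounded ((Ioo c d).graphOn g) := by
    rw [← hgraph]
    exact R.isBounded_image.subset (image_mono (image_subset_iff.2 fun t ht => (hmaps ht).1))
  obtain ⟨g', c', d', hg', hgraph'⟩ := hg.exists_leafMap_image_eq hφ hbounded
  have hsub : (Ioo c' d').graphOn g' ⊆ e₂ '' Ω₂ := by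
    rw [← hgraph', ← hgraph, image_image, image_image]
    exact image_subset_iff.2 fun t ht => (hmaps ht).2
  obtain ⟨σ, J, hσ, himage⟩ := R₂.exists_isIntegralCurve_of_isCurve hg' hsub
  refine ⟨σ, J, hσ, ?_⟩
  rw [← himage, ← hgraph', ← hgraph, image_image e₂.symm, image_image _ e]
  rfl

lemma continuousOn_leafMap_comp (R : IsReduction ω Y e Ω)
    (hφ : FoldedSystem.IsRelabelling Y Z φ) :
    ContinuousOn (fun p => FoldedSystem.leafMap Y Z φ (e p)) Ω :=
  (FoldedSystem.continuous_leafMap hφ).comp_continuousOn (e.continuousOn.mono R.subset_source)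

lemma isOpen_transferDomain (R : IsReduction ω Y e Ω) (R₂ : IsReduction ω₂ Z e₂ Ω₂)
    (hφ : FoldedSystem.IsRelabelling Y Z φ) : IsOpen (transferDomain Y Z φ e e₂ Ω Ω₂) :=
  (R.continuousOn_leafMap_comp hφ).isOpen_inter_preimage R.isOpen
    (e₂.isOpen_image_of_subset_source R₂.isOpen R₂.subset_source)

lemma zero_mem_transferDomain (R : IsReduction ω Y e Ω) (R₂ : IsReduction ω₂ Z e₂ Ω₂)
    (hφ : FoldedSystem.IsRelabelling Y Z φ) : 0 ∈ transferDomain Y Z φ e e₂ Ω Ω₂ :=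
  ⟨R.zero_mem, 0, R₂.zero_mem, by
    simp only [R.map_zero, R₂.map_zero]
    exact (FoldedSystem.leafMap_zero hφ).symm⟩

lemma continuousOn_transfer (R : IsReduction ω Y e Ω) (R₂ : IsReduction ω₂ Z e₂ Ω₂)
    (hφ : FoldedSystem.IsRelabelling Y Z φ) :
    ContinuousOn (transfer Y Z φ e e₂) (transferDomain Y Z φ e e₂ Ω Ω₂) := by
  refine e₂.symm.continuousOn.comp ((R.continuousOn_leafMap_comp hφ).mono inter_subset_left) ?_
  rintro p ⟨-, q, hq, heq⟩
  rw [← heq]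
  exact e₂.map_source (R₂.subset_source hq)

lemma transfer_mem (R : IsReduction ω Y e Ω) (R₂ : IsReduction ω₂ Z e₂ Ω₂)
    (hφ : FoldedSystem.IsRelabelling Y Z φ) {p : ℝ × ℝ}
    (hp : p ∈ transferDomain Y Z φ e e₂ Ω Ω₂) :
    transfer Y Z φ e e₂ p ∈ transferDomain Z Y φ.symm e₂ e Ω₂ Ω ∧
      transfer Z Y φ.symm e₂ e (transfer Y Z φ e e₂ p) = p := by
  obtain ⟨hmem, hright⟩ := R₂.symm_mem hp.2
  have hback : FoldedSystem.leafMap Z Y φ.symm (e₂ (transfer Y Z φ e e₂ p)) = e p := by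
    rw [transfer, hright, FoldedSystem.leafMap_symm_leafMap hφ]
  refine ⟨⟨hmem, p, hp.1, hback.symm⟩, ?_⟩
  rw [transfer, hback, e.left_inv (R.subset_source hp.1)]

theorem topEquivAt0 (R : IsReduction ω Y e Ω) (R₂ : IsReduction ω₂ Z e₂ Ω₂) :
    TopEquivAt0 ω ω₂ := by
  obtain ⟨φ, hφ⟩ := FoldedSystem.exists_isRelabelling Y Z
  have hinv : InvOn (transfer Z Y φ.symm e₂ e) (transfer Y Z φ e e₂)
      (transferDomain Y Z φ e e₂ Ω Ω₂) (transferDomain Z Y φ.symm e₂ e Ω₂ Ω) :=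
    ⟨fun p hp => (R.transfer_mem R₂ hφ hp).2, fun p hp => (R₂.transfer_mem R hφ.symm hp).2⟩
  refine ⟨_, _, _, _, R.isOpen_transferDomain R₂ hφ, R₂.isOpen_transferDomain R hφ.symm,
    R.zero_mem_transferDomain R₂ hφ, R₂.zero_mem_transferDomain R hφ.symm, ?_,
    R.continuousOn_transfer R₂ hφ, R₂.continuousOn_transfer R hφ.symm,
    hinv.bijOn (fun p hp => (R.transfer_mem R₂ hφ hp).1)
      (fun p hp => (R₂.transfer_mem R hφ.symm hp).1), hinv,
    fun γ I => R.exists_isIntegralCurve_transfer R₂ hφ,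
    fun γ I => R₂.exists_isIntegralCurve_transfer R hφ.symm⟩
  rw [transfer, R.map_zero]
  exact (congrArg e₂.symm (FoldedSystem.leafMap_zero hφ)).trans R₂.symm_zero

end IsReduction

/-! ### Differentiation of jets -/

lemma exists_abs_coeff_le_of_abs_eval_le (n j : ℕ) :
    ∃ C > 0, ∀ (q : Polynomial ℝ) (M : ℝ), q.degree < n + 1 →
      (∀ i ∈ Finset.range (n + 1), |q.eval (i : ℝ)| ≤ M) → |q.coeff j| ≤ C * M := by
  let L (i : ℕ) : Polynomial ℝ := Lagrange.basis (Finset.range (n + 1)) (fun k : ℕ => (k : ℝ)) i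
  refine ⟨1 + ∑ i ∈ Finset.range (n + 1), |(L i).coeff j|, by positivity, fun q M hq hM => ?_⟩
  have hM0 : 0 ≤ M := (abs_nonneg _).trans (hM 0 (by simp))
  have interp : q.coeff j = ∑ i ∈ Finset.range (n + 1), q.eval (i : ℝ) * (L i).coeff j := by
    conv_lhs => rw [Lagrange.eq_interpolate (f := q) (s := Finset.range (n + 1))
      (v := fun k : ℕ => (k : ℝ)) Nat.cast_injective.injOn (by simpa using hq)]
    simp [Lagrange.interpolate_apply, L]
  calc |q.coeff j| ≤ ∑ i ∈ Finset.range (n + 1), |q.eval (i : ℝ)| * |(L i).coeff j| := by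
        rw [interp]
        exact (Finset.abs_sum_le_sum_abs _ _).trans_eq (by simp only [abs_mul])
    _ ≤ ∑ i ∈ Finset.range (n + 1), M * |(L i).coeff j| := by
        gcongr with i hi
        exact hM i hi
    _ ≤ (1 + ∑ i ∈ Finset.range (n + 1), |(L i).coeff j|) * M := by
        rw [← Finset.mul_sum]
        linarith

lemma exists_sub_taylor_eq {n : ℕ} {h : ℝ → ℝ} {x₀ x : ℝ} (hh : ContDiff ℝ (n + 1) h)
    (hx : x₀ ≠ x) :
    ∃ ξ ∈ uIoo x₀ x,
      h x - ∑ k ∈ Finset.range (n + 2), (k.factorial : ℝ)⁻¹ * (x - x₀) ^ k * iteratedDeriv k h x₀ =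
        (iteratedDeriv (n + 1) h ξ - iteratedDeriv (n + 1) h x₀) *
          (x - x₀) ^ (n + 1) / (n + 1).factorial := by
  obtain ⟨ξ, hξ, heq⟩ := taylor_mean_remainder_lagrange_iteratedDeriv hx hh.contDiffOn
  have hcoeff : ∀ k ∈ Finset.range (n + 1),
      iteratedDerivWithin k h (uIcc x₀ x) x₀ = iteratedDeriv k h x₀ := fun k hk =>
    iteratedDerivWithin_eq_iteratedDeriv (uniqueDiffOn_uIcc hx)
      (hh.contDiffAt.of_le (by exact_mod_cast (Finset.mem_range.1 hk).le)) left_mem_uIcc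
  rw [taylor_within_apply, Finset.sum_congr rfl fun k hk => by rw [hcoeff k hk]] at heq
  simp only [smul_eq_mul] at heq
  refine ⟨ξ, hξ, ?_⟩
  rw [Finset.sum_range_succ, ← sub_sub, heq]
  ring

lemma abs_taylor_le {n : ℕ} {h : ℝ → ℝ} {x y r ε : ℝ} (hh : ContDiff ℝ (n + 1) h)
    (hy : y ∈ Icc x (x + (n + 1) * r)) (hr : 0 ≤ r)
    (hle : |h y| ≤ ε * r ^ (n + 1))
    (hosc : ∀ z ∈ Icc x (x + (n + 1) * r),
      |iteratedDeriv (n + 1) h z - iteratedDeriv (n + 1) h x| ≤ ε) :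
    |∑ k ∈ Finset.range (n + 2), (k.factorial : ℝ)⁻¹ * (y - x) ^ k * iteratedDeriv k h x| ≤
      (1 + (n + 1) ^ (n + 1)) * ε * r ^ (n + 1) := by
  have hε : 0 ≤ ε := (abs_nonneg _).trans (hosc y hy)
  have hscale : 0 ≤ (n + 1 : ℝ) ^ (n + 1) * ε * r ^ (n + 1) := by positivity
  rcases hy.1.eq_or_lt with rfl | hlt
  · simpa [Finset.sum_range_succ'] using
      (show |h x| ≤ (1 + (n + 1) ^ (n + 1)) * ε * r ^ (n + 1) by linarith)
  obtain ⟨ξ, hξ, heq⟩ := exists_sub_taylor_eq hh hlt.ne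
  rw [uIoo_of_lt hlt] at hξ
  have hrem : |(iteratedDeriv (n + 1) h ξ - iteratedDeriv (n + 1) h x) *
      (y - x) ^ (n + 1) / (n + 1).factorial| ≤ ε * ((n + 1) * r) ^ (n + 1) := by
    rw [abs_div, abs_mul, abs_pow, abs_of_pos (sub_pos.2 hlt), Nat.abs_cast]
    refine (div_le_self (by positivity) (by exact_mod_cast (n + 1).factorial_pos)).trans ?_
    gcongr
    · exact hosc ξ ⟨hξ.1.le, hξ.2.le.trans hy.2⟩
    · linarith [hy.2]
  rw [← heq, abs_sub_comm] at hrem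
  have htri := abs_sub_abs_le_abs_sub
    (∑ k ∈ Finset.range (n + 2), (k.factorial : ℝ)⁻¹ * (y - x) ^ k * iteratedDeriv k h x) (h y)
  rw [mul_pow] at hrem
  linarith

-- The Taylor polynomial of `h` at `x` is small at equidistant points, and its linear coefficient is
-- a fixed combination of these values.
lemma exists_abs_deriv_le (n : ℕ) :
    ∃ C > 0, ∀ (h : ℝ → ℝ) (x r ε : ℝ), ContDiff ℝ (n + 1) h → 0 < r →
      (∀ y ∈ Icc x (x + (n + 1) * r), |h y| ≤ ε * r ^ (n + 1)) →
      (∀ y ∈ Icc x (x + (n + 1) * r),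
        |iteratedDeriv (n + 1) h y - iteratedDeriv (n + 1) h x| ≤ ε) →
      |deriv h x| ≤ C * ε * r ^ n := by
  obtain ⟨C, hC, hcoeff⟩ := exists_abs_coeff_le_of_abs_eval_le (n + 1) 1
  refine ⟨C * (1 + (n + 1) ^ (n + 1)), by positivity, fun h x r ε hh hr hle hosc => ?_⟩
  have : 0 ≤ ε := (abs_nonneg _).trans (hosc x ⟨le_rfl, le_add_of_nonneg_right (by positivity)⟩)
  let q : Polynomial ℝ := ∑ k ∈ Finset.range (n + 2),
    Polynomial.monomial k ((k.factorial : ℝ)⁻¹ * r ^ k * iteratedDeriv k h x)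
  have hdeg : q.degree < (n + 1 : ℕ) + 1 := by
    refine (Polynomial.degree_sum_le _ _).trans_lt ((Finset.sup_lt_iff (by simp)).2 fun k hk => ?_)
    exact (Polynomial.degree_monomial_le _ _).trans_lt (by exact_mod_cast Finset.mem_range.1 hk)
  have heval : ∀ i ∈ Finset.range (n + 2),
      |q.eval (i : ℝ)| ≤ (1 + (n + 1) ^ (n + 1)) * ε * r ^ (n + 1) := by
    intro i hi
    have hin : (i : ℝ) ≤ n + 1 := by exact_mod_cast Finset.mem_range_succ_iff.1 hi
    have hmem : x + i * r ∈ Icc x (x + (n + 1) * r) :=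
      ⟨le_add_of_nonneg_right (by positivity), by gcongr⟩
    convert abs_taylor_le hh hmem hr.le (hle _ hmem) hosc using 2
    rw [Polynomial.eval_finsetSum]
    refine Finset.sum_congr rfl fun k _ => ?_
    rw [Polynomial.eval_monomial]
    ring
  have hcoeff1 : q.coeff 1 = r * deriv h x := by
    simp [q, Polynomial.coeff_monomial, iteratedDeriv_one]
  have hbound := hcoeff q _ hdeg heval
  rw [hcoeff1, abs_mul, abs_of_pos hr] at hbound
  refine le_of_mul_le_mul_left (hbound.trans_eq ?_) hr
  ring

lemma iteratedDeriv_fst_eq_iterate_pdx (n : ℕ) (F : ℝ × ℝ → ℝ) (x y : ℝ) :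
    iteratedDeriv n (fun s => F (s, y)) x = pdx^[n] F (x, y) := by
  induction n generalizing F with
  | zero => simp
  | succ n ih => exact iteratedDeriv_succ' (f := fun s => F (s, y)) ▸ ih (pdx F)

lemma pdx_eq_fderiv {F : ℝ × ℝ → ℝ} {p : ℝ × ℝ} (hF : DifferentiableAt ℝ F p) :
    pdx F p = fderiv ℝ F p (1, 0) :=
  (hF.hasFDerivAt.comp_hasDerivAt (f := fun s : ℝ => (s, p.2)) p.1
    ((hasDerivAt_id _).prodMk (hasDerivAt_const _ _))).deriv

lemma pdy_eq_fderiv {F : ℝ × ℝ → ℝ} {p : ℝ × ℝ} (hF : DifferentiableAt ℝ F p) :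
    pdy F p = fderiv ℝ F p (0, 1) :=
  (hF.hasFDerivAt.comp_hasDerivAt (f := fun s : ℝ => (p.1, s)) p.2
    ((hasDerivAt_const _ _).prodMk (hasDerivAt_id _))).deriv

lemma contDiff_pdx {F : ℝ × ℝ → ℝ} {n : ℕ} (hF : ContDiff ℝ (n + 1) F) :
    ContDiff ℝ n (pdx F) := by
  rw [show pdx F = fun p => fderiv ℝ F p (1, 0) from
    funext fun p => pdx_eq_fderiv (hF.differentiable (by simp) p)]
  exact (hF.fderiv_right le_rfl).clm_apply contDiff_const

lemma contDiff_pdy {F : ℝ × ℝ → ℝ} {n : ℕ} (hF : ContDiff ℝ (n + 1) F) :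
    ContDiff ℝ n (pdy F) := by
  rw [show pdy F = fun p => fderiv ℝ F p (0, 1) from
    funext fun p => pdy_eq_fderiv (hF.differentiable (by simp) p)]
  exact (hF.fderiv_right le_rfl).clm_apply contDiff_const

lemma continuous_iterate_pdx {F : ℝ × ℝ → ℝ} {n : ℕ} (hF : ContDiff ℝ n F) :
    Continuous (pdx^[n] F) := by
  induction n generalizing F with
  | zero => exact hF.continuous
  | succ n ih => exact ih (contDiff_pdx (by exact_mod_cast hF))

lemma exists_forall_abs_pdx_le {F : ℝ × ℝ → ℝ} {n : ℕ} (hF : ContDiff ℝ (n + 1) F)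
    (ho : F =o[nhds 0] fun p => ‖p‖ ^ (n + 1)) {c : ℝ} (hc : 0 < c) :
    ∃ ρ > 0, ∀ p r, ‖p‖ < r → r < ρ → |pdx F p| ≤ c * r ^ n := by
  obtain ⟨C, hC, hderiv⟩ := exists_abs_deriv_le n
  have hε : 0 < c / C := by positivity
  have hsmall := ho.bound (show 0 < c / C / (n + 2) ^ (n + 1) by positivity)
  have hosc := (continuous_iterate_pdx (n := n + 1) (by exact_mod_cast hF)).tendsto 0
    |>.eventually (Metric.ball_mem_nhds _ (half_pos hε))
  obtain ⟨ρ, hρ, hball⟩ := Metric.eventually_nhds_iff_ball.1 (hsmall.and hosc)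
  refine ⟨ρ / (n + 2), by positivity, fun p r hpr hrρ => ?_⟩
  have hr0 : 0 < r := (norm_nonneg p).trans_lt hpr
  have hnorm : ∀ s ∈ Icc p.1 (p.1 + (n + 1) * r), ‖((s, p.2) : ℝ × ℝ)‖ ≤ (n + 2) * r := by
    intro s hs
    have hp1 := abs_le.1 ((norm_fst_le p).trans hpr.le)
    have hp2 := (norm_snd_le p).trans hpr.le
    have hnr : 0 ≤ (n : ℝ) * r := by positivity
    exact max_le (abs_le.2 ⟨by linarith [hs.1, hp1.1], by linarith [hs.2, hp1.2]⟩) (by linarith)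
  have hmem : ∀ s ∈ Icc p.1 (p.1 + (n + 1) * r), ((s, p.2) : ℝ × ℝ) ∈ Metric.ball 0 ρ :=
    fun s hs => mem_ball_zero_iff.2 ((hnorm s hs).trans_lt ((lt_div_iff₀' (by positivity)).1 hrρ))
  have hle : |pdx F p| ≤ C * (c / C) * r ^ n := by
    refine hderiv (fun s => F (s, p.2)) p.1 r (c / C) (by fun_prop) hr0 ?_ ?_
    · intro s hs
      calc |F (s, p.2)| ≤ c / C / (n + 2) ^ (n + 1) * ‖((s, p.2) : ℝ × ℝ)‖ ^ (n + 1) :=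
            (hball _ (hmem s hs)).1.trans_eq (by rw [norm_pow, norm_norm])
        _ ≤ c / C / (n + 2) ^ (n + 1) * ((n + 2) * r) ^ (n + 1) := by
            gcongr
            exact hnorm s hs
        _ = c / C * r ^ (n + 1) := by
            rw [mul_pow]
            field_simp
    · intro s hs
      simp only [iteratedDeriv_fst_eq_iterate_pdx]
      have hs0 := (hball _ (hmem s hs)).2
      have hp0 := (hball _ (hmem p.1 ⟨le_rfl, le_add_of_nonneg_right (by positivity)⟩)).2
      rw [← Real.dist_eq]
      exact ((dist_triangle_right _ _ _).trans_lt (add_lt_add hs0 hp0)).le.trans_eq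
        (add_halves _)
  rwa [mul_div_cancel₀ _ hC.ne'] at hle

lemma isLittleO_pdx {F : ℝ × ℝ → ℝ} {n : ℕ} (hF : ContDiff ℝ (n + 1) F)
    (ho : F =o[nhds 0] fun p => ‖p‖ ^ (n + 1)) : pdx F =o[nhds 0] fun p => ‖p‖ ^ n := by
  refine IsLittleO.of_bound fun c hc => ?_
  obtain ⟨ρ, hρ, hle⟩ := exists_forall_abs_pdx_le hF ho hc
  filter_upwards [Metric.ball_mem_nhds _ hρ] with p hp
  have hlim : Tendsto (fun r : ℝ => c * r ^ n) (nhdsWithin ‖p‖ (Ioi ‖p‖)) (nhds (c * ‖p‖ ^ n)) :=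
    (by fun_prop : Continuous fun r : ℝ => c * r ^ n).continuousWithinAt
  rw [norm_pow, norm_norm]
  exact ge_of_tendsto hlim (eventually_of_mem (Ioo_mem_nhdsGT (mem_ball_zero_iff.1 hp))
    fun r hr => hle p r hr.1 hr.2)

lemma isLittleO_pdy {F : ℝ × ℝ → ℝ} {n : ℕ} (hF : ContDiff ℝ (n + 1) F)
    (ho : F =o[nhds 0] fun p => ‖p‖ ^ (n + 1)) : pdy F =o[nhds 0] fun p => ‖p‖ ^ n := by
  have hswap : Tendsto (Prod.swap : ℝ × ℝ → ℝ × ℝ) (nhds 0) (nhds 0) :=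
    continuous_swap.tendsto' _ _ rfl
  have hnorm : ∀ p : ℝ × ℝ, ‖p.swap‖ = ‖p‖ := fun p => max_comm _ _
  have hx : pdx (F ∘ Prod.swap) =o[nhds 0] fun p => ‖p‖ ^ n :=
    isLittleO_pdx (hF.comp (contDiff_snd.prodMk contDiff_fst))
      (by simpa only [Function.comp_def, hnorm] using ho.comp_tendsto hswap)
  exact (by simpa only [Function.comp_def, hnorm] using hx.comp_tendsto hswap :
    (fun p : ℝ × ℝ => pdx (F ∘ Prod.swap) p.swap) =o[nhds 0] _)

lemma pdx_sub {F G : ℝ × ℝ → ℝ} (hF : Differentiable ℝ F) (hG : Differentiable ℝ G)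
    (p : ℝ × ℝ) : pdx (fun q => F q - G q) p = pdx F p - pdx G p :=
  deriv_fun_sub (by fun_prop) (by fun_prop)

lemma pdy_sub {F G : ℝ × ℝ → ℝ} (hF : Differentiable ℝ F) (hG : Differentiable ℝ G)
    (p : ℝ × ℝ) : pdy (fun q => F q - G q) p = pdy F p - pdy G p :=
  deriv_fun_sub (by fun_prop) (by fun_prop)

lemma hasJetAt0_pdx {F P : ℝ × ℝ → ℝ} {n : ℕ} (hF : ContDiff ℝ (n + 1) F)
    (hP : ContDiff ℝ (n + 1) P) (h : HasJetAt0 F P (n + 1)) : HasJetAt0 (pdx F) (pdx P) n :=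
  (isLittleO_pdx (hF.sub hP) h).congr_left
    (pdx_sub (hF.differentiable (by simp)) (hP.differentiable (by simp)))

lemma hasJetAt0_pdy {F P : ℝ × ℝ → ℝ} {n : ℕ} (hF : ContDiff ℝ (n + 1) F)
    (hP : ContDiff ℝ (n + 1) P) (h : HasJetAt0 F P (n + 1)) : HasJetAt0 (pdy F) (pdy P) n :=
  (isLittleO_pdy (hF.sub hP) h).congr_left
    (pdy_sub (hF.differentiable (by simp)) (hP.differentiable (by simp)))

/-! ### The discriminant chart -/

lemma fderiv_apply_eq_pdx_add_pdy {F : ℝ × ℝ → ℝ} {p : ℝ × ℝ} (hF : DifferentiableAt ℝ F p)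
    (v : ℝ × ℝ) : fderiv ℝ F p v = pdx F p * v.1 + pdy F p * v.2 := by
  have hv : v = v.1 • ((1 : ℝ), (0 : ℝ)) + v.2 • ((0 : ℝ), (1 : ℝ)) := by ext <;> simp
  conv_lhs => rw [hv]
  rw [map_add, map_smul, map_smul, pdx_eq_fderiv hF, pdy_eq_fderiv hF, smul_eq_mul, smul_eq_mul,
    mul_comm, mul_comm v.2]

/-- The chart `(x, y) ↦ (ε x, δ(x, y))`; here `ε = ±1` orients the `x`-axis. -/
def foldMap (ε : ℝ) (δ : ℝ × ℝ → ℝ) (p : ℝ × ℝ) : ℝ × ℝ := (ε * p.1, δ p)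

section Chart

variable {ε : ℝ} {δ : ℝ × ℝ → ℝ}

lemma contDiff_foldMap {n : WithTop ℕ∞} (hδ : ContDiff ℝ n δ) : ContDiff ℝ n (foldMap ε δ) :=
  (contDiff_const.mul contDiff_fst).prodMk hδ

lemma fderiv_foldMap_apply {p : ℝ × ℝ} (hδ : DifferentiableAt ℝ δ p) (v : ℝ × ℝ) :
    fderiv ℝ (foldMap ε δ) p v = (ε * v.1, pdx δ p * v.1 + pdy δ p * v.2) := by
  have hd : HasFDerivAt (foldMap ε δ)
      ((ε • ContinuousLinearMap.fst ℝ ℝ ℝ).prod (fderiv ℝ δ p)) p :=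
    (hasFDerivAt_fst.const_mul ε).prodMk hδ.hasFDerivAt
  rw [hd.fderiv, ← fderiv_apply_eq_pdx_add_pdy hδ]
  rfl

lemma injective_fderiv_foldMap {p : ℝ × ℝ} (hδ : DifferentiableAt ℝ δ p) (hε : ε ≠ 0)
    (hy : pdy δ p ≠ 0) : Function.Injective (fderiv ℝ (foldMap ε δ) p) := by
  refine (injective_iff_map_eq_zero _).2 fun v hv => ?_
  rw [fderiv_foldMap_apply hδ, Prod.mk_eq_zero] at hv
  have hv1 : v.1 = 0 := (mul_eq_zero.1 hv.1).resolve_left hε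
  have hv2 : v.2 = 0 := (mul_eq_zero.1 (by simpa [hv1] using hv.2)).resolve_left hy
  exact Prod.ext hv1 hv2

lemma exists_foldMap_chart (hδ : ContDiff ℝ 1 δ) (h0 : δ 0 = 0) (hε : ε ≠ 0)
    (hy : pdy δ 0 ≠ 0) :
    ∃ e : OpenPartialHomeomorph (ℝ × ℝ) (ℝ × ℝ),
      ⇑e = foldMap ε δ ∧ 0 ∈ e.source ∧ ContDiffAt ℝ 1 e.symm 0 := by
  have hdiff : DifferentiableAt ℝ δ 0 := hδ.differentiable one_ne_zero 0
  have hN : ContDiffAt ℝ 1 (foldMap ε δ) 0 := (contDiff_foldMap hδ).contDiffAt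
  have hN0 : foldMap ε δ 0 = 0 := by simp [foldMap, h0]
  let L := (LinearEquiv.ofInjectiveEndo (fderiv ℝ (foldMap ε δ) 0).toLinearMap
    (injective_fderiv_foldMap hdiff hε hy)).toContinuousLinearEquiv
  have hd : HasFDerivAt (foldMap ε δ) (L : ℝ × ℝ →L[ℝ] ℝ × ℝ) 0 :=
    (hN.differentiableAt one_ne_zero).hasFDerivAt
  refine ⟨hN.toOpenPartialHomeomorph _ hd one_ne_zero, rfl,
    hN.mem_toOpenPartialHomeomorph_source hd one_ne_zero, ?_⟩
  have hinv := hN.to_localInverse hd one_ne_zero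
  rwa [hN0] at hinv

lemma eventually_symm_axis {S : ℝ × ℝ → ℝ} {k1 : ℝ} {e : OpenPartialHomeomorph (ℝ × ℝ) (ℝ × ℝ)}
    (he : ⇑e = foldMap ε δ) (hmem : 0 ∈ e.source) (h0 : δ 0 = 0) (hε : ε * ε = 1)
    (hsymm : ContinuousAt e.symm 0)
    (hS : ∀ᶠ p in nhds 0, δ p = 0 → (p.1 ≠ 0 → S p < 0) ∧ -S p ≤ k1 * p.1 ^ 2) :
    ∀ᶠ x : ℝ in nhds 0,
      (x ≠ 0 → S (e.symm (x, 0)) < 0) ∧ -S (e.symm (x, 0)) ≤ k1 * x ^ 2 := by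
  have he0 : e 0 = 0 := by simp [he, foldMap, h0]
  have hsymm0 : e.symm 0 = 0 := by simpa only [he0] using e.left_inv hmem
  have haxis : Tendsto (fun x : ℝ => ((x, 0) : ℝ × ℝ)) (nhds 0) (nhds 0) :=
    (Continuous.prodMk_left 0).tendsto' _ _ rfl
  have hlim : Tendsto (fun x : ℝ => e.symm (x, 0)) (nhds 0) (nhds 0) :=
    (show Tendsto e.symm (nhds 0) (nhds 0) by simpa only [hsymm0] using hsymm.tendsto).comp haxis
  filter_upwards [haxis.eventually (e.open_target.mem_nhds (he0 ▸ e.map_source hmem)),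
    hlim.eventually hS] with x hx hp
  obtain ⟨hfst, hsnd⟩ : ε * (e.symm (x, 0)).1 = x ∧ δ (e.symm (x, 0)) = 0 :=
    Prod.ext_iff.1 ((congrFun he _).symm.trans (e.right_inv hx))
  have hsq : x ^ 2 = (e.symm (x, 0)).1 ^ 2 := by
    linear_combination (e.symm (x, 0)).1 ^ 2 * hε - (x + ε * (e.symm (x, 0)).1) * hfst
  exact ⟨fun hx0 => (hp hsnd).1 (right_ne_zero_of_mul (hfst ▸ hx0)), hsq ▸ (hp hsnd).2⟩

end Chart

/-- The discriminant `b² - ac` of the BDE with coefficients `a`, `b`, `c`. -/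
def discr (a b c : ℝ × ℝ → ℝ) (p : ℝ × ℝ) : ℝ := b p ^ 2 - a p * c p

/-- The slope of the direction `(a, -b)`, the double root of the BDE along the discriminant, in the
chart `foldMap ε (discr a b c)`. -/
def foldSlope (ε : ℝ) (a b c : ℝ × ℝ → ℝ) (p : ℝ × ℝ) : ℝ :=
  ε * (pdx (discr a b c) p - pdy (discr a b c) p * (b p / a p))

section Reduction

variable {a b c : ℝ × ℝ → ℝ} {ε : ℝ}

lemma contDiff_discr {n : WithTop ℕ∞} (ha : ContDiff ℝ n a) (hb : ContDiff ℝ n b)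
    (hc : ContDiff ℝ n c) : ContDiff ℝ n (discr a b c) :=
  (hb.pow 2).sub (ha.mul hc)

lemma contDiffAt_foldSlope {p : ℝ × ℝ} (ha : ContDiff ℝ 2 a) (hb : ContDiff ℝ 2 b)
    (hc : ContDiff ℝ 2 c) (hp : a p ≠ 0) : ContDiffAt ℝ 1 (foldSlope ε a b c) p := by
  have hδ : ContDiff ℝ ((1 : ℕ) + 1) (discr a b c) := by
    simpa [one_add_one_eq_two] using contDiff_discr ha hb hc
  have hdiv : ContDiffAt ℝ 1 (fun q => b q / a q) p :=
    (hb.contDiffAt.of_le one_le_two).div (ha.contDiffAt.of_le one_le_two) hp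
  exact contDiffAt_const.mul
    ((contDiff_pdx hδ).contDiffAt.sub ((contDiff_pdy hδ).contDiffAt.mul hdiv))

lemma discr_slope_eq_iff {p v : ℝ × ℝ} {m : ℝ} (ha : a p ≠ 0) (hy : pdy (discr a b c) p ≠ 0)
    (hε : ε * ε = 1) :
    pdx (discr a b c) p * v.1 + pdy (discr a b c) p * v.2 =
        (foldSlope ε a b c p + m * (pdy (discr a b c) p / a p)) * (ε * v.1) ↔
      a p * v.2 + b p * v.1 = m * (ε * v.1) := by
  have hdiff : pdx (discr a b c) p * v.1 + pdy (discr a b c) p * v.2 -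
      (foldSlope ε a b c p + m * (pdy (discr a b c) p / a p)) * (ε * v.1) =
      pdy (discr a b c) p / a p * (a p * v.2 + b p * v.1 - m * (ε * v.1)) := by
    rw [foldSlope]
    field_simp
    linear_combination v.1 * (pdy (discr a b c) p * b p - pdx (discr a b c) p * a p) * hε
  rw [← sub_eq_zero, hdiff, mul_eq_zero, or_iff_right (div_ne_zero hy ha), sub_eq_zero]

lemma bde_eq_zero_iff {p v : ℝ × ℝ} (ha : a p ≠ 0) (hy : pdy (discr a b c) p ≠ 0)
    (hε : ε * ε = 1) (hv : v ≠ 0) :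
    BDE a b c p v = 0 ↔ ε * v.1 ≠ 0 ∧ ∃ m, m ^ 2 = discr a b c p ∧
      pdx (discr a b c) p * v.1 + pdy (discr a b c) p * v.2 =
        (foldSlope ε a b c p + m * (pdy (discr a b c) p / a p)) * (ε * v.1) := by
  have hε0 : ε ≠ 0 := left_ne_zero_of_mul_eq_one hε
  have square : a p * BDE a b c p v = (a p * v.2 + b p * v.1) ^ 2 - discr a b c p * v.1 ^ 2 := by
    simp only [BDE, discr]
    ring
  simp only [discr_slope_eq_iff ha hy hε]
  constructor
  · intro h
    have hroot : (a p * v.2 + b p * v.1) ^ 2 = discr a b c p * v.1 ^ 2 := by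
      rw [h, mul_zero] at square
      linarith
    have hv1 : v.1 ≠ 0 := fun h1 => hv <| Prod.ext h1 <| by simpa [h1, ha] using hroot
    refine ⟨mul_ne_zero hε0 hv1, (a p * v.2 + b p * v.1) / (ε * v.1), ?_, by field_simp⟩
    rw [div_pow, hroot, mul_pow, pow_two ε, hε]
    field_simp
  · rintro ⟨-, m, hm, h⟩
    refine (mul_eq_zero.1 (?_ : a p * BDE a b c p v = 0)).resolve_left ha
    rw [square, h, ← hm, mul_pow, mul_pow, pow_two ε, hε]
    ring

variable {k1 : ℝ} {e : OpenPartialHomeomorph (ℝ × ℝ) (ℝ × ℝ)}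

lemma exists_foldedSystem_of_foldMap_chart (ha : ContDiff ℝ 2 a) (hb : ContDiff ℝ 2 b)
    (hc : ContDiff ℝ 2 c) (ha0 : a 0 ≠ 0) (h0 : discr a b c 0 = 0) (hy : pdy (discr a b c) 0 ≠ 0)
    (hε : ε * ε = 1) (hslope0 : foldSlope ε a b c 0 = 0)
    (hslope : ∀ᶠ p in nhds 0, discr a b c p = 0 →
      (p.1 ≠ 0 → foldSlope ε a b c p < 0) ∧ -foldSlope ε a b c p ≤ k1 * p.1 ^ 2)
    (he : ⇑e = foldMap ε (discr a b c)) (hmem : 0 ∈ e.source) (hsymm : ContDiffAt ℝ 1 e.symm 0) :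
    ∃ Y : FoldedSystem, ∀ᶠ p in nhds 0, 0 ≤ (e p).2 → ∀ y,
      (∃ τ, y = Y.branch τ (e p).1 (e p).2) ↔ ∃ m, m ^ 2 = (e p).2 ∧
        y = foldSlope ε a b c p + m * (pdy (discr a b c) p / a p) := by
  have hδ : ContDiff ℝ ((1 : ℕ) + 1) (discr a b c) := by
    simpa [one_add_one_eq_two] using contDiff_discr ha hb hc
  have he0 : e 0 = 0 := by simp [he, foldMap, h0]
  have hsymm0 : e.symm 0 = 0 := by simpa only [he0] using e.left_inv hmem
  have hnegle := eventually_symm_axis he hmem h0 hε hsymm.continuousAt hslope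
  have hC : ContDiffAt ℝ 1 (fun p => pdy (discr a b c) p / a p) 0 :=
    (contDiff_pdy hδ).contDiffAt.div (ha.contDiffAt.of_le one_le_two) ha0
  have hA := contDiffAt_foldSlope (ε := ε) ha hb hc ha0
  rw [← hsymm0] at hA hC
  obtain ⟨Y, hY⟩ := exists_foldedSystem_branch_eq_iff (hA.comp 0 hsymm) (hC.comp 0 hsymm)
    (by simpa [hsymm0] using hslope0) (by simpa [hsymm0] using div_ne_zero hy ha0)
    (hnegle.mono fun x hx => hx.1) (hnegle.mono fun x hx => hx.2)
  have hlim : Tendsto e (nhds 0) (nhds 0) := by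
    simpa only [he0] using (e.continuousAt hmem).tendsto
  refine ⟨Y, ?_⟩
  filter_upwards [hlim.eventually hY, e.open_source.mem_nhds hmem] with p hp hps
  simpa only [Function.comp_apply, e.left_inv hps] using hp

theorem exists_isReduction_bde (ha : ContDiff ℝ 2 a) (hb : ContDiff ℝ 2 b)
    (hc : ContDiff ℝ 2 c) (ha0 : a 0 ≠ 0) (h0 : discr a b c 0 = 0) (hy : pdy (discr a b c) 0 ≠ 0)
    (hε : ε * ε = 1) (hslope0 : foldSlope ε a b c 0 = 0)
    (hslope : ∀ᶠ p in nhds 0, discr a b c p = 0 →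
      (p.1 ≠ 0 → foldSlope ε a b c p < 0) ∧ -foldSlope ε a b c p ≤ k1 * p.1 ^ 2) :
    ∃ Y e Ω, IsReduction (BDE a b c) Y e Ω := by
  have hδ : ContDiff ℝ ((1 : ℕ) + 1) (discr a b c) := by
    simpa [one_add_one_eq_two] using contDiff_discr ha hb hc
  have hδ1 : ContDiff ℝ 1 (discr a b c) := hδ.of_le (by simp)
  obtain ⟨e, he, hmem, hsymm⟩ :=
    exists_foldMap_chart hδ1 h0 (left_ne_zero_of_mul_eq_one hε) hy
  obtain ⟨Y, hY⟩ := exists_foldedSystem_of_foldMap_chart ha hb hc ha0 h0 hy hε hslope0 hslope he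
    hmem hsymm
  have he0 : e 0 = 0 := by simp [he, foldMap, h0]
  have hlim : Tendsto e (nhds 0) (nhds 0) := by
    simpa only [he0] using (e.continuousAt hmem).tendsto
  obtain ⟨Ω, hΩ, hopen, h0Ω⟩ := eventually_nhds_iff.1 <|
    (e.open_source.eventually_mem hmem).and <|
    (hlim.eventually (hsymm.eventually (by simp))).and <|
    (hlim.eventually (Metric.ball_mem_nhds 0 one_pos)).and <|
    (ha.continuous.continuousAt.eventually_ne ha0).and <|
    ((contDiff_pdy hδ).continuous.continuousAt.eventually_ne hy).and hY
  refine ⟨Y, e, Ω, ⟨hopen, h0Ω, fun p hp => (hΩ p hp).1, he0,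
    Metric.isBounded_ball.subset (image_subset_iff.2 fun p hp => (hΩ p hp).2.2.1),
    fun p _ => he ▸ (contDiff_foldMap hδ1).contDiffAt, fun p hp => (hΩ p hp).2.1,
    fun p hp v hv => ?_⟩⟩
  obtain ⟨-, -, -, hap, hyp, hbranch⟩ := hΩ p hp
  have hsnd : (e p).2 = discr a b c p := by rw [he, foldMap]
  rw [he, fderiv_foldMap_apply (hδ1.differentiable one_ne_zero p), ← he,
    bde_eq_zero_iff hap hyp hε hv, ← hsnd]
  refine and_congr_right fun hne => ?_
  simp only [← div_eq_iff hne]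
  exact ⟨fun ⟨m, hm, heq⟩ => have hnn := hm ▸ sq_nonneg m; ⟨hnn, (hbranch hnn _).2 ⟨m, hm, heq⟩⟩,
    fun ⟨hnn, hτ⟩ => (hbranch hnn _).1 hτ⟩

end Reduction

/-! ### Asymptotic directions along the discriminant -/

section

variable {a b c : ℝ × ℝ → ℝ}

lemma pdx_discr (ha : Differentiable ℝ a) (hb : Differentiable ℝ b) (hc : Differentiable ℝ c)
    (p : ℝ × ℝ) :
    pdx (discr a b c) p = 2 * b p * pdx b p - (pdx a p * c p + a p * pdx c p) := by
  have hslice : ∀ F : ℝ × ℝ → ℝ, Differentiable ℝ F →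
      HasDerivAt (fun s => F (s, p.2)) (pdx F p) p.1 := fun F hF =>
    (by fun_prop : DifferentiableAt ℝ (fun s => F (s, p.2)) p.1).hasDerivAt
  refine (((hslice b hb).pow 2).sub ((hslice a ha).mul (hslice c hc))).deriv.trans ?_
  simp

lemma pdy_discr (ha : Differentiable ℝ a) (hb : Differentiable ℝ b) (hc : Differentiable ℝ c)
    (p : ℝ × ℝ) :
    pdy (discr a b c) p = 2 * b p * pdy b p - (pdy a p * c p + a p * pdy c p) := by
  have hslice : ∀ F : ℝ × ℝ → ℝ, Differentiable ℝ F →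
      HasDerivAt (fun s => F (p.1, s)) (pdy F p) p.2 := fun F hF =>
    (by fun_prop : DifferentiableAt ℝ (fun s => F (p.1, s)) p.2).hasDerivAt
  refine (((hslice b hb).pow 2).sub ((hslice a ha).mul (hslice c hc))).deriv.trans ?_
  simp

end

lemma exists_isReduction_foldedSaddleNode :
    ∃ Y e Ω, IsReduction (BDE (fun _ => 1) (fun _ => 0) fun p => -p.2 + p.1 ^ 3) Y e Ω := by
  have hx : ∀ p : ℝ × ℝ, pdx (discr (fun _ => 1) (fun _ => 0) fun p => -p.2 + p.1 ^ 3) p =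
      -(3 * p.1 ^ 2) := fun p => by simp [pdx, discr]
  have hy : ∀ p : ℝ × ℝ, pdy (discr (fun _ => 1) (fun _ => 0) fun p => -p.2 + p.1 ^ 3) p = 1 :=
    fun p => by simp [pdy, discr]
  refine exists_isReduction_bde (ε := 1) (k1 := 3) (by fun_prop) (by fun_prop) (by fun_prop)
    one_ne_zero (by simp [discr]) (by simp [hy]) (one_mul 1) (by simp [foldSlope, hx])
    (Eventually.of_forall fun p _ => ?_)
  simp only [foldSlope, hx, zero_div, mul_zero, sub_zero, one_mul, neg_neg, le_refl, and_true]
  intro hp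
  linarith [pow_pos (sq_pos_of_ne_zero hp) 1]

namespace HasJetAt0

variable {F P Q : ℝ × ℝ → ℝ} {n : ℕ}

lemma eq_at_zero (h : HasJetAt0 F P n) (hn : n ≠ 0) : F 0 = P 0 := by
  have hbound := (h.bound one_pos).self_of_nhds
  simpa [hn, sub_eq_zero] using hbound

lemma congr_right (h : HasJetAt0 F P n) (hPQ : ∀ p, P p = Q p) : HasJetAt0 F Q n :=
  funext hPQ ▸ h

lemma isLittleO_fst_pow {l : Filter (ℝ × ℝ)} (h : HasJetAt0 F P n) (hl : l ≤ nhds 0)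
    (hnorm : (fun p : ℝ × ℝ => ‖p‖) =O[l] Prod.fst) :
    (fun p => F p - P p) =o[l] fun p => p.1 ^ n :=
  (h.mono hl).trans_isBigO (hnorm.pow n)

end HasJetAt0

lemma isLittleO_fst_sq : (fun p : ℝ × ℝ => p.1 ^ 2) =o[nhds 0] Prod.fst := by
  simpa [Function.comp_def] using
    (isLittleO_pow_id one_lt_two).comp_tendsto (continuous_fst.tendsto (0 : ℝ × ℝ))

/-- The coefficients `a`, `b`, `c` have the jets of those of the asymptotic BDE of
`y² + x²y + x⁴/4 + αx⁵ + yφ₄(x, y)`, to the order which determines a folded saddle-node. -/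
structure IsSaddleNodeBDE (a b c : ℝ × ℝ → ℝ) (α : ℝ) : Prop where
  contDiff_a : ContDiff ℝ 2 a
  contDiff_b : ContDiff ℝ 2 b
  contDiff_c : ContDiff ℝ 2 c
  jet_a : HasJetAt0 a (fun _ => 2) 2
  jet_b : HasJetAt0 b (fun p => 2 * p.1) 2
  jet_c : HasJetAt0 c (fun p => 2 * p.2 + 3 * p.1 ^ 2) 2
  jet_pdx_c : ∃ β γ, HasJetAt0 (pdx c)
    (fun p => 6 * p.1 + 60 * α * p.1 ^ 2 + p.2 * (β * p.1 + γ * p.2)) 2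

namespace IsSaddleNodeBDE

variable {a b c : ℝ × ℝ → ℝ} {α ε : ℝ}

lemma jet_pdx_a (h : IsSaddleNodeBDE a b c α) : HasJetAt0 (pdx a) (fun _ => 0) 1 :=
  (hasJetAt0_pdx (n := 1) (by exact_mod_cast h.contDiff_a) (by fun_prop) h.jet_a).congr_right
    fun p => by simp [pdx]

lemma jet_pdy_a (h : IsSaddleNodeBDE a b c α) : HasJetAt0 (pdy a) (fun _ => 0) 1 :=
  (hasJetAt0_pdy (n := 1) (by exact_mod_cast h.contDiff_a) (by fun_prop) h.jet_a).congr_right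
    fun p => by simp [pdy]

lemma jet_pdx_b (h : IsSaddleNodeBDE a b c α) : HasJetAt0 (pdx b) (fun _ => 2) 1 :=
  (hasJetAt0_pdx (n := 1) (by exact_mod_cast h.contDiff_b) (by fun_prop) h.jet_b).congr_right
    fun p => by simp [pdx]

lemma jet_pdy_b (h : IsSaddleNodeBDE a b c α) : HasJetAt0 (pdy b) (fun _ => 0) 1 :=
  (hasJetAt0_pdy (n := 1) (by exact_mod_cast h.contDiff_b) (by fun_prop) h.jet_b).congr_right
    fun p => by simp [pdy]

lemma jet_pdy_c (h : IsSaddleNodeBDE a b c α) : HasJetAt0 (pdy c) (fun _ => 2) 1 :=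
  (hasJetAt0_pdy (n := 1) (by exact_mod_cast h.contDiff_c) (by fun_prop) h.jet_c).congr_right
    fun p => by simp [pdy]

lemma a_zero (h : IsSaddleNodeBDE a b c α) : a 0 = 2 := h.jet_a.eq_at_zero two_ne_zero

lemma b_zero (h : IsSaddleNodeBDE a b c α) : b 0 = 0 := by
  simpa using h.jet_b.eq_at_zero two_ne_zero

lemma c_zero (h : IsSaddleNodeBDE a b c α) : c 0 = 0 := by
  simpa using h.jet_c.eq_at_zero two_ne_zero

lemma pdx_discr_eq (h : IsSaddleNodeBDE a b c α) (p : ℝ × ℝ) :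
    pdx (discr a b c) p = 2 * b p * pdx b p - (pdx a p * c p + a p * pdx c p) :=
  pdx_discr (h.contDiff_a.differentiable two_ne_zero) (h.contDiff_b.differentiable two_ne_zero)
    (h.contDiff_c.differentiable two_ne_zero) p

lemma pdy_discr_eq (h : IsSaddleNodeBDE a b c α) (p : ℝ × ℝ) :
    pdy (discr a b c) p = 2 * b p * pdy b p - (pdy a p * c p + a p * pdy c p) :=
  pdy_discr (h.contDiff_a.differentiable two_ne_zero) (h.contDiff_b.differentiable two_ne_zero)
    (h.contDiff_c.differentiable two_ne_zero) p

lemma pdy_discr_zero_ne_zero (h : IsSaddleNodeBDE a b c α) : pdy (discr a b c) 0 ≠ 0 := by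
  rw [h.pdy_discr_eq, h.a_zero, h.b_zero, h.c_zero, h.jet_pdy_c.eq_at_zero one_ne_zero]
  norm_num

lemma foldSlope_zero (h : IsSaddleNodeBDE a b c α) : foldSlope ε a b c 0 = 0 := by
  obtain ⟨β, γ, hcx⟩ := h.jet_pdx_c
  have hcx0 : pdx c 0 = 0 := by simpa using hcx.eq_at_zero two_ne_zero
  rw [foldSlope, h.pdx_discr_eq, h.b_zero, h.c_zero, hcx0]
  ring

lemma jet_discr (h : IsSaddleNodeBDE a b c α) :
    HasJetAt0 (discr a b c) (fun p => -(4 * p.2 + 2 * p.1 ^ 2)) 2 := by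
  have hb : (fun p => b p + 2 * p.1) =O[nhds 0] fun _ => (1 : ℝ) :=
    (h.contDiff_b.continuous.add (by fun_prop)).continuousAt.isBigO_one ℝ
  have hc : c =O[nhds 0] fun _ => (1 : ℝ) := h.contDiff_c.continuous.continuousAt.isBigO_one ℝ
  have hsum := ((h.jet_b.mul_isBigO hb).sub (h.jet_a.mul_isBigO hc)).sub
    (by simpa using h.jet_c.const_mul_left 2)
  refine hsum.congr (fun p => ?_) fun p => mul_one _
  rw [discr]
  ring

lemma isBigO_snd (h : IsSaddleNodeBDE a b c α) :
    (Prod.snd : ℝ × ℝ → ℝ) =O[nhdsWithin 0 {p | discr a b c p = 0}] fun p => p.1 ^ 2 := by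
  refine IsBigO.of_bound 1 (eventually_nhdsWithin_iff.2 ?_)
  filter_upwards [h.jet_discr.bound one_pos, Metric.ball_mem_nhds 0 one_pos]
    with p hp hball (hδ : discr a b c p = 0)
  have hsnd : |p.2| ≤ 1 := (norm_snd_le p).trans (mem_ball_zero_iff.1 hball).le
  have hnorm : ‖p‖ ^ 2 ≤ p.1 ^ 2 + |p.2| := by
    rcases max_cases ‖p.1‖ ‖p.2‖ with ⟨hmax, -⟩ | ⟨hmax, -⟩ <;>
      rw [Prod.norm_def, hmax, Real.norm_eq_abs]
    · linarith [sq_abs p.1, abs_nonneg p.2]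
    · nlinarith [sq_nonneg p.1, abs_nonneg p.2]
  rw [hδ, zero_sub, neg_neg, one_mul, norm_pow, norm_norm, Real.norm_eq_abs] at hp
  have htriangle : 4 * |p.2| ≤ |4 * p.2 + 2 * p.1 ^ 2| + 2 * p.1 ^ 2 := by
    have := abs_sub (4 * p.2 + 2 * p.1 ^ 2) (2 * p.1 ^ 2)
    rwa [add_sub_cancel_right, abs_mul, abs_of_pos (four_pos : (0 : ℝ) < 4),
      abs_of_nonneg (by positivity : 0 ≤ 2 * p.1 ^ 2)] at this
  rw [one_mul, norm_pow, Real.norm_eq_abs, Real.norm_eq_abs, sq_abs]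
  linarith

lemma isBigO_norm (h : IsSaddleNodeBDE a b c α) :
    (fun p : ℝ × ℝ => ‖p‖) =O[nhdsWithin 0 {p | discr a b c p = 0}] Prod.fst :=
  ((isBigO_refl Prod.fst _).prod_left
    (h.isBigO_snd.trans (isLittleO_fst_sq.mono nhdsWithin_le_nhds).isBigO)).norm_left

lemma isBigO_b (h : IsSaddleNodeBDE a b c α) :
    b =O[nhdsWithin 0 {p | discr a b c p = 0}] Prod.fst := by
  have hrem := (h.jet_b.isLittleO_fst_pow nhdsWithin_le_nhds h.isBigO_norm).trans
    (isLittleO_fst_sq.mono nhdsWithin_le_nhds)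
  simpa using hrem.isBigO.add ((isBigO_refl Prod.fst _).const_mul_left 2)

lemma isBigO_c (h : IsSaddleNodeBDE a b c α) :
    c =O[nhdsWithin 0 {p | discr a b c p = 0}] fun p => p.1 ^ 2 := by
  have hrem := h.jet_c.isLittleO_fst_pow nhdsWithin_le_nhds h.isBigO_norm
  simpa using hrem.isBigO.add ((h.isBigO_snd.const_mul_left 2).add
    ((isBigO_refl (fun p : ℝ × ℝ => p.1 ^ 2) _).const_mul_left 3))

lemma isLittleO_pdx_c (h : IsSaddleNodeBDE a b c α) :
    (fun p => pdx c p - (6 * p.1 + 60 * α * p.1 ^ 2))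
      =o[nhdsWithin 0 {p | discr a b c p = 0}] fun p => p.1 ^ 2 := by
  obtain ⟨β, γ, hcx⟩ := h.jet_pdx_c
  have hlin : (fun p : ℝ × ℝ => β * p.1 + γ * p.2)
      =o[nhdsWithin 0 {p | discr a b c p = 0}] fun _ => (1 : ℝ) := by
    refine (isLittleO_one_iff ℝ).2 (tendsto_nhdsWithin_of_tendsto_nhds ?_)
    exact Continuous.tendsto' (by fun_prop) _ _ (by simp)
  have hmixed := h.isBigO_snd.mul_isLittleO hlin
  refine ((hcx.isLittleO_fst_pow nhdsWithin_le_nhds h.isBigO_norm).add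
    (by simpa using hmixed)).congr_left fun p => ?_
  ring

lemma isBigO_pdx_c (h : IsSaddleNodeBDE a b c α) :
    pdx c =O[nhdsWithin 0 {p | discr a b c p = 0}] Prod.fst := by
  have hsq := isLittleO_fst_sq.mono (nhdsWithin_le_nhds (s := {p | discr a b c p = 0}))
  simpa using (h.isLittleO_pdx_c.trans hsq).isBigO.add
    (((isBigO_refl Prod.fst _).const_mul_left 6).add (hsq.isBigO.const_mul_left (60 * α)))

lemma isBigO_inv_a (h : IsSaddleNodeBDE a b c α) :
    (fun p => (a p)⁻¹) =O[nhdsWithin 0 {p | discr a b c p = 0}] fun _ => (1 : ℝ) := by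
  have ha0 : a 0 ≠ 0 := by rw [h.a_zero]; exact two_ne_zero
  exact ((h.contDiff_a.continuous.continuousAt.inv₀ ha0).isBigO_one ℝ).mono nhdsWithin_le_nhds

lemma eventually_a_ne_zero (h : IsSaddleNodeBDE a b c α) : ∀ᶠ p in nhds 0, a p ≠ 0 :=
  h.contDiff_a.continuous.continuousAt.eventually_ne (by rw [h.a_zero]; exact two_ne_zero)

lemma isLittleO_pdy_discr_div (h : IsSaddleNodeBDE a b c α) :
    (fun p => pdy (discr a b c) p / a p + 2)
      =o[nhdsWithin 0 {p | discr a b c p = 0}] Prod.fst := by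
  have hay := h.jet_pdy_a.isLittleO_fst_pow nhdsWithin_le_nhds h.isBigO_norm
  have hby := h.jet_pdy_b.isLittleO_fst_pow nhdsWithin_le_nhds h.isBigO_norm
  have hcy := h.jet_pdy_c.isLittleO_fst_pow nhdsWithin_le_nhds h.isBigO_norm
  have hb : (fun p => 2 * b p) =O[nhdsWithin 0 {p | discr a b c p = 0}] fun _ => (1 : ℝ) :=
    ((h.contDiff_b.continuous.continuousAt.isBigO_one ℝ).mono nhdsWithin_le_nhds).const_mul_left 2
  have hc : c =O[nhdsWithin 0 {p | discr a b c p = 0}] fun _ => (1 : ℝ) :=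
    (h.contDiff_c.continuous.continuousAt.isBigO_one ℝ).mono nhdsWithin_le_nhds
  have hnum := (hb.mul_isLittleO hby).sub (by simpa using hay.mul_isBigO hc)
  have hsum := (by simpa using hnum.mul_isBigO h.isBigO_inv_a : _ =o[_] _).sub hcy
  refine (hsum.congr' ?_ (Eventually.of_forall fun p => pow_one _))
  filter_upwards [nhdsWithin_le_nhds h.eventually_a_ne_zero] with p hp
  rw [h.pdy_discr_eq]
  field_simp
  ring

lemma isLittleO_slope (h : IsSaddleNodeBDE a b c α) :
    (fun p => pdx (discr a b c) p - pdy (discr a b c) p * (b p / a p) + 120 * α * p.1 ^ 2)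
      =o[nhdsWithin 0 {p | discr a b c p = 0}] fun p => p.1 ^ 2 := by
  have hsq := isLittleO_fst_sq.mono (nhdsWithin_le_nhds (s := {p | discr a b c p = 0}))
  have ha := (h.jet_a.isLittleO_fst_pow nhdsWithin_le_nhds h.isBigO_norm).trans hsq
  have hb := h.jet_b.isLittleO_fst_pow nhdsWithin_le_nhds h.isBigO_norm
  have hax := h.jet_pdx_a.isLittleO_fst_pow nhdsWithin_le_nhds h.isBigO_norm
  have hbx := h.jet_pdx_b.isLittleO_fst_pow nhdsWithin_le_nhds h.isBigO_norm
  simp only [pow_one, sub_zero] at hax hbx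
  have hproducts := (((h.isBigO_b.mul_isLittleO hbx).const_mul_left 2).sub
    (hax.mul_isBigO (h.isBigO_c.trans hsq.isBigO))).sub
    ((ha.mul_isBigO h.isBigO_pdx_c).add (h.isLittleO_pdy_discr_div.mul_isBigO h.isBigO_b))
  simp only [← sq] at hproducts
  refine ((hproducts.add (hb.const_mul_left 6)).sub
    (h.isLittleO_pdx_c.const_mul_left 2)).congr_left fun p => ?_
  rw [h.pdx_discr_eq]
  ring

lemma eventually_foldSlope (h : IsSaddleNodeBDE a b c α) (hpos : 0 < ε * α) :
    ∀ᶠ p in nhds 0, discr a b c p = 0 → (p.1 ≠ 0 → foldSlope ε a b c p < 0) ∧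
      -foldSlope ε a b c p ≤ 180 * (ε * α) * p.1 ^ 2 := by
  have hbound := (h.isLittleO_slope.const_mul_left ε).bound (show 0 < 60 * (ε * α) by positivity)
  filter_upwards [eventually_nhdsWithin_iff.1 hbound] with p hp hδ
  have hle := abs_le.1 (hp hδ)
  rw [norm_pow, Real.norm_eq_abs, sq_abs] at hle
  rw [foldSlope]
  refine ⟨fun hp => ?_, by linarith⟩
  nlinarith [mul_pos hpos (sq_pos_of_ne_zero hp)]

lemma exists_isReduction (h : IsSaddleNodeBDE a b c α) (hα : α ≠ 0) :
    ∃ Y e Ω, IsReduction (BDE a b c) Y e Ω := by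
  obtain ⟨ε, hε, hpos⟩ : ∃ ε : ℝ, ε * ε = 1 ∧ 0 < ε * α := by
    rcases hα.lt_or_gt with hneg | hpos
    · exact ⟨-1, by norm_num, by linarith⟩
    · exact ⟨1, by norm_num, by linarith⟩
  exact exists_isReduction_bde h.contDiff_a h.contDiff_b h.contDiff_c
    (by rw [h.a_zero]; exact two_ne_zero) (by simp [discr, h.b_zero, h.c_zero])
    h.pdy_discr_zero_ne_zero hε h.foldSlope_zero (h.eventually_foldSlope hpos)

end IsSaddleNodeBDE

/-! ### The asymptotic BDE of a Monge form with an `A₄`-singularity -/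

/-- The polynomial `y² + x²y + x⁴/4 + αx⁵ + yφ₄(x, y)`, where `d` lists the coefficients of `φ₄`. -/
def mongeA₄ (α : ℝ) (d : Fin 5 → ℝ) (p : ℝ × ℝ) : ℝ :=
  p.2 ^ 2 + p.1 ^ 2 * p.2 + (1 / 4) * p.1 ^ 4 + α * p.1 ^ 5 +
    p.2 * (d 0 * p.1 ^ 4 + d 1 * p.1 ^ 3 * p.2 + d 2 * p.1 ^ 2 * p.2 ^ 2 +
      d 3 * p.1 * p.2 ^ 3 + d 4 * p.2 ^ 4)

lemma isBigO_monomial (i j : ℕ) :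
    (fun p : ℝ × ℝ => p.1 ^ i * p.2 ^ j) =O[nhds 0] fun p => ‖p‖ ^ (i + j) := by
  have hx : (Prod.fst : ℝ × ℝ → ℝ) =O[nhds 0] fun p => ‖p‖ := IsBigO.of_norm_le norm_fst_le
  have hy : (Prod.snd : ℝ × ℝ → ℝ) =O[nhds 0] fun p => ‖p‖ := IsBigO.of_norm_le norm_snd_le
  simpa only [pow_add] using (hx.pow i).mul (hy.pow j)

section

variable {f : ℝ × ℝ → ℝ} {α : ℝ} {d : Fin 5 → ℝ}

lemma hasJetAt0_four_of_mongeA₄ (h : HasJetAt0 f (mongeA₄ α d) 5) :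
    HasJetAt0 f (fun p => p.2 ^ 2 + p.1 ^ 2 * p.2 + (1 / 4) * p.1 ^ 4) 4 := by
  have hnorm : (fun p : ℝ × ℝ => ‖p‖ ^ 5) =o[nhds 0] fun p => ‖p‖ ^ 4 :=
    (isLittleO_pow_pow (𝕜 := ℝ) (by norm_num : 4 < 5)).comp_tendsto tendsto_norm_zero
  have hquintic := (((isBigO_monomial 5 0).const_mul_left α).add
    ((isBigO_monomial 4 1).const_mul_left (d 0))).add
    ((((isBigO_monomial 3 2).const_mul_left (d 1)).add
      ((isBigO_monomial 2 3).const_mul_left (d 2))).add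
    (((isBigO_monomial 1 4).const_mul_left (d 3)).add
      ((isBigO_monomial 0 5).const_mul_left (d 4))))
  refine ((IsLittleO.trans h hnorm).add (hquintic.trans_isLittleO hnorm)).congr_left fun p => ?_
  rw [mongeA₄]
  ring

lemma hasJetAt0_pdx_fxx_of_mongeA₄ (hf : ContDiff ℝ 5 f) (h : HasJetAt0 f (mongeA₄ α d) 5) :
    HasJetAt0 (pdx (fxx f)) (fun p => 6 * p.1 + 60 * α * p.1 ^ 2 +
      p.2 * (24 * d 0 * p.1 + 6 * d 1 * p.2)) 2 := by
  have hfx : ContDiff ℝ 4 (pdx f) := contDiff_pdx (n := 4) (by exact_mod_cast hf)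
  have hfxx : ContDiff ℝ 3 (fxx f) := contDiff_pdx (n := 3) (by exact_mod_cast hfx)
  have hjet_x : HasJetAt0 (pdx f) (fun p => 2 * p.1 * p.2 + p.1 ^ 3 + 5 * α * p.1 ^ 4 +
      p.2 * (4 * d 0 * p.1 ^ 3 + 3 * d 1 * p.1 ^ 2 * p.2 + 2 * d 2 * p.1 * p.2 ^ 2 +
        d 3 * p.2 ^ 3)) 4 :=
    (hasJetAt0_pdx (n := 4) (by exact_mod_cast hf) (by unfold mongeA₄; fun_prop) h).congr_right
      fun p => by simp (disch := fun_prop) [mongeA₄, pdx, deriv_fun_add, deriv_fun_mul]; ring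
  have hjet_xx : HasJetAt0 (fxx f) (fun p => 2 * p.2 + 3 * p.1 ^ 2 + 20 * α * p.1 ^ 3 +
      p.2 * (12 * d 0 * p.1 ^ 2 + 6 * d 1 * p.1 * p.2 + 2 * d 2 * p.2 ^ 2)) 3 :=
    (hasJetAt0_pdx (n := 3) (by exact_mod_cast hfx) (by fun_prop) hjet_x).congr_right
      fun p => by simp (disch := fun_prop) [pdx, deriv_fun_add, deriv_fun_mul]; ring
  exact (hasJetAt0_pdx (n := 2) (by exact_mod_cast hfxx) (by fun_prop) hjet_xx).congr_right
    fun p => by simp (disch := fun_prop) [pdx, deriv_fun_add, deriv_fun_mul]; ring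

lemma isSaddleNodeBDE_of_mongeA₄ (hf : ContDiff ℝ 5 f) (h : HasJetAt0 f (mongeA₄ α d) 5) :
    IsSaddleNodeBDE (fyy f) (fxy f) (fxx f) α := by
  have hfx : ContDiff ℝ 4 (pdx f) := contDiff_pdx (n := 4) (by exact_mod_cast hf)
  have hfy : ContDiff ℝ 4 (pdy f) := contDiff_pdy (n := 4) (by exact_mod_cast hf)
  have hfx3 : ContDiff ℝ (2 + 1) (pdx f) := hfx.of_le (by norm_num)
  have hfy3 : ContDiff ℝ (2 + 1) (pdy f) := hfy.of_le (by norm_num)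
  have hjet := hasJetAt0_four_of_mongeA₄ h
  have hjet_x : HasJetAt0 (pdx f) (fun p => 2 * p.1 * p.2 + p.1 ^ 3) 3 :=
    (hasJetAt0_pdx (n := 3) (hf.of_le (by norm_num)) (by fun_prop) hjet).congr_right
      fun p => by simp (disch := fun_prop) [pdx, deriv_fun_add, deriv_fun_mul]; ring
  have hjet_y : HasJetAt0 (pdy f) (fun p => 2 * p.2 + p.1 ^ 2) 3 :=
    (hasJetAt0_pdy (n := 3) (hf.of_le (by norm_num)) (by fun_prop) hjet).congr_right
      fun p => by simp (disch := fun_prop) [pdy, deriv_fun_add, deriv_fun_mul]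
  exact
    { contDiff_a := contDiff_pdy hfy3
      contDiff_b := contDiff_pdy hfx3
      contDiff_c := contDiff_pdx hfx3
      jet_a := (hasJetAt0_pdy hfy3 (by fun_prop) hjet_y).congr_right fun p => by simp [pdy]
      jet_b := (hasJetAt0_pdy hfx3 (by fun_prop) hjet_x).congr_right fun p => by simp [pdy]
      jet_c := (hasJetAt0_pdx hfx3 (by fun_prop) hjet_x).congr_right
        fun p => by simp (disch := fun_prop) [pdx, deriv_fun_add, deriv_fun_mul]
      jet_pdx_c := ⟨24 * d 0, 6 * d 1, hasJetAt0_pdx_fxx_of_mongeA₄ hf h⟩ }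

theorem stmt6_general (hα : α ≠ 0) (hf : ContDiff ℝ 5 f) (h : HasJetAt0 f (mongeA₄ α d) 5) :
    TopEquivAt0 (asymBDE f) (BDE (fun _ => 1) (fun _ => 0) fun p => -p.2 + p.1 ^ 3) := by
  obtain ⟨Y, e, Ω, hasym⟩ := (isSaddleNodeBDE_of_mongeA₄ hf h).exists_isReduction hα
  obtain ⟨Z, e₂, Ω₂, hmodel⟩ := exists_isReduction_foldedSaddleNode
  exact hasym.topEquivAt0 hmodel

end

/-- class `Π^p_{c,2}`: for smooth `f` with
`j⁵f(0) = y² + x²y + (1/4)x⁴ + αx⁵ + yφ₄(x,y)`, `α ≠ 0`, `φ₄` homogeneous of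
degree 4, the asymptotic BDE of `f` is topologically equivalent at `0` to the
well-folded saddle-node BDE `dy² + (−y + x³)dx² = 0`. -/
theorem stmt6 (α d0 d1 d2 d3 d4 : ℝ) (hα : α ≠ 0) (f : ℝ × ℝ → ℝ)
    (hf : ContDiff ℝ (⊤ : ℕ∞) f)
    (hjet : HasJetAt0 f
      (fun p => p.2 ^ 2 + p.1 ^ 2 * p.2 + (1 / 4) * p.1 ^ 4 + α * p.1 ^ 5 +
        p.2 * (d0 * p.1 ^ 4 + d1 * p.1 ^ 3 * p.2 + d2 * p.1 ^ 2 * p.2 ^ 2 +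
          d3 * p.1 * p.2 ^ 3 + d4 * p.2 ^ 4)) 5) :
    TopEquivAt0 (asymBDE f)
      (BDE (fun _ => 1) (fun _ => 0) (fun p => -p.2 + p.1 ^ 3)) :=
  stmt6_general (d := ![d0, d1, d2, d3, d4]) hα (mod_cast contDiff_infty.1 hf 5) hjet
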